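/- Let d ≥ 1, let α = (α_1,…,α_d) be a multi-index with α_j > −1/2 for each j, and let 1 ≤ λ < β. Let k be the smallest integer greater than λ and n the smallest integer greater than β, and set c_λ^k = ∫_0^∞ u^{−λ−1}(e^{−u}−1)^k du (finite). Define the Bessel Laguerre fractional derivative 𝒟_λ^α f(x) = (1/c_λ^k) ∫_0^∞ s^{−λ−1} Σ_{j=0}^k binom(k,j) (−1)^j e^{−(k−j)s} P_{(k−j)s}^α f(x) ds, with the convention P_0^α f = f. Then there exists C > 0, depending only on α, d, β, λ, such that for every bounded measurable f on (0,∞)^d satisfying sup_x |∂^n_t P_t^α f(x)| ≤ A t^{β−n} for all t > 0, one has: sup_x |𝒟_λ^α f(x)| ≤ C (∥f∥_∞ + A), and sup_x |∂^n_t P_t^α(𝒟_λ^α f)(x)| ≤ C (∥f∥_∞ + A) t^{β−λ−n} for all 0 < t < 1. In particular 𝒟_λ^α maps Lip_β(μ_α) boundedly into Lip_{β−λ}(μ_α). -/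

import Mathlib

open MeasureTheory Real Set

noncomputable def besselI (ν z : ℝ) : ℝ :=
  ∑' m : ℕ, (z / 2) ^ (2 * (m : ℝ) + ν) / (Nat.factorial m * Real.Gamma ((m : ℝ) + ν + 1))

/-- The positive orthant `(0,∞)^d`. -/
def posOrthant (d : ℕ) : Set (Fin d → ℝ) := Set.univ.pi fun _ => Set.Ioi 0

/-- The Poisson–Laguerre kernel `p_t^α(x,y)`. -/
noncomputable def plKernel (d : ℕ) (α : Fin d → ℝ) (t : ℝ) (x y : Fin d → ℝ) : ℝ :=
  (1 / (2 * Real.sqrt π)) *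
    ∫ r in Set.Ioo (0 : ℝ) 1,
      (t * Real.exp (t ^ 2 / (4 * Real.log r)) /
          ((1 - r) ^ d * (-Real.log r) ^ ((3 : ℝ) / 2))) *
        (∏ j, (y j / x j) ^ (α j / 2) *
            Real.exp (-((r * x j + y j) / (1 - r)) - α j * Real.log r / 2) *
            besselI (α j) (2 * Real.sqrt (r * x j * y j) / (1 - r))) / r

/-- The Poisson–Laguerre semigroup `P_t^α f`, with the convention `P_0^α f = f`. -/
noncomputable def plP (d : ℕ) (α : Fin d → ℝ) (t : ℝ)
    (f : (Fin d → ℝ) → ℝ) (x : Fin d → ℝ) : ℝ :=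
  if t = 0 then f x else ∫ y in posOrthant d, plKernel d α t x y * f y

/-- The Bessel Laguerre fractional derivative `𝒟_λ^α f` of order `λ`, defined via the
`k`-fold difference `(e^{-s}P_s^α - I)^k`. -/
noncomputable def besselLaguerreFracDerivK (d : ℕ) (α : Fin d → ℝ) (lam : ℝ) (k : ℕ)
    (f : (Fin d → ℝ) → ℝ) (x : Fin d → ℝ) : ℝ :=
  (1 / ∫ u in Set.Ioi (0 : ℝ), u ^ (-lam - 1) * (Real.exp (-u) - 1) ^ k) *
    ∫ s in Set.Ioi (0 : ℝ), s ^ (-lam - 1) *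
      ∑ j ∈ Finset.range (k + 1),
        (k.choose j : ℝ) * (-1) ^ j * Real.exp (-(((k - j : ℕ) : ℝ) * s)) *
          plP d α (((k - j : ℕ) : ℝ) * s) f x

/-! Averaging the Laguerre heat semigroup against the density `η_t` of the one-sided `1/2`-stable
subordinator gives `P_t^α`. Since `‖∂_t^i η_t‖₁ ≤ C t^{-i}`, each orbit `u(t) = P_t^α f(x)` of a
function bounded by `M` is smooth with `|u^{(i)}(t)| ≤ C M t^{-i}`, and integrating the Lipschitz
hypothesis down from `n` derivatives gives `|u^{(k)}(t)| ≤ C (M + A) t^{γ-k}` near `0` for every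
`γ ≤ β` with `k - 1 < γ < k`. Hence `u` has a limit `L(x)` at `0`, and `(e^{-s}P_s^α - I)^k f(x)`,
with `f(x)` replaced by `L(x)`, is `O((M + A) s^γ)`. Taking `λ < γ` makes the integral defining
`𝒟_λ^α f(x)` converge when `f(x) = L(x)`, and forces it to diverge otherwise, in which case its
value is `0` by convention.

The heat semigroup maps exponentials `e^{-p·x}` to multiples of exponentials and is symmetric with
respect to `μ_α`, so the Laplace transforms of `f dμ_α` and `L dμ_α` agree and `f = L` almost
everywhere. Therefore `∂_t^n P_t^α` commutes with the integral defining `𝒟_λ^α f`, and by the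
semigroup property `∂_t^n P_t^α (e^{-s}P_s^α - I)^k f(x)` is the `k`-fold difference of the orbit
`r ↦ ∂_t^n P_{t+r}^α f(x)`. For `t ≤ 1` it is `O(A t^{β-n} min(1, (s/t)^k))`, whose integral
against `s^{-λ-1}` is `O(A t^{β-λ-n})`. For `t ≥ 1` the bound on `𝒟_λ^α f` itself suffices. -/

section

open Filter Topology
open scoped ContDiff

section SmoothOrbits

/-- Smoothness on the open half-line `(0,∞)`, the regularity of the orbits `t ↦ P_t f(x)`. Nothing
is required at `0`, where the convention `P_0 f = f` may break continuity. -/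
def SmoothOnPos (u : ℝ → ℝ) : Prop := ∀ t, 0 < t → ContDiffAt ℝ ∞ u t

lemma iteratedDeriv_iteratedDeriv (i n : ℕ) (u : ℝ → ℝ) :
    iteratedDeriv i (iteratedDeriv n u) = iteratedDeriv (n + i) u := by
  simp only [iteratedDeriv_eq_iterate, add_comm n, Function.iterate_add_apply]

namespace SmoothOnPos

variable {u : ℝ → ℝ} (hu : SmoothOnPos u)
include hu

lemma contDiffAt (n : ℕ) {t : ℝ} (ht : 0 < t) : ContDiffAt ℝ n u t :=
  (hu t ht).of_le (by exact_mod_cast le_top)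

lemma differentiableAt {t : ℝ} (ht : 0 < t) : DifferentiableAt ℝ u t :=
  (hu t ht).differentiableAt (by simp)

lemma deriv : SmoothOnPos (deriv u) := fun t ht => (hu t ht).derivWithin (by simp)

lemma iteratedDeriv (i : ℕ) : SmoothOnPos (iteratedDeriv i u) := by
  induction i with
  | zero => simpa using hu
  | succ i ih => rw [iteratedDeriv_succ]; exact ih.deriv

lemma comp_add_const {s : ℝ} (hs : 0 ≤ s) : SmoothOnPos fun r => u (r + s) := fun t ht =>
  (hu (t + s) (by positivity)).comp t (contDiffAt_id.add contDiffAt_const)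

lemma fwdDiff {s : ℝ} (hs : 0 ≤ s) : SmoothOnPos (fwdDiff s u) := fun t ht =>
  (hu.comp_add_const hs t ht).sub (hu t ht)

lemma exp_neg_mul : SmoothOnPos fun r => exp (-r) * u r := fun t ht =>
  (Real.contDiff_exp.comp contDiff_neg).contDiffAt.mul (hu t ht)

lemma iteratedDeriv_fwdDiff {s : ℝ} (hs : 0 ≤ s) (i : ℕ) {t : ℝ} (ht : 0 < t) :
    _root_.iteratedDeriv i (_root_.fwdDiff s u) t =
      _root_.iteratedDeriv i u (t + s) - _root_.iteratedDeriv i u t := by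
  have hsub : _root_.fwdDiff s u = (fun r => u (r + s)) - u := rfl
  rw [hsub, iteratedDeriv_sub ((hu.comp_add_const hs).contDiffAt i ht) (hu.contDiffAt i ht),
    iteratedDeriv_comp_add_const]

lemma abs_iteratedDeriv_exp_neg_mul_le (k : ℕ) {t : ℝ} (ht : 0 < t) :
    |_root_.iteratedDeriv k (fun r => exp (-r) * u r) t| ≤
      ∑ i ∈ Finset.range (k + 1), k.choose i * (exp (-t) * |_root_.iteratedDeriv (k - i) u t|) := by
  have hexp (i : ℕ) : _root_.iteratedDeriv i (fun r : ℝ => exp (-r)) t = (-1) ^ i * exp (-t) := by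
    simpa using congrFun (iteratedDeriv_exp_const_mul i (-1)) t
  have hcont : ContDiffAt ℝ k (fun r : ℝ => exp (-r)) t :=
    (Real.contDiff_exp.comp contDiff_neg).contDiffAt
  rw [iteratedDeriv_fun_mul hcont (hu.contDiffAt k ht)]
  refine (Finset.abs_sum_le_sum_abs _ _).trans_eq (Finset.sum_congr rfl fun i _ => ?_)
  rw [hexp, abs_mul, abs_mul, abs_mul, abs_pow, abs_neg, abs_one, one_pow, one_mul, Nat.abs_cast,
    abs_of_pos (exp_pos _), mul_assoc]

lemma abs_sub_le_integral {B : ℝ → ℝ} {a b : ℝ} (ha : 0 < a) (hab : a ≤ b)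
    (hB : ∀ r ∈ Ioo a b, |_root_.deriv u r| ≤ B r) (hBi : IntervalIntegrable B volume a b) :
    |u b - u a| ≤ ∫ r in a..b, B r :=
  norm_sub_le_integral_of_norm_deriv_le_of_le hab
    (fun _ hr => (hu.differentiableAt (ha.trans_le hr.1)).continuousAt.continuousWithinAt)
    (fun _ hr => (hu.differentiableAt (ha.trans hr.1)).differentiableWithinAt)
    (ae_of_all _ hB) hBi

lemma abs_sub_le_const_mul {a b B : ℝ} (ha : 0 < a) (hab : a ≤ b)
    (hB : ∀ r ∈ Ioo a b, |_root_.deriv u r| ≤ B) : |u b - u a| ≤ B * (b - a) := by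
  simpa [mul_comm] using hu.abs_sub_le_integral ha hab hB intervalIntegrable_const

lemma abs_sub_le_rpow {a b B θ : ℝ} (ha : 0 < a) (hab : a ≤ b) (hθ : θ ≠ -1)
    (hB : ∀ r ∈ Ioo a b, |_root_.deriv u r| ≤ B * r ^ θ) :
    |u b - u a| ≤ B * ((b ^ (θ + 1) - a ^ (θ + 1)) / (θ + 1)) := by
  have h0 : (0 : ℝ) ∉ uIcc a b := notMem_uIcc_of_lt ha (ha.trans_le hab)
  refine (hu.abs_sub_le_integral ha hab hB
    ((intervalIntegral.intervalIntegrable_rpow (Or.inr h0)).const_mul B)).trans_eq ?_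
  rw [intervalIntegral.integral_const_mul, integral_rpow (Or.inr ⟨hθ, h0⟩)]

lemma abs_le_rpow_of_tendsto_zero {B θ : ℝ} (hθ : θ < 0) (hlim : Tendsto u atTop (𝓝 0))
    (hB : ∀ r, 0 < r → |_root_.deriv u r| ≤ B * r ^ (θ - 1)) {t : ℝ} (ht : 0 < t) :
    |u t| ≤ B / -θ * t ^ θ := by
  have hB0 : 0 ≤ B := by simpa using (abs_nonneg _).trans (hB 1 one_pos)
  have hdist : Tendsto (fun T => |u T - u t|) atTop (𝓝 |0 - u t|) :=
    (hlim.sub_const _).abs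
  rw [zero_sub, abs_neg] at hdist
  refine le_of_tendsto hdist ((eventually_ge_atTop t).mono fun T hT => ?_)
  refine (hu.abs_sub_le_rpow ht hT (by linarith) fun r hr => hB r (ht.trans hr.1)).trans ?_
  have hθ' : 0 < -θ := neg_pos.2 hθ
  have hT0 : 0 ≤ T ^ θ := rpow_nonneg (ht.le.trans hT) θ
  rw [sub_add_cancel, ← neg_div_neg_eq, neg_sub, ← mul_div_assoc, div_mul_eq_mul_div]
  gcongr
  linarith

lemma abs_le_of_abs_deriv_le_rpow {B θ : ℝ} (hθ : -1 < θ)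
    (hB : ∀ r, 0 < r → r ≤ 1 → |_root_.deriv u r| ≤ B * r ^ θ) {t : ℝ} (ht : 0 < t) (ht1 : t ≤ 1) :
    |u t| ≤ |u 1| + B / (θ + 1) := by
  have hB0 : 0 ≤ B := by simpa using (abs_nonneg _).trans (hB 1 one_pos le_rfl)
  have hθ1 : 0 < θ + 1 := by linarith
  have hsub := hu.abs_sub_le_rpow ht ht1 hθ.ne' fun r hr => hB r (ht.trans hr.1) hr.2.le
  have hle : B * ((1 ^ (θ + 1) - t ^ (θ + 1)) / (θ + 1)) ≤ B / (θ + 1) := by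
    rw [one_rpow, ← mul_div_assoc]
    gcongr
    exact mul_le_of_le_one_right hB0 (sub_le_self _ (by positivity))
  linarith [abs_sub_abs_le_abs_sub (u t) (u 1), abs_sub_comm (u t) (u 1)]

lemma exists_tendsto_zero {θ B : ℝ} (hθ : -1 < θ)
    (hB : ∀ t, 0 < t → t ≤ 1 → |_root_.deriv u t| ≤ B * t ^ θ) :
    ∃ L, Tendsto u (𝓝[>] 0) (𝓝 L) := by
  have hint : IntegrableOn (_root_.deriv u) (uIcc 0 1) := by
    rw [uIcc_of_le zero_le_one, integrableOn_Icc_iff_integrableOn_Ioc]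
    refine (((intervalIntegrable_iff_integrableOn_Ioc_of_le zero_le_one).1
      (intervalIntegral.intervalIntegrable_rpow' hθ)).const_mul B).mono'
        (measurable_deriv u).aestronglyMeasurable ?_
    filter_upwards [ae_restrict_mem measurableSet_Ioc] with r hr using hB r hr.1 hr.2
  have hcont : ContinuousOn (fun t => u 1 - ∫ r in t..1, _root_.deriv u r) (Icc 0 1) := by
    rw [← uIcc_of_le (zero_le_one' ℝ)]
    exact continuousOn_const.sub (intervalIntegral.continuousOn_primitive_interval_left hint)
  refine ⟨_, ((hcont 0 (left_mem_Icc.2 zero_le_one)).tendsto.mono_left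
    (nhdsWithin_le_of_mem (mem_of_superset (Ioc_mem_nhdsGT one_pos)
      Ioc_subset_Icc_self))).congr' ?_⟩
  filter_upwards [Ioc_mem_nhdsGT one_pos] with t ht
  have hsub : uIcc t 1 ⊆ uIcc (0 : ℝ) 1 := by
    rw [uIcc_of_le ht.2, uIcc_of_le zero_le_one]; exact Icc_subset_Icc_left ht.1.le
  rw [intervalIntegral.integral_deriv_eq_sub (fun r hr => hu.differentiableAt ?_)
    (hint.mono_set hsub).intervalIntegrable, sub_sub_cancel]
  rw [uIcc_of_le ht.2] at hr
  exact ht.1.trans_le hr.1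

lemma abs_fwdDiff_iter_le {k : ℕ} {s t B : ℝ} (hs : 0 ≤ s) (ht : 0 < t)
    (hB : ∀ r, t ≤ r → |_root_.iteratedDeriv k u r| ≤ B) :
    |(_root_.fwdDiff s)^[k] u t| ≤ B * s ^ k := by
  induction k generalizing u B with
  | zero => simpa using hB t le_rfl
  | succ k ih =>
    rw [Function.iterate_succ_apply, pow_succ', ← mul_assoc]
    refine ih (hu.fwdDiff hs) fun r hr => ?_
    have hr0 : 0 < r := ht.trans_le hr
    rw [hu.iteratedDeriv_fwdDiff hs k hr0]
    simpa using (hu.iteratedDeriv k).abs_sub_le_const_mul hr0 (le_add_of_nonneg_right hs)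
      fun x hx => by rw [← iteratedDeriv_succ]; exact hB x (hr.trans hx.1.le)

lemma abs_fwdDiff_iter_succ_le_rpow {k : ℕ} {s t θ B : ℝ} (hs : 0 < s) (ht : 0 < t)
    (hθ : -1 < θ) (hθ0 : θ ≤ 0)
    (hB : ∀ r, 0 < r → |_root_.iteratedDeriv (k + 1) u r| ≤ B * r ^ θ) :
    |(_root_.fwdDiff s)^[k + 1] u t| ≤ B / (θ + 1) * s ^ (k + 1 + θ) := by
  have hB0 : 0 ≤ B := by simpa using (abs_nonneg _).trans (hB 1 one_pos)
  have hθ1 : 0 < θ + 1 := by linarith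
  have hexp : B / (θ + 1) * s ^ (k + 1 + θ) = B / (θ + 1) * s ^ (θ + 1) * s ^ k := by
    rw [mul_assoc, ← rpow_natCast, ← rpow_add hs]
    ring_nf
  rw [Function.iterate_succ_apply, hexp]
  refine (hu.fwdDiff hs.le).abs_fwdDiff_iter_le hs.le ht fun r hr => ?_
  have hr0 : 0 < r := ht.trans_le hr
  rw [hu.iteratedDeriv_fwdDiff hs.le k hr0]
  refine ((hu.iteratedDeriv k).abs_sub_le_rpow hr0 (le_add_of_nonneg_right hs.le) hθ.ne'
    fun x hx => by rw [← iteratedDeriv_succ]; exact hB x (hr0.trans hx.1)).trans ?_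
  rw [← mul_div_assoc, div_mul_eq_mul_div]
  gcongr
  linarith [rpow_add_le_add_rpow hr0.le hs.le hθ1.le (by linarith)]

end SmoothOnPos

end SmoothOrbits

section OrbitDifferences

lemma fwdDiff_iter_eq_sum_range_reflect (v : ℝ → ℝ) (k : ℕ) (s t : ℝ) :
    (fwdDiff s)^[k] v t = ∑ j ∈ Finset.range (k + 1),
      (k.choose j : ℝ) * (-1) ^ j * v (t + ((k - j : ℕ) : ℝ) * s) := by
  rw [fwdDiff_iter_eq_sum_shift, ← Finset.sum_range_reflect]
  refine Finset.sum_congr rfl fun j hj => ?_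
  have hjk : j ≤ k := Nat.lt_succ_iff.1 (Finset.mem_range.1 hj)
  rw [Nat.add_sub_cancel, Nat.choose_symm hjk, Nat.sub_sub_self hjk]
  simp only [nsmul_eq_mul, zsmul_eq_mul]
  push_cast
  ring

/-- The `k`-fold difference `(e^{-s}P_s - I)^k f(x)`, written in terms of the orbit
`u t = P_t f(x)`; it is the integrand of the Bessel fractional derivative. -/
noncomputable def orbitDiff (k : ℕ) (u : ℝ → ℝ) (s : ℝ) : ℝ :=
  ∑ j ∈ Finset.range (k + 1),
    (k.choose j : ℝ) * (-1) ^ j * exp (-(((k - j : ℕ) : ℝ) * s)) * u (((k - j : ℕ) : ℝ) * s)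

variable {k : ℕ} {u : ℝ → ℝ}

lemma orbitDiff_comp_const_add (s t : ℝ) :
    orbitDiff k (fun r => u (t + r)) s =
      exp t * (fwdDiff s)^[k] (fun r => exp (-r) * u r) t := by
  rw [fwdDiff_iter_eq_sum_range_reflect, orbitDiff, Finset.mul_sum]
  refine Finset.sum_congr rfl fun j _ => ?_
  have hexp : exp (-(((k - j : ℕ) : ℝ) * s)) = exp t * exp (-(t + ((k - j : ℕ) : ℝ) * s)) := by
    rw [← exp_add]; ring_nf
  rw [hexp]; ring

lemma orbitDiff_congr {v : ℝ → ℝ} (h : ∀ t, 0 ≤ t → u t = v t) {s : ℝ} (hs : 0 ≤ s) :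
    orbitDiff k u s = orbitDiff k v s :=
  Finset.sum_congr rfl fun j _ => by rw [h _ (by positivity)]

lemma orbitDiff_update_zero (L : ℝ) {s : ℝ} (hs : s ≠ 0) :
    orbitDiff k (Function.update u 0 L) s = orbitDiff k u s + (-1) ^ k * (L - u 0) := by
  rw [orbitDiff, orbitDiff, Finset.sum_range_succ, Finset.sum_range_succ, add_assoc]
  congr 1
  · refine Finset.sum_congr rfl fun j hj => ?_
    have hjk : ((k - j : ℕ) : ℝ) ≠ 0 :=
      Nat.cast_ne_zero.2 (Nat.sub_ne_zero_of_lt (Finset.mem_range.1 hj))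
    rw [Function.update_of_ne (mul_ne_zero hjk hs)]
  · simp
    ring

lemma abs_orbitDiff_le {s B : ℝ} (hs : 0 ≤ s) (hB : ∀ t, 0 ≤ t → |u t| ≤ B) :
    |orbitDiff k u s| ≤ 2 ^ k * B := by
  calc |orbitDiff k u s| ≤ ∑ j ∈ Finset.range (k + 1), (k.choose j : ℝ) * B := by
        refine (Finset.abs_sum_le_sum_abs _ _).trans (Finset.sum_le_sum fun j _ => ?_)
        have hjs : 0 ≤ ((k - j : ℕ) : ℝ) * s := by positivity
        rw [mul_assoc, abs_mul, abs_mul, abs_mul, abs_pow, abs_neg, abs_one, one_pow, mul_one,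
          Nat.abs_cast, abs_of_pos (exp_pos _)]
        gcongr
        exact (mul_le_of_le_one_left (abs_nonneg _) (exp_le_one_iff.2 (neg_nonpos.2 hjs))).trans
          (hB _ hjs)
    _ = 2 ^ k * B := by
        rw [← Finset.sum_mul]
        exact_mod_cast congrArg (· * B) (congrArg (Nat.cast (R := ℝ)) (Nat.sum_range_choose k))

lemma SmoothOnPos.abs_orbitDiff_comp_const_add_le (hu : SmoothOnPos u) {s t B : ℝ} (hs : 0 ≤ s)
    (ht : 0 < t) (hB : ∀ i ≤ k, ∀ r, t ≤ r → |_root_.iteratedDeriv i u r| ≤ B) :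
    |orbitDiff k (fun r => u (t + r)) s| ≤ 2 ^ k * B * s ^ k := by
  have : 0 ≤ B := (abs_nonneg _).trans (hB 0 (Nat.zero_le k) t le_rfl)
  have hderiv : ∀ r, t ≤ r →
      |_root_.iteratedDeriv k (fun r => exp (-r) * u r) r| ≤ exp (-t) * (2 ^ k * B) := fun r hr =>
    calc _ ≤ ∑ i ∈ Finset.range (k + 1), (k.choose i : ℝ) * (exp (-t) * B) := by
          refine (hu.abs_iteratedDeriv_exp_neg_mul_le k (ht.trans_le hr)).trans
            (Finset.sum_le_sum fun i _ => ?_)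
          gcongr
          exact hB _ (Nat.sub_le k i) r hr
      _ = exp (-t) * (2 ^ k * B) := by
          rw [← Finset.sum_mul, ← Nat.cast_sum, Nat.sum_range_choose]
          push_cast
          ring
  rw [orbitDiff_comp_const_add, abs_mul, abs_of_pos (exp_pos _)]
  calc exp t * |(_root_.fwdDiff s)^[k] (fun r => exp (-r) * u r) t|
      ≤ exp t * (exp (-t) * (2 ^ k * B) * s ^ k) := by
        gcongr; exact hu.exp_neg_mul.abs_fwdDiff_iter_le hs ht hderiv
    _ = 2 ^ k * B * s ^ k := by rw [← mul_assoc, ← mul_assoc, ← exp_add]; simp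

lemma SmoothOnPos.tendsto_exp_mul_fwdDiff_iter (hu : SmoothOnPos u) {L s : ℝ} (hs : 0 < s)
    (hL : Tendsto u (𝓝[>] 0) (𝓝 L)) :
    Tendsto (fun t => (_root_.fwdDiff s)^[k] (fun r => exp (-r) * u r) t) (𝓝[>] 0)
      (𝓝 (orbitDiff k (Function.update u 0 L) s)) := by
  have hshift (c : ℝ) : Tendsto (· + c) (𝓝[>] (0 : ℝ)) (𝓝 c) := by
    simpa using ((continuous_add_const c).tendsto 0).mono_left nhdsWithin_le_nhds
  simp only [fwdDiff_iter_eq_sum_range_reflect, orbitDiff, mul_assoc]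
  refine tendsto_finsetSum _ fun j _ => .const_mul _ (.const_mul _ (.mul ?_ ?_))
  · exact (Real.continuous_exp.comp continuous_neg).continuousAt.tendsto.comp (hshift _)
  · rcases (k - j).eq_zero_or_pos with hj | hj
    · simpa [hj] using hL
    · have hpos : 0 < ((k - j : ℕ) : ℝ) * s := mul_pos (Nat.cast_pos.2 hj) hs
      rw [Function.update_of_ne hpos.ne']
      exact (hu.differentiableAt hpos).continuousAt.tendsto.comp (hshift _)

end OrbitDifferences

section LipschitzOrbits

/-- The real-variable properties shared, up to a common constant `K`, by all the orbits
`u t = P_t f(x)` of a bounded function `f` in the Lipschitz space of order `γ`: analyticity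
estimates and the Lipschitz condition on the derivative of order `n`. -/
structure LipschitzOrbit (γ : ℝ) (n : ℕ) (K : ℝ) (u : ℝ → ℝ) : Prop where
  smooth : SmoothOnPos u
  abs_iteratedDeriv_le : ∀ i ≤ n, ∀ t, 0 < t → |iteratedDeriv i u t| ≤ K * t ^ (-i : ℝ)
  abs_iteratedDeriv_top_le : ∀ t, 0 < t → |iteratedDeriv n u t| ≤ K * t ^ (γ - n)

namespace LipschitzOrbit

variable {γ K : ℝ} {n k : ℕ} {u : ℝ → ℝ}

lemma nonneg (h : LipschitzOrbit γ n K u) : 0 ≤ K := by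
  simpa using (abs_nonneg _).trans (h.abs_iteratedDeriv_top_le 1 one_pos)

lemma tendsto_iteratedDeriv_atTop (h : LipschitzOrbit γ n K u) {i : ℕ} (hi : 0 < i) (hin : i ≤ n) :
    Tendsto (iteratedDeriv i u) atTop (𝓝 0) := by
  have hlim : Tendsto (fun t : ℝ => K * t ^ (-i : ℝ)) atTop (𝓝 0) := by
    simpa using (tendsto_rpow_neg_atTop (Nat.cast_pos.2 hi : (0 : ℝ) < i)).const_mul K
  exact squeeze_zero_norm' ((eventually_gt_atTop 0).mono (h.abs_iteratedDeriv_le i hin)) hlim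

lemma exists_abs_iteratedDeriv_le_rpow (hγ : 0 ≤ γ) (hγk : γ < k) (hkn : k ≤ n) :
    ∃ C ≥ 0, ∀ K u, LipschitzOrbit γ n K u → ∀ t, 0 < t →
      |iteratedDeriv k u t| ≤ C * K * t ^ (γ - k) := by
  induction hkn using Nat.decreasingInduction with
  | self => exact ⟨1, zero_le_one, fun K u h t ht => by simpa using h.abs_iteratedDeriv_top_le t ht⟩
  | of_succ m hm ih =>
    obtain ⟨C, hC0, hC⟩ := ih (hγk.trans (by simp))
    have hneg : γ - m < 0 := sub_neg.2 hγk
    refine ⟨C / -(γ - m), div_nonneg hC0 (neg_nonneg.2 hneg.le), fun K u h t ht => ?_⟩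
    have hm0 : 0 < m := Nat.cast_pos.1 (hγ.trans_lt hγk)
    refine ((h.smooth.iteratedDeriv m).abs_le_rpow_of_tendsto_zero hneg
      (h.tendsto_iteratedDeriv_atTop hm0 hm.le) (B := C * K) (fun r hr => ?_) ht).trans_eq (by ring)
    simpa [← iteratedDeriv_succ, sub_sub] using hC K u h r hr

lemma exists_abs_iteratedDeriv_le_rpow_of_le_one (hγ : 0 ≤ γ) (hγk : γ < k) (hkγ : k - 1 < γ)
    (hkn : k ≤ n) {m : ℕ} (hm : m ≤ k) :
    ∃ C ≥ 0, ∀ K u, LipschitzOrbit γ n K u → ∀ t, 0 < t → t ≤ 1 →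
      |iteratedDeriv m u t| ≤ C * K * t ^ (γ - k) := by
  induction hm using Nat.decreasingInduction with
  | self =>
    obtain ⟨C, hC0, hC⟩ := exists_abs_iteratedDeriv_le_rpow hγ hγk hkn
    exact ⟨C, hC0, fun K u h t ht _ => hC K u h t ht⟩
  | of_succ m hm ih =>
    obtain ⟨C, hC0, hC⟩ := ih
    have hθ : 0 < γ - k + 1 := by linarith
    refine ⟨1 + C / (γ - k + 1), by positivity, fun K u h t ht ht1 => ?_⟩
    have hK := h.nonneg
    have hone : |iteratedDeriv m u 1| ≤ K := by
      simpa using h.abs_iteratedDeriv_le m (hm.le.trans hkn) 1 one_pos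
    calc |iteratedDeriv m u t| ≤ |iteratedDeriv m u 1| + C * K / (γ - k + 1) :=
          (h.smooth.iteratedDeriv m).abs_le_of_abs_deriv_le_rpow (by linarith)
            (fun r hr hr1 => by simpa [← iteratedDeriv_succ] using hC K u h r hr hr1) ht ht1
      _ ≤ (1 + C / (γ - k + 1)) * K * 1 := by linarith [mul_div_right_comm C K (γ - k + 1)]
      _ ≤ (1 + C / (γ - k + 1)) * K * t ^ (γ - k) := by
          gcongr
          exact one_le_rpow_of_pos_of_le_one_of_nonpos ht ht1 (by linarith)

lemma exists_exp_neg_mul_abs_iteratedDeriv_le (hγ : 0 ≤ γ) (hγk : γ < k) (hkγ : k - 1 < γ)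
    (hkn : k ≤ n) {m : ℕ} (hm : m ≤ k) :
    ∃ C ≥ 0, ∀ K u, LipschitzOrbit γ n K u → ∀ t, 0 < t →
      exp (-t) * |iteratedDeriv m u t| ≤ C * K * t ^ (γ - k) := by
  obtain ⟨C, hC0, hC⟩ := exists_abs_iteratedDeriv_le_rpow_of_le_one hγ hγk hkγ hkn hm
  refine ⟨C + 1, by positivity, fun K u h t ht => ?_⟩
  have hK := h.nonneg
  rcases le_total t 1 with ht1 | ht1
  · calc exp (-t) * |iteratedDeriv m u t| ≤ 1 * (C * K * t ^ (γ - k)) := by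
          gcongr
          exacts [exp_le_one_iff.2 (by linarith), hC K u h t ht ht1]
      _ ≤ (C + 1) * K * t ^ (γ - k) := by rw [one_mul]; gcongr; linarith
  · have hexp : exp (-t) ≤ t ^ (γ - k) := by
      calc exp (-t) ≤ t⁻¹ := by rw [exp_neg]; gcongr; linarith [add_one_le_exp t]
        _ = t ^ (-1 : ℝ) := (rpow_neg_one t).symm
        _ ≤ t ^ (γ - k) := rpow_le_rpow_of_exponent_le ht1 (by linarith)
    have hderiv : |iteratedDeriv m u t| ≤ K :=
      (h.abs_iteratedDeriv_le m (hm.trans hkn) t ht).trans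
        (mul_le_of_le_one_right hK (rpow_le_one_of_one_le_of_nonpos ht1 (by simp)))
    calc exp (-t) * |iteratedDeriv m u t| ≤ t ^ (γ - k) * K := by gcongr
      _ = 1 * K * t ^ (γ - k) := by ring
      _ ≤ (C + 1) * K * t ^ (γ - k) := by gcongr; linarith

lemma exists_abs_iteratedDeriv_exp_neg_mul_le (hγ : 0 ≤ γ) (hγk : γ < k) (hkγ : k - 1 < γ)
    (hkn : k ≤ n) :
    ∃ C ≥ 0, ∀ K u, LipschitzOrbit γ n K u → ∀ t, 0 < t →
      |iteratedDeriv k (fun r => exp (-r) * u r) t| ≤ C * K * t ^ (γ - k) := by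
  choose C hC0 hC using fun i =>
    exists_exp_neg_mul_abs_iteratedDeriv_le hγ hγk hkγ hkn (Nat.sub_le k i)
  refine ⟨∑ i ∈ Finset.range (k + 1), k.choose i * C i,
    Finset.sum_nonneg fun i _ => mul_nonneg (Nat.cast_nonneg _) (hC0 i), fun K u h t ht => ?_⟩
  refine (h.smooth.abs_iteratedDeriv_exp_neg_mul_le k ht).trans ?_
  simp only [Finset.sum_mul, mul_assoc]
  refine Finset.sum_le_sum fun i _ => mul_le_mul_of_nonneg_left ?_ (Nat.cast_nonneg _)
  simpa only [mul_assoc] using hC i K u h t ht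

/-- The limit `L` replaces `u 0` because the orbit of a function known only up to null sets need
not be continuous at `0`. -/
lemma exists_abs_orbitDiff_update_le (hγ : 0 < γ) (hγk : γ < k) (hkγ : k - 1 < γ) (hkn : k ≤ n) :
    ∃ C ≥ 0, ∀ K u, LipschitzOrbit γ n K u → ∃ L, Tendsto u (𝓝[>] 0) (𝓝 L) ∧
      ∀ s, 0 < s → |orbitDiff k (Function.update u 0 L) s| ≤ C * K * s ^ γ := by
  obtain ⟨k, rfl⟩ := Nat.exists_eq_add_one.2 (Nat.cast_pos.1 (hγ.trans hγk))
  obtain ⟨C₁, -, hC₁⟩ := exists_abs_iteratedDeriv_le_rpow_of_le_one hγ.le hγk hkγ hkn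
    (Nat.le_add_left 1 k)
  obtain ⟨C, hC0, hC⟩ := exists_abs_iteratedDeriv_exp_neg_mul_le hγ.le hγk hkγ hkn
  have hθ : -1 < γ - (k + 1 : ℕ) := by linarith
  refine ⟨C / (γ - (k + 1 : ℕ) + 1), div_nonneg hC0 (by linarith), fun K u h => ?_⟩
  obtain ⟨L, hL⟩ := h.smooth.exists_tendsto_zero hθ fun t ht ht1 => by
    simpa using hC₁ K u h t ht ht1
  refine ⟨L, hL, fun s hs => le_of_tendsto (h.smooth.tendsto_exp_mul_fwdDiff_iter hs hL).abs ?_⟩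
  filter_upwards [self_mem_nhdsWithin] with t ht
  refine (h.smooth.exp_neg_mul.abs_fwdDiff_iter_succ_le_rpow hs ht hθ (by linarith)
    (hC K u h)).trans_eq ?_
  push_cast
  ring_nf

end LipschitzOrbit

end LipschitzOrbits

section InverseGaussianKernels

/-- The kernels `t^a τ^{-b} e^{-t²/(4τ)}`, whose linear span is stable under differentiation in
`t`. The family contains the density of the one-sided `1/2`-stable subordinator. -/
noncomputable def invGaussKernel (a b t τ : ℝ) : ℝ := t ^ a * (τ ^ (-b) * exp (-(t ^ 2 / (4 * τ))))

/-- Integration of `h` against `invGaussKernel a b` in the variable `τ`. -/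
noncomputable def invGaussTransform (a b : ℝ) (h : ℝ → ℝ) (t : ℝ) : ℝ :=
  ∫ τ in Ioi 0, invGaussKernel a b t τ * h τ

variable {a b t τ : ℝ}

lemma invGaussKernel_nonneg (ht : 0 < t) (hτ : 0 < τ) : 0 ≤ invGaussKernel a b t τ := by
  unfold invGaussKernel; positivity

lemma measurable_uncurry_invGaussKernel (a b : ℝ) :
    Measurable (Function.uncurry (invGaussKernel a b)) := by
  unfold invGaussKernel Function.uncurry; fun_prop

lemma measurable_invGaussKernel (a b t : ℝ) : Measurable (invGaussKernel a b t) :=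
  (measurable_uncurry_invGaussKernel a b).of_uncurry_left

lemma smoothOnPos_invGaussKernel (a b τ : ℝ) : SmoothOnPos fun t => invGaussKernel a b t τ := by
  intro t ht
  unfold invGaussKernel
  exact (contDiffAt_rpow_const_of_ne ht.ne').mul (contDiffAt_const.mul
    ((contDiffAt_id.pow 2).div_const _).neg.exp)

lemma rpow_neg_one_substitution (hτ : 0 < τ) :
    (|(-1 : ℝ)| * τ ^ ((-1 : ℝ) - 1)) • ((τ ^ (-1 : ℝ)) ^ (b - 1 - 1) *
      exp (-(t ^ 2 / 4 * τ ^ (-1 : ℝ)))) = τ ^ (-b) * exp (-(t ^ 2 / (4 * τ))) := by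
  rw [abs_neg, abs_one, one_mul, smul_eq_mul, ← mul_assoc, ← rpow_mul hτ.le, ← rpow_add hτ,
    rpow_neg_one τ]
  congr 2
  · ring
  · congr 1; field_simp

lemma integrableOn_invGaussKernel (a : ℝ) (hb : 1 < b) (ht : 0 < t) :
    IntegrableOn (invGaussKernel a b t) (Ioi 0) := by
  refine Integrable.const_mul (c := t ^ a) ?_
  have h := integrableOn_rpow_mul_exp_neg_mul_rpow (p := 1) (s := b - 1 - 1) (b := t ^ 2 / 4)
    (by linarith) one_pos (by positivity)
  simp only [rpow_one, neg_mul] at h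
  rw [← integrableOn_Ioi_comp_rpow_iff _ (p := -1) (by norm_num)] at h
  exact h.congr_fun (fun τ hτ => rpow_neg_one_substitution hτ) measurableSet_Ioi

lemma integral_invGaussKernel (a : ℝ) (hb : 1 < b) (ht : 0 < t) :
    ∫ τ in Ioi 0, invGaussKernel a b t τ = 4 ^ (b - 1) * Gamma (b - 1) * t ^ (a - 2 * b + 2) := by
  have h := Real.integral_rpow_mul_exp_neg_mul_Ioi (a := b - 1) (r := t ^ 2 / 4) (by linarith)
    (by positivity)
  rw [← integral_comp_rpow_Ioi _ (p := -1) (by norm_num),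
    setIntegral_congr_fun measurableSet_Ioi fun τ (hτ : 0 < τ) =>
      rpow_neg_one_substitution (b := b) (t := t) hτ] at h
  unfold invGaussKernel
  rw [integral_const_mul, h, one_div_div, div_rpow (by norm_num) (by positivity), ← rpow_natCast,
    ← rpow_mul ht.le, show a - 2 * b + 2 = a - ((2 : ℕ) : ℝ) * (b - 1) by push_cast; ring,
    rpow_sub ht]
  ring

lemma hasDerivAt_invGaussKernel (a b : ℝ) (ht : 0 < t) (hτ : 0 < τ) :
    HasDerivAt (fun t => invGaussKernel a b t τ)
      (a * invGaussKernel (a - 1) b t τ - 1 / 2 * invGaussKernel (a + 1) (b + 1) t τ) t := by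
  unfold invGaussKernel
  have hpow := Real.hasDerivAt_rpow_const (p := a) (Or.inl ht.ne')
  have hexp : HasDerivAt (fun t : ℝ => τ ^ (-b) * exp (-(t ^ 2 / (4 * τ))))
      (τ ^ (-b) * (exp (-(t ^ 2 / (4 * τ))) * (-(2 * t / (4 * τ))))) t := by
    simpa using ((hasDerivAt_pow 2 t).div_const (4 * τ)).neg.exp.const_mul (τ ^ (-b))
  refine (hpow.fun_mul hexp).congr_deriv ?_
  rw [rpow_add ht, rpow_one, neg_add, rpow_add hτ, rpow_neg_one]
  field_simp
  ring

lemma iteratedDeriv_succ_invGaussKernel (i : ℕ) (a b : ℝ) (ht : 0 < t) (hτ : 0 < τ) :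
    iteratedDeriv (i + 1) (fun t => invGaussKernel a b t τ) t =
      a * iteratedDeriv i (fun t => invGaussKernel (a - 1) b t τ) t -
        1 / 2 * iteratedDeriv i (fun t => invGaussKernel (a + 1) (b + 1) t τ) t := by
  have hderiv : deriv (fun t => invGaussKernel a b t τ) =ᶠ[𝓝 t] fun t =>
      a * invGaussKernel (a - 1) b t τ - 1 / 2 * invGaussKernel (a + 1) (b + 1) t τ := by
    filter_upwards [Ioi_mem_nhds ht] with r hr
    exact (hasDerivAt_invGaussKernel a b hr hτ).deriv
  rw [iteratedDeriv_succ', hderiv.iteratedDeriv_eq, iteratedDeriv_fun_sub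
    (contDiffAt_const.mul ((smoothOnPos_invGaussKernel _ _ τ).contDiffAt i ht))
    (contDiffAt_const.mul ((smoothOnPos_invGaussKernel _ _ τ).contDiffAt i ht)),
    iteratedDeriv_const_mul_field, iteratedDeriv_const_mul_field]

lemma integrableOn_iteratedDeriv_invGaussKernel (i : ℕ) (a : ℝ) (hb : 1 < b) (ht : 0 < t) :
    IntegrableOn (fun τ => iteratedDeriv i (fun t => invGaussKernel a b t τ) t) (Ioi 0) := by
  induction i generalizing a b with
  | zero => simpa using integrableOn_invGaussKernel a hb ht
  | succ i ih =>
    have hsub := ((ih (a - 1) hb).const_mul a).sub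
      ((ih (a + 1) (hb.trans (lt_add_one b))).const_mul (1 / 2))
    exact IntegrableOn.congr_fun hsub
      (fun τ hτ => (iteratedDeriv_succ_invGaussKernel i a b ht hτ).symm) measurableSet_Ioi

lemma exists_integral_abs_iteratedDeriv_invGaussKernel_le (i : ℕ) (a : ℝ) (hb : 1 < b) :
    ∃ C ≥ 0, ∀ t, 0 < t →
      ∫ τ in Ioi 0, |iteratedDeriv i (fun t => invGaussKernel a b t τ) t| ≤
        C * t ^ (a - 2 * b + 2 - i) := by
  induction i generalizing a b with
  | zero =>
    refine ⟨4 ^ (b - 1) * Gamma (b - 1), mul_nonneg (by positivity)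
      (Gamma_pos_of_pos (sub_pos.2 hb)).le, fun t ht => ?_⟩
    rw [Nat.cast_zero, sub_zero, ← integral_invGaussKernel a hb ht]
    refine (setIntegral_congr_fun measurableSet_Ioi fun τ hτ => ?_).le
    simpa using invGaussKernel_nonneg ht hτ
  | succ i ih =>
    have hb1 : 1 < b + 1 := hb.trans (lt_add_one b)
    obtain ⟨C₁, hC₁, h₁⟩ := ih (a - 1) hb
    obtain ⟨C₂, hC₂, h₂⟩ := ih (a + 1) hb1
    refine ⟨|a| * C₁ + 1 / 2 * C₂, by positivity, fun t ht => ?_⟩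
    have hi₁ := integrableOn_iteratedDeriv_invGaussKernel i (a - 1) hb ht
    have hi₂ := integrableOn_iteratedDeriv_invGaussKernel i (a + 1) hb1 ht
    calc ∫ τ in Ioi 0, |iteratedDeriv (i + 1) (fun t => invGaussKernel a b t τ) t|
        ≤ ∫ τ in Ioi 0, (|a| * |iteratedDeriv i (fun t => invGaussKernel (a - 1) b t τ) t| +
            1 / 2 * |iteratedDeriv i (fun t => invGaussKernel (a + 1) (b + 1) t τ) t|) := by
          refine setIntegral_mono_on (integrableOn_iteratedDeriv_invGaussKernel _ a hb ht).abs
            ((hi₁.abs.const_mul _).add (hi₂.abs.const_mul _)) measurableSet_Ioi fun τ hτ => ?_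
          rw [iteratedDeriv_succ_invGaussKernel i a b ht hτ]
          refine (abs_sub _ _).trans_eq ?_
          rw [abs_mul, abs_mul, abs_of_pos (one_half_pos (α := ℝ))]
      _ ≤ |a| * (C₁ * t ^ (a - 1 - 2 * b + 2 - i)) +
            1 / 2 * (C₂ * t ^ (a + 1 - 2 * (b + 1) + 2 - i)) := by
          rw [integral_add (hi₁.abs.const_mul _) (hi₂.abs.const_mul _), integral_const_mul,
            integral_const_mul]
          gcongr
          exacts [h₁ t ht, h₂ t ht]
      _ = (|a| * C₁ + 1 / 2 * C₂) * t ^ (a - 2 * b + 2 - ((i + 1 : ℕ) : ℝ)) := by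
          push_cast
          ring_nf

lemma rpow_le_rpow_add_rpow {x y : ℝ} (hx : 0 < x) (hxt : x ≤ t) (hty : t ≤ y) :
    t ^ a ≤ x ^ a + y ^ a := by
  have ht := hx.trans_le hxt
  rcases le_total 0 a with h | h
  · exact (rpow_le_rpow ht.le hty h).trans (le_add_of_nonneg_left (rpow_nonneg hx.le a))
  · exact (rpow_le_rpow_of_nonpos hx hxt h).trans
      (le_add_of_nonneg_right (rpow_nonneg (ht.le.trans hty) a))

lemma invGaussKernel_le {t₀ t₁ : ℝ} (ht₀ : 0 < t₀) (h₀ : t₀ ≤ t) (h₁ : t ≤ t₁) (hτ : 0 < τ) :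
    invGaussKernel a b t τ ≤ (t₀ ^ a + t₁ ^ a) * invGaussKernel 0 b t₀ τ := by
  unfold invGaussKernel
  rw [rpow_zero, one_mul]
  exact mul_le_mul (rpow_le_rpow_add_rpow ht₀ h₀ h₁) (by gcongr) (by positivity)
    (add_nonneg (rpow_nonneg ht₀.le a) (rpow_nonneg (ht₀.le.trans (h₀.trans h₁)) a))

lemma exists_integrableOn_abs_deriv_invGaussKernel_le (a : ℝ) (hb : 1 < b) {t₀ : ℝ} (ht₀ : 0 < t₀)
    (t₁ : ℝ) :
    ∃ g : ℝ → ℝ, IntegrableOn g (Ioi 0) ∧ ∀ τ, 0 < τ → ∀ t ∈ Ioo t₀ t₁,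
      |a * invGaussKernel (a - 1) b t τ - 1 / 2 * invGaussKernel (a + 1) (b + 1) t τ| ≤ g τ := by
  refine ⟨fun τ => |a| * ((t₀ ^ (a - 1) + t₁ ^ (a - 1)) * invGaussKernel 0 b t₀ τ) +
    1 / 2 * ((t₀ ^ (a + 1) + t₁ ^ (a + 1)) * invGaussKernel 0 (b + 1) t₀ τ),
    (((integrableOn_invGaussKernel 0 hb ht₀).const_mul _).const_mul _).add
      (((integrableOn_invGaussKernel 0 (hb.trans (lt_add_one b)) ht₀).const_mul _).const_mul _),
    fun τ hτ t ht => ?_⟩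
  have ht0 : 0 < t := ht₀.trans ht.1
  refine (abs_sub _ _).trans ?_
  rw [abs_mul, abs_mul, abs_of_nonneg (invGaussKernel_nonneg ht0 hτ),
    abs_of_nonneg (invGaussKernel_nonneg ht0 hτ), abs_of_pos (one_half_pos (α := ℝ))]
  exact add_le_add
    (mul_le_mul_of_nonneg_left (invGaussKernel_le ht₀ ht.1.le ht.2.le hτ) (abs_nonneg a))
    (mul_le_mul_of_nonneg_left (invGaussKernel_le ht₀ ht.1.le ht.2.le hτ) one_half_pos.le)

lemma integrableOn_mul_of_abs_le {k h : ℝ → ℝ} {M : ℝ} (hk : IntegrableOn k (Ioi 0))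
    (hh : Measurable h) (hM : ∀ τ, 0 < τ → |h τ| ≤ M) :
    IntegrableOn (fun τ => k τ * h τ) (Ioi 0) :=
  Integrable.mul_bdd (c := M) hk hh.aestronglyMeasurable
    ((ae_restrict_mem measurableSet_Ioi).mono hM)

variable {h : ℝ → ℝ} {M : ℝ} (hh : Measurable h) (hM : ∀ τ, 0 < τ → |h τ| ≤ M)
include hh hM

lemma hasDerivAt_invGaussTransform (a : ℝ) (hb : 1 < b) (ht : 0 < t) :
    HasDerivAt (invGaussTransform a b h) (a * invGaussTransform (a - 1) b h t -
      1 / 2 * invGaussTransform (a + 1) (b + 1) h t) t := by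
  have hint {a b : ℝ} (hb : 1 < b) :=
    integrableOn_mul_of_abs_le (integrableOn_invGaussKernel a hb ht) hh hM
  obtain ⟨g, hgi, hg⟩ := exists_integrableOn_abs_deriv_invGaussKernel_le a hb (half_pos ht) (2 * t)
  have key := hasDerivAt_integral_of_dominated_loc_of_deriv_le (μ := volume.restrict (Ioi 0))
    (F := fun t τ => invGaussKernel a b t τ * h τ)
    (F' := fun t τ => (a * invGaussKernel (a - 1) b t τ -
      1 / 2 * invGaussKernel (a + 1) (b + 1) t τ) * h τ) (bound := fun τ => g τ * M)
    (Ioo_mem_nhds (half_lt_self ht) (by linarith : t < 2 * t))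
    (.of_forall fun t => ((measurable_invGaussKernel a b t).mul hh).aestronglyMeasurable)
    (hint hb)
    (((((measurable_invGaussKernel _ _ t).const_mul a).sub
      ((measurable_invGaussKernel _ _ t).const_mul _)).mul hh).aestronglyMeasurable)
    ((ae_restrict_mem measurableSet_Ioi).mono fun τ hτ r hr => ?_) (hgi.mul_const M)
    ((ae_restrict_mem measurableSet_Ioi).mono fun τ hτ r hr =>
      (hasDerivAt_invGaussKernel a b ((half_pos ht).trans hr.1) hτ).mul_const _)
  · refine key.2.congr_deriv ?_
    simp only [invGaussTransform, ← integral_const_mul]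
    rw [← integral_sub ((hint hb).const_mul a) ((hint (hb.trans (lt_add_one b))).const_mul _)]
    simp only [sub_mul, mul_assoc]
  · rw [norm_mul, Real.norm_eq_abs, Real.norm_eq_abs]
    exact mul_le_mul (hg τ hτ r hr) (hM τ hτ) (abs_nonneg _) ((abs_nonneg _).trans (hg τ hτ r hr))

lemma contDiffOn_invGaussTransform (N : ℕ) (a : ℝ) (hb : 1 < b) :
    ContDiffOn ℝ N (invGaussTransform a b h) (Ioi 0) := by
  induction N generalizing a b with
  | zero =>
    rw [Nat.cast_zero, contDiffOn_zero]
    exact fun t ht => (hasDerivAt_invGaussTransform hh hM a hb ht).continuousAt.continuousWithinAt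
  | succ N ih =>
    rw [Nat.cast_succ, contDiffOn_succ_iff_deriv_of_isOpen isOpen_Ioi]
    refine ⟨fun t ht => (hasDerivAt_invGaussTransform hh hM a hb
      ht).differentiableAt.differentiableWithinAt, by simp, ?_⟩
    refine ContDiffOn.congr ?_ fun t ht => (hasDerivAt_invGaussTransform hh hM a hb ht).deriv
    exact (contDiffOn_const.mul (ih (a - 1) hb)).sub
      (contDiffOn_const.mul (ih (a + 1) (hb.trans (lt_add_one b))))

lemma smoothOnPos_invGaussTransform (a : ℝ) (hb : 1 < b) :
    SmoothOnPos (invGaussTransform a b h) := fun _ ht =>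
  (contDiffOn_infty.2 fun N => contDiffOn_invGaussTransform hh hM N a hb).contDiffAt
    (isOpen_Ioi.mem_nhds ht)

lemma iteratedDeriv_invGaussTransform (i : ℕ) (a : ℝ) (hb : 1 < b) (ht : 0 < t) :
    iteratedDeriv i (invGaussTransform a b h) t =
      ∫ τ in Ioi 0, iteratedDeriv i (fun t => invGaussKernel a b t τ) t * h τ := by
  induction i generalizing a b with
  | zero => rw [iteratedDeriv_zero]; rfl
  | succ i ih =>
    have hb1 : 1 < b + 1 := hb.trans (lt_add_one b)
    have hderiv : deriv (invGaussTransform a b h) =ᶠ[𝓝 t] fun t =>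
        a * invGaussTransform (a - 1) b h t - 1 / 2 * invGaussTransform (a + 1) (b + 1) h t := by
      filter_upwards [Ioi_mem_nhds ht] with r hr
      exact (hasDerivAt_invGaussTransform hh hM a hb hr).deriv
    have hint {a b : ℝ} (hb : 1 < b) := integrableOn_mul_of_abs_le
      (integrableOn_iteratedDeriv_invGaussKernel i a hb ht) hh hM
    rw [iteratedDeriv_succ', hderiv.iteratedDeriv_eq, iteratedDeriv_fun_sub
      (contDiffAt_const.mul ((smoothOnPos_invGaussTransform hh hM _ hb).contDiffAt i ht))
      (contDiffAt_const.mul ((smoothOnPos_invGaussTransform hh hM _ hb1).contDiffAt i ht)),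
      iteratedDeriv_const_mul_field, iteratedDeriv_const_mul_field, ih _ hb, ih _ hb1,
      ← integral_const_mul, ← integral_const_mul,
      ← integral_sub ((hint hb).const_mul a) ((hint hb1).const_mul _)]
    refine setIntegral_congr_fun measurableSet_Ioi fun τ hτ => ?_
    simp only [iteratedDeriv_succ_invGaussKernel i a b ht hτ]
    ring

end InverseGaussianKernels

section StableSubordinator

/-- The density of the one-sided `1/2`-stable subordinator at time `t`. -/
noncomputable def stableDensity (t τ : ℝ) : ℝ := 1 / (2 * √π) * invGaussKernel 1 (3 / 2) t τ

variable {q t τ : ℝ}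

lemma stableDensity_nonneg (ht : 0 < t) (hτ : 0 < τ) : 0 ≤ stableDensity t τ :=
  mul_nonneg (by positivity) (invGaussKernel_nonneg ht hτ)

lemma measurable_uncurry_stableDensity : Measurable (Function.uncurry stableDensity) :=
  (measurable_uncurry_invGaussKernel 1 (3 / 2)).const_mul _

lemma measurable_stableDensity (t : ℝ) : Measurable (stableDensity t) :=
  (measurable_invGaussKernel 1 (3 / 2) t).const_mul _

lemma integrableOn_stableDensity (ht : 0 < t) : IntegrableOn (stableDensity t) (Ioi 0) :=
  (integrableOn_invGaussKernel 1 (by norm_num) ht).const_mul _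

lemma integral_stableDensity (ht : 0 < t) : ∫ τ in Ioi 0, stableDensity t τ = 1 := by
  unfold stableDensity
  rw [integral_const_mul, integral_invGaussKernel 1 (by norm_num) ht,
    show (3 / 2 : ℝ) - 1 = 1 / 2 by norm_num, Gamma_one_half_eq, ← sqrt_eq_rpow,
    show (4 : ℝ) = 2 ^ 2 by norm_num, sqrt_sq (by norm_num),
    show (1 : ℝ) - 2 * (3 / 2) + 2 = 0 by norm_num, rpow_zero]
  have : √π ≠ 0 := by positivity
  field_simp

lemma integral_Ioi_zero_of_hasDerivAt_of_tendsto {g g' : ℝ → ℝ} {l₀ l : ℝ}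
    (hg : ∀ x ∈ Ioi (0 : ℝ), HasDerivAt g (g' x) x) (hg' : ∀ x ∈ Ioi (0 : ℝ), 0 ≤ g' x)
    (h₀ : Tendsto g (𝓝[>] 0) (𝓝 l₀)) (hl : Tendsto g atTop (𝓝 l)) :
    ∫ x in Ioi 0, g' x = l - l₀ := by
  have hupdate : ∀ x ∈ Ioi (0 : ℝ), Function.update g 0 l₀ =ᶠ[𝓝 x] g := fun x hx => by
    filter_upwards [Ioi_mem_nhds hx] with y hy
    exact Function.update_of_ne hy.ne' _ _
  have hcont : ContinuousWithinAt (Function.update g 0 l₀) (Ici 0) 0 := by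
    rw [continuousWithinAt_update_same, Ici_sdiff_left]
    exact h₀
  simpa using integral_Ioi_of_hasDerivAt_of_nonneg hcont
    (fun x hx => (hg x hx).congr_of_eventuallyEq (hupdate x hx)) hg'
    (hl.congr' ((eventually_gt_atTop 0).mono fun y hy => (Function.update_of_ne hy.ne' _ _).symm))

/-- The unnormalised error function. -/
noncomputable def gaussPrimitive (z : ℝ) : ℝ := ∫ x in (0 : ℝ)..z, exp (-x ^ 2)

lemma hasDerivAt_gaussPrimitive (z : ℝ) : HasDerivAt gaussPrimitive (exp (-z ^ 2)) z := by
  have hc : Continuous fun x : ℝ => exp (-x ^ 2) := by fun_prop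
  exact intervalIntegral.integral_hasDerivAt_right (hc.intervalIntegrable _ _)
    (hc.stronglyMeasurableAtFilter _ _) hc.continuousAt

lemma gaussPrimitive_neg (z : ℝ) : gaussPrimitive (-z) = -gaussPrimitive z := by
  have h := intervalIntegral.integral_comp_neg (a := 0) (b := z) fun x : ℝ => exp (-x ^ 2)
  simp only [neg_sq, neg_zero] at h
  rw [gaussPrimitive, gaussPrimitive, h, intervalIntegral.integral_symm]

lemma tendsto_gaussPrimitive_atTop : Tendsto gaussPrimitive atTop (𝓝 (√π / 2)) := by
  have hval := integral_gaussian_Ioi 1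
  have hint := (integrable_exp_neg_mul_sq one_pos).integrableOn (s := Ioi 0)
  simp only [neg_mul, one_mul, div_one] at hval hint
  rw [← hval]
  exact intervalIntegral_tendsto_integral_Ioi 0 hint tendsto_id

lemma tendsto_gaussPrimitive_atBot : Tendsto gaussPrimitive atBot (𝓝 (-(√π / 2))) :=
  (tendsto_gaussPrimitive_atTop.comp tendsto_neg_atBot_atTop).neg.congr fun z => by
    simp [gaussPrimitive_neg]

/-- The argument `(t/2) τ^{-1/2} + q τ^{1/2}` of the error function in the primitive of
`τ ↦ stableDensity t τ * exp (-q² τ)`. -/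
noncomputable def erfArg (t q τ : ℝ) : ℝ := t / 2 * τ ^ (-(1 / 2) : ℝ) + q * τ ^ (1 / 2 : ℝ)

lemma exp_mul_exp_neg_erfArg_sq (t q : ℝ) (hτ : 0 < τ) :
    exp (t * q) * exp (-erfArg t q τ ^ 2) = exp (-(t ^ 2 / (4 * τ))) * exp (-(q ^ 2 * τ)) := by
  have hcross : τ ^ (-(1 / 2) : ℝ) * τ ^ (1 / 2 : ℝ) = 1 := by rw [← rpow_add hτ]; simp
  have hpos : τ ^ (1 / 2 : ℝ) * τ ^ (1 / 2 : ℝ) = τ := by rw [← rpow_add hτ]; norm_num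
  have hneg : τ ^ (-(1 / 2) : ℝ) * τ ^ (-(1 / 2) : ℝ) = τ⁻¹ := by
    rw [← rpow_add hτ, ← rpow_neg_one]; norm_num
  rw [← exp_add, ← exp_add, erfArg]
  congr 1
  linear_combination (-(t ^ 2 / 4)) * hneg - q ^ 2 * hpos - t * q * hcross

lemma hasDerivAt_exp_mul_gaussPrimitive_erfArg (t q : ℝ) (hτ : 0 < τ) :
    HasDerivAt (fun τ => exp (t * q) * gaussPrimitive (erfArg t q τ))
      (exp (-(t ^ 2 / (4 * τ))) * exp (-(q ^ 2 * τ)) *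
        (t / 2 * (-(1 / 2) * τ ^ (-(3 / 2) : ℝ)) + q * (1 / 2 * τ ^ (-(1 / 2) : ℝ)))) τ := by
  have harg : HasDerivAt (erfArg t q)
      (t / 2 * (-(1 / 2) * τ ^ (-(3 / 2) : ℝ)) + q * (1 / 2 * τ ^ (-(1 / 2) : ℝ))) τ := by
    refine (((Real.hasDerivAt_rpow_const (p := -(1 / 2)) (Or.inl hτ.ne')).const_mul (t / 2)).fun_add
      ((Real.hasDerivAt_rpow_const (p := 1 / 2) (Or.inl hτ.ne')).const_mul q)).congr_deriv ?_
    norm_num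
  rw [← exp_mul_exp_neg_erfArg_sq t q hτ, mul_assoc]
  exact ((hasDerivAt_gaussPrimitive _).comp τ harg).const_mul _

lemma tendsto_erfArg_zero (ht : 0 < t) (q : ℝ) : Tendsto (erfArg t q) (𝓝[>] 0) atTop := by
  have hzero : Tendsto (fun τ : ℝ => τ ^ (1 / 2 : ℝ)) (𝓝[>] 0) (𝓝 0) := by
    simpa using ((continuousAt_rpow_const 0 (1 / 2 : ℝ) (Or.inr (by norm_num))).tendsto).mono_left
      (nhdsWithin_le_nhds (s := Ioi 0))
  exact ((tendsto_rpow_neg_nhdsGT_zero (by norm_num)).const_mul_atTop (half_pos ht)).atTop_add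
    (hzero.const_mul q)

lemma tendsto_erfArg_atTop (t : ℝ) (hq : 0 < q) : Tendsto (erfArg t q) atTop atTop :=
  ((tendsto_rpow_neg_atTop (by norm_num)).const_mul _).add_atTop
    ((tendsto_rpow_atTop (by norm_num)).const_mul_atTop hq)

lemma tendsto_erfArg_neg_atTop (t : ℝ) (hq : 0 < q) : Tendsto (erfArg t (-q)) atTop atBot :=
  ((tendsto_rpow_neg_atTop (by norm_num)).const_mul _).add_atBot
    ((tendsto_rpow_atTop (by norm_num)).const_mul_atTop_of_neg (neg_neg_of_pos hq))

lemma integral_stableDensity_mul_exp_neg_sq_mul (ht : 0 < t) (hq : 0 ≤ q) :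
    ∫ τ in Ioi 0, stableDensity t τ * exp (-(q ^ 2 * τ)) = exp (-(t * q)) := by
  rcases hq.eq_or_lt with rfl | hq
  · simpa using integral_stableDensity ht
  have : 0 < √π := by positivity
  have hderiv (τ : ℝ) (hτ : 0 < τ) := ((hasDerivAt_exp_mul_gaussPrimitive_erfArg t (-q) hτ).fun_add
    (hasDerivAt_exp_mul_gaussPrimitive_erfArg t q hτ)).const_mul (-(1 / √π))
  have hzero (q : ℝ) := (tendsto_gaussPrimitive_atTop.comp
    (tendsto_erfArg_zero ht q)).const_mul (exp (t * q))
  have htop := ((tendsto_gaussPrimitive_atBot.comp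
    (tendsto_erfArg_neg_atTop t hq)).const_mul (exp (t * -q))).add
    ((tendsto_gaussPrimitive_atTop.comp (tendsto_erfArg_atTop t hq)).const_mul (exp (t * q)))
  rw [integral_Ioi_zero_of_hasDerivAt_of_tendsto
    (fun τ hτ => (hderiv τ hτ).congr_deriv (g' := stableDensity t τ * exp (-(q ^ 2 * τ))) ?_)
    (fun τ hτ => mul_nonneg (stableDensity_nonneg ht hτ) (exp_pos _).le)
    (((hzero (-q)).add (hzero q)).const_mul _) (htop.const_mul _), mul_neg]
  · field_simp
    ring
  · rw [stableDensity, invGaussKernel, rpow_one, neg_sq]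
    field_simp
    ring

lemma stableDensity_scaling {v : ℝ} (ht : 0 < t) (hv : 0 < v) :
    t ^ 2 * stableDensity t (t ^ 2 * v) = stableDensity 1 v := by
  have hpow : t ^ (((2 : ℕ) : ℝ) * -(3 / 2)) = (t ^ 3)⁻¹ := by
    rw [← rpow_natCast, ← rpow_neg ht.le]; norm_num
  have hexp : t ^ 2 / (4 * (t ^ 2 * v)) = 1 ^ 2 / (4 * v) := by field_simp
  unfold stableDensity invGaussKernel
  rw [mul_rpow (by positivity) hv.le, ← rpow_natCast, ← rpow_mul ht.le, rpow_one, one_rpow, hpow,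
    rpow_natCast, hexp]
  field_simp

lemma integral_stableDensity_mul_eq (ht : 0 < t) (h : ℝ → ℝ) :
    ∫ τ in Ioi 0, stableDensity t τ * h τ = ∫ v in Ioi 0, stableDensity 1 v * h (t ^ 2 * v) := by
  have hsubst := integral_comp_mul_left_Ioi (fun τ => stableDensity t τ * h τ) 0 (pow_pos ht 2)
  rw [mul_zero, smul_eq_mul, eq_inv_mul_iff_mul_eq₀ (pow_pos ht 2).ne',
    ← integral_const_mul] at hsubst
  rw [← hsubst]
  refine setIntegral_congr_fun measurableSet_Ioi fun v hv => ?_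
  rw [← mul_assoc, stableDensity_scaling ht hv]

lemma integrableOn_iteratedDeriv_stableDensity (i : ℕ) (ht : 0 < t) :
    IntegrableOn (fun τ => iteratedDeriv i (fun t => stableDensity t τ) t) (Ioi 0) := by
  simp only [stableDensity, iteratedDeriv_const_mul_field]
  exact (integrableOn_iteratedDeriv_invGaussKernel i 1 (by norm_num) ht).const_mul _

lemma exists_integral_abs_iteratedDeriv_stableDensity_le (i : ℕ) :
    ∃ C ≥ 0, ∀ t, 0 < t →
      ∫ τ in Ioi 0, |iteratedDeriv i (fun t => stableDensity t τ) t| ≤ C * t ^ (-i : ℝ) := by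
  obtain ⟨C, hC0, hC⟩ :=
    exists_integral_abs_iteratedDeriv_invGaussKernel_le (b := 3 / 2) i 1 (by norm_num)
  refine ⟨|1 / (2 * √π)| * C, by positivity, fun t ht => ?_⟩
  simp only [stableDensity, iteratedDeriv_const_mul_field, abs_mul, integral_const_mul]
  rw [mul_assoc]
  gcongr
  rw [show (-i : ℝ) = 1 - 2 * (3 / 2) + 2 - i by ring]
  exact hC t ht

variable {h : ℝ → ℝ} {M : ℝ}

lemma abs_integral_stableDensity_mul_le (ht : 0 < t) (hM : ∀ τ, 0 < τ → |h τ| ≤ M) :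
    |∫ τ in Ioi 0, stableDensity t τ * h τ| ≤ M := by
  have hle : ‖∫ τ in Ioi 0, stableDensity t τ * h τ‖ ≤ ∫ τ in Ioi 0, stableDensity t τ * M := by
    refine norm_integral_le_of_norm_le ((integrableOn_stableDensity ht).mul_const M)
      ((ae_restrict_mem measurableSet_Ioi).mono fun τ hτ => ?_)
    rw [norm_mul, Real.norm_of_nonneg (stableDensity_nonneg ht hτ)]
    exact mul_le_mul_of_nonneg_left (hM τ hτ) (stableDensity_nonneg ht hτ)
  rwa [integral_mul_const, integral_stableDensity ht, one_mul] at hle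

variable (hh : Measurable h) (hM : ∀ τ, 0 < τ → |h τ| ≤ M)
include hh hM

lemma tendsto_integral_stableDensity_mul {L : ℝ} (hL : Tendsto h (𝓝[>] 0) (𝓝 L)) :
    Tendsto (fun t => ∫ τ in Ioi 0, stableDensity t τ * h τ) (𝓝[>] 0) (𝓝 L) := by
  have hscale {v : ℝ} (hv : 0 < v) : Tendsto (fun t : ℝ => t ^ 2 * v) (𝓝[>] 0) (𝓝[>] 0) := by
    refine tendsto_nhdsWithin_iff.2 ⟨?_, eventually_mem_nhdsWithin.mono fun t ht =>
      mul_pos (pow_pos ht 2) hv⟩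
    have hcont : Continuous fun t : ℝ => t ^ 2 * v := by fun_prop
    simpa using (hcont.tendsto 0).mono_left nhdsWithin_le_nhds
  have key : Tendsto (fun t : ℝ => ∫ v in Ioi 0, stableDensity 1 v * h (t ^ 2 * v)) (𝓝[>] 0)
      (𝓝 (∫ v in Ioi 0, stableDensity 1 v * L)) := by
    refine tendsto_integral_filter_of_dominated_convergence (fun v => stableDensity 1 v * M)
      (.of_forall fun t => ((measurable_stableDensity 1).mul
        (hh.comp (measurable_const_mul _))).aestronglyMeasurable)
      (eventually_mem_nhdsWithin.mono fun t ht =>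
        (ae_restrict_mem measurableSet_Ioi).mono fun v hv => ?_)
      ((integrableOn_stableDensity one_pos).mul_const M)
      ((ae_restrict_mem measurableSet_Ioi).mono fun v hv => (hL.comp (hscale hv)).const_mul _)
    rw [norm_mul, Real.norm_of_nonneg (stableDensity_nonneg one_pos hv)]
    exact mul_le_mul_of_nonneg_left (hM _ (mul_pos (pow_pos ht 2) hv))
      (stableDensity_nonneg one_pos hv)
  rw [integral_mul_const, integral_stableDensity one_pos, one_mul] at key
  exact key.congr' (eventually_mem_nhdsWithin.mono fun t ht =>
    (integral_stableDensity_mul_eq ht h).symm)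

lemma iteratedDeriv_integral_stableDensity_mul (i : ℕ) (ht : 0 < t) :
    iteratedDeriv i (fun t => ∫ τ in Ioi 0, stableDensity t τ * h τ) t =
      ∫ τ in Ioi 0, iteratedDeriv i (fun t => stableDensity t τ) t * h τ := by
  simp only [stableDensity, iteratedDeriv_const_mul_field, mul_assoc, integral_const_mul]
  rw [← iteratedDeriv_invGaussTransform hh hM i 1 (by norm_num) ht]
  rfl

lemma smoothOnPos_integral_stableDensity_mul :
    SmoothOnPos fun t => ∫ τ in Ioi 0, stableDensity t τ * h τ := by
  simp only [stableDensity, mul_assoc, integral_const_mul]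
  exact fun t ht => contDiffAt_const.mul
    (smoothOnPos_invGaussTransform hh hM 1 (by norm_num) t ht)

end StableSubordinator

section LaplaceUniqueness

variable {d : ℕ}

lemma measurableSet_posOrthant (d : ℕ) : MeasurableSet (posOrthant d) :=
  MeasurableSet.univ_pi fun _ => measurableSet_Ioi

lemma pos_of_mem_posOrthant {x : Fin d → ℝ} (hx : x ∈ posOrthant d) (j : Fin d) : 0 < x j :=
  hx j (mem_univ j)

/-- The exponential `x ↦ e^{-p·x}` as a bounded continuous function on the closed orthant. -/
noncomputable def laplaceExp (p : Fin d → ℕ) :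
    BoundedContinuousFunction (Fin d → NNReal) ℝ :=
  BoundedContinuousFunction.ofNormedAddCommGroup (fun x => exp (-∑ j, (p j : ℝ) * (x j : ℝ)))
    (by fun_prop) 1 fun x => by
      rw [Real.norm_of_nonneg (exp_pos _).le, exp_le_one_iff, neg_nonpos]
      exact Finset.sum_nonneg fun j _ => by positivity

lemma laplaceExp_apply (p : Fin d → ℕ) (x : Fin d → NNReal) :
    laplaceExp p x = exp (-∑ j, (p j : ℝ) * (x j : ℝ)) := rfl

lemma laplaceExp_single_apply (j : Fin d) (x : Fin d → NNReal) :
    laplaceExp (Pi.single j 1) x = exp (-(x j : ℝ)) := by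
  rw [laplaceExp_apply, Finset.sum_eq_single j] <;> simp +contextual

/-- The exponentials `e^{-p·x}` as a multiplicative family, whose range is therefore already
closed under products. -/
noncomputable def laplaceExpHom (d : ℕ) :
    Multiplicative (Fin d → ℕ) →* BoundedContinuousFunction (Fin d → NNReal) ℝ where
  toFun p := laplaceExp p.toAdd
  map_one' := by ext x; simp [laplaceExp_apply]
  map_mul' p q := by
    ext x
    simp [laplaceExp_apply, ← exp_add, add_mul, Finset.sum_add_distrib, add_comm]

/-- The algebra spanned by the exponentials `e^{-p·x}`, to which Stone–Weierstrass applies. -/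
noncomputable def laplaceAlgebra (d : ℕ) :
    StarSubalgebra ℝ (BoundedContinuousFunction (Fin d → NNReal) ℝ) :=
  { Algebra.adjoin ℝ (MonoidHom.mrange (laplaceExpHom d) :
      Set (BoundedContinuousFunction (Fin d → NNReal) ℝ)) with
    star_mem' := fun {a} ha => by
      have : star a = a := by ext x; simp
      rwa [this] }

lemma laplaceExp_mem_laplaceAlgebra (p : Fin d → ℕ) : laplaceExp p ∈ laplaceAlgebra d :=
  Algebra.subset_adjoin ⟨Multiplicative.ofAdd p, rfl⟩

lemma mem_span_laplaceExp {g : BoundedContinuousFunction (Fin d → NNReal) ℝ}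
    (hg : g ∈ laplaceAlgebra d) : g ∈ Submodule.span ℝ (range (laplaceExp (d := d))) := by
  have hspan : g ∈ Subalgebra.toSubmodule (Algebra.adjoin ℝ (MonoidHom.mrange (laplaceExpHom d) :
    Set (BoundedContinuousFunction (Fin d → NNReal) ℝ))) := hg
  rwa [Algebra.adjoin_eq_span, Submonoid.closure_eq, MonoidHom.coe_mrange] at hspan

lemma measure_ext_of_integral_laplaceExp {μ ν : Measure (Fin d → NNReal)}
    [IsFiniteMeasure μ] [IsFiniteMeasure ν]
    (h : ∀ p : Fin d → ℕ, ∫ x, laplaceExp p x ∂μ = ∫ x, laplaceExp p x ∂ν) : μ = ν := by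
  refine ext_of_forall_mem_subalgebra_integral_eq_of_polish (𝕜 := ℝ) (A := laplaceAlgebra d)
    (fun x y hxy => ?_) (fun g hg => ?_)
  · obtain ⟨j, hj⟩ := Function.ne_iff.1 hxy
    refine ⟨_, ⟨_, ⟨_, laplaceExp_mem_laplaceAlgebra (Pi.single j 1), rfl⟩, rfl⟩, fun heq => hj ?_⟩
    simpa [laplaceExp_single_apply] using heq
  · have hspan := mem_span_laplaceExp hg
    clear hg
    induction hspan using Submodule.span_induction with
    | mem g hg => obtain ⟨p, rfl⟩ := hg; exact h p
    | zero => simp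
    | add a b _ _ ha hb =>
      simp only [BoundedContinuousFunction.coe_add, Pi.add_apply]
      rw [integral_add (a.integrable _) (b.integrable _),
        integral_add (a.integrable _) (b.integrable _), ha, hb]
    | smul c a _ ha =>
      simp only [BoundedContinuousFunction.coe_smul]
      rw [integral_smul, integral_smul, ha]

lemma map_coe_map_toNNReal {μ : Measure (Fin d → ℝ)} (hμ : ∀ᵐ x ∂μ, x ∈ posOrthant d) :
    (μ.map fun x j => (x j).toNNReal).map (fun x j => (x j : ℝ)) = μ := by
  rw [Measure.map_map (by fun_prop) (by fun_prop)]
  refine (Measure.map_congr (hμ.mono fun x hx => ?_)).trans Measure.map_id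
  exact funext fun j => Real.coe_toNNReal _ (pos_of_mem_posOrthant hx j).le

lemma integral_laplaceExp_map_toNNReal {μ : Measure (Fin d → ℝ)}
    (hμ : ∀ᵐ x ∂μ, x ∈ posOrthant d) (p : Fin d → ℕ) :
    ∫ x, laplaceExp p x ∂(μ.map fun x j => (x j).toNNReal) =
      ∫ x, exp (-∑ j, (p j : ℝ) * x j) ∂μ := by
  have hmeas : Measurable fun (x : Fin d → ℝ) j => (x j).toNNReal := by fun_prop
  rw [integral_map hmeas.aemeasurable (laplaceExp p).continuous.aestronglyMeasurable]
  refine integral_congr_ae (hμ.mono fun x hx => ?_)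
  simp only [laplaceExp_apply, Real.coe_toNNReal _ (pos_of_mem_posOrthant hx _).le]

lemma measure_ext_of_integral_exp_neg_sum {μ ν : Measure (Fin d → ℝ)} [IsFiniteMeasure μ]
    [IsFiniteMeasure ν] (hμ : ∀ᵐ x ∂μ, x ∈ posOrthant d) (hν : ∀ᵐ x ∂ν, x ∈ posOrthant d)
    (h : ∀ p : Fin d → ℕ, ∫ x, exp (-∑ j, (p j : ℝ) * x j) ∂μ =
      ∫ x, exp (-∑ j, (p j : ℝ) * x j) ∂ν) : μ = ν := by
  rw [← map_coe_map_toNNReal hμ, ← map_coe_map_toNNReal hν]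
  congr 1
  refine measure_ext_of_integral_laplaceExp fun p => ?_
  rw [integral_laplaceExp_map_toNNReal hμ, integral_laplaceExp_map_toNNReal hν, h]

lemma measure_ext_of_integral_exp_neg_mul {μ ν : Measure ℝ} [IsFiniteMeasure μ]
    [IsFiniteMeasure ν] (hμ : ∀ᵐ x ∂μ, 0 < x) (hν : ∀ᵐ x ∂ν, 0 < x)
    (h : ∀ p : ℕ, ∫ x, exp (-((p : ℝ) * x)) ∂μ = ∫ x, exp (-((p : ℝ) * x)) ∂ν) : μ = ν := by
  let e := (MeasurableEquiv.funUnique (Fin 1) ℝ).symm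
  have hpos {ρ : Measure ℝ} (hρ : ∀ᵐ x ∂ρ, 0 < x) : ∀ᵐ x ∂ρ.map e, x ∈ posOrthant 1 :=
    (ae_map_iff e.measurable.aemeasurable (measurableSet_posOrthant 1)).2
      (hρ.mono fun x hx j _ => hx)
  have hmap (ρ : Measure ℝ) (p : Fin 1 → ℕ) :
      ∫ x, exp (-∑ j, (p j : ℝ) * x j) ∂ρ.map e = ∫ x, exp (-((p 0 : ℝ) * x)) ∂ρ := by
    rw [integral_map_equiv]
    simp only [Finset.univ_unique, Finset.sum_singleton]
    rfl
  exact e.map_measurableEquiv_injective (measure_ext_of_integral_exp_neg_sum (hpos hμ) (hpos hν)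
    fun p => by rw [hmap, hmap, h])

end LaplaceUniqueness

section StableConvolution

/-- The one-sided `1/2`-stable law at time `t`. -/
noncomputable def stableMeasure (t : ℝ) : Measure ℝ :=
  (volume.restrict (Ioi 0)).withDensity fun τ => ENNReal.ofReal (stableDensity t τ)

variable {s t : ℝ}

lemma integral_stableMeasure (ht : 0 < t) (h : ℝ → ℝ) :
    ∫ τ, h τ ∂stableMeasure t = ∫ τ in Ioi 0, stableDensity t τ * h τ := by
  rw [stableMeasure, integral_withDensity_eq_integral_toReal_smul
    (measurable_stableDensity t).ennreal_ofReal (ae_of_all _ fun _ => ENNReal.ofReal_lt_top)]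
  refine setIntegral_congr_fun measurableSet_Ioi fun τ hτ => ?_
  rw [smul_eq_mul, ENNReal.toReal_ofReal (stableDensity_nonneg ht hτ)]

lemma isProbabilityMeasure_stableMeasure (ht : 0 < t) :
    IsProbabilityMeasure (stableMeasure t) := by
  refine ⟨?_⟩
  rw [stableMeasure, withDensity_apply _ MeasurableSet.univ, Measure.restrict_univ,
    ← ofReal_integral_eq_lintegral_ofReal (integrableOn_stableDensity ht)
      ((ae_restrict_mem measurableSet_Ioi).mono fun τ hτ => stableDensity_nonneg ht hτ),
    integral_stableDensity ht, ENNReal.ofReal_one]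

lemma ae_stableMeasure_pos (t : ℝ) : ∀ᵐ τ ∂stableMeasure t, 0 < τ :=
  (withDensity_absolutelyContinuous _ _).ae_le (ae_restrict_mem measurableSet_Ioi)

lemma integral_exp_neg_mul_stableMeasure (ht : 0 < t) (p : ℕ) :
    ∫ τ, exp (-((p : ℝ) * τ)) ∂stableMeasure t = exp (-(t * √p)) := by
  rw [integral_stableMeasure ht, ← integral_stableDensity_mul_exp_neg_sq_mul ht (sqrt_nonneg _),
    sq_sqrt (Nat.cast_nonneg p)]

lemma stableMeasure_conv (hs : 0 < s) (ht : 0 < t) :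
    (stableMeasure s).conv (stableMeasure t) = stableMeasure (s + t) := by
  have := isProbabilityMeasure_stableMeasure hs
  have := isProbabilityMeasure_stableMeasure ht
  have := isProbabilityMeasure_stableMeasure (add_pos hs ht)
  have hpos : ∀ᵐ x ∂(stableMeasure s).conv (stableMeasure t), 0 < x := by
    rw [Measure.conv, ae_map_iff measurable_add.aemeasurable measurableSet_Ioi]
    filter_upwards [Measure.quasiMeasurePreserving_fst.ae (ae_stableMeasure_pos s),
      Measure.quasiMeasurePreserving_snd.ae (ae_stableMeasure_pos t)] with x hx₁ hx₂
    exact add_pos hx₁ hx₂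
  refine measure_ext_of_integral_exp_neg_mul hpos (ae_stableMeasure_pos _) fun p => ?_
  rw [integral_conv]
  · simp only [mul_add, neg_add, exp_add, integral_const_mul, integral_mul_const]
    rw [integral_exp_neg_mul_stableMeasure hs, integral_exp_neg_mul_stableMeasure ht,
      integral_exp_neg_mul_stableMeasure (add_pos hs ht), ← exp_add]
    congr 1
    ring
  · refine Integrable.of_bound (C := 1) (by fun_prop) (hpos.mono fun x hx => ?_)
    rw [Real.norm_of_nonneg (exp_pos _).le, exp_le_one_iff, neg_nonpos]
    positivity

lemma integral_stableDensity_convolution {M : ℝ} (hs : 0 < s) (ht : 0 < t) {h : ℝ → ℝ}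
    (hh : Measurable h) (hM : ∀ τ, 0 < τ → |h τ| ≤ M) :
    ∫ σ in Ioi 0, stableDensity s σ * ∫ τ in Ioi 0, stableDensity t τ * h (σ + τ) =
      ∫ τ in Ioi 0, stableDensity (s + t) τ * h τ := by
  have := isProbabilityMeasure_stableMeasure hs
  have := isProbabilityMeasure_stableMeasure ht
  have := isProbabilityMeasure_stableMeasure (add_pos hs ht)
  rw [← integral_stableMeasure (add_pos hs ht), ← stableMeasure_conv hs ht, integral_conv,
    integral_stableMeasure hs]
  · simp only [integral_stableMeasure ht]
  · rw [stableMeasure_conv hs ht]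
    exact Integrable.of_bound (C := M) hh.aestronglyMeasurable
      ((ae_stableMeasure_pos _).mono fun x hx => hM x hx)

end StableConvolution

section LaguerreHeatKernelLine

open ProbabilityTheory

/-- The `m`-th term in the expansion of the one-dimensional Laguerre heat kernel at time `-log r`
as a Poisson mixture of gamma densities. -/
noncomputable def laguerreHeatTerm (a r x y : ℝ) (m : ℕ) : ℝ :=
  exp (-(r * x / (1 - r))) * ((r * x / (1 - r)) ^ m / m.factorial) *
    gammaPDFReal (m + a + 1) (1 - r)⁻¹ y

/-- The one-dimensional Laguerre heat kernel at time `-log r`, as a density on `(0,∞)`. It is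
extended-real valued so that measurability and integration need no summability. -/
noncomputable def laguerreHeat (a r x y : ℝ) : ENNReal :=
  ∑' m : ℕ, ENNReal.ofReal (laguerreHeatTerm a r x y m)

/-- The closed form of the one-dimensional Laguerre heat kernel given by the Hille–Hardy formula. -/
noncomputable def hilleHardy (a r x y : ℝ) : ℝ :=
  (1 - r)⁻¹ * ((y / x) ^ (a / 2) * exp (-((r * x + y) / (1 - r)) - a * log r / 2) *
    besselI a (2 * √(r * x * y) / (1 - r)))

lemma measurable_laguerreHeatTerm (a : ℝ) (m : ℕ) :
    Measurable fun q : ℝ × ℝ × ℝ => laguerreHeatTerm a q.1 q.2.1 q.2.2 m := by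
  unfold laguerreHeatTerm gammaPDFReal
  exact Measurable.mul (by fun_prop)
    (Measurable.ite (measurableSet_le measurable_const (by fun_prop)) (by fun_prop) (by fun_prop))

lemma measurable_laguerreHeat (a : ℝ) :
    Measurable fun q : ℝ × ℝ × ℝ => laguerreHeat a q.1 q.2.1 q.2.2 :=
  Measurable.tsum fun m => (measurable_laguerreHeatTerm a m).ennreal_ofReal

variable {a : ℝ} (ha : -1 < a)
include ha

lemma natCast_add_add_one_pos (m : ℕ) : 0 < (m : ℝ) + a + 1 := by
  have : (0 : ℝ) ≤ m := m.cast_nonneg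
  linarith

lemma exists_le_Gamma_natCast_add : ∃ c > 0, ∀ m : ℕ, c ≤ Gamma (m + a + 1) := by
  refine ⟨min (Gamma (a + 1)) (Gamma (a + 2)), lt_min (Gamma_pos_of_pos (by linarith))
    (Gamma_pos_of_pos (by linarith)), fun m => ?_⟩
  induction m with
  | zero => simp
  | succ m ih =>
    rcases Nat.eq_zero_or_pos m with rfl | hm
    · refine (min_le_right _ _).trans_eq ?_
      congr 1; push_cast; ring
    · have hm : (1 : ℝ) ≤ m := by exact_mod_cast hm
      have hpos := natCast_add_add_one_pos ha m
      have hGamma := Gamma_pos_of_pos hpos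
      rw [show ((m + 1 : ℕ) : ℝ) + a + 1 = (m + a + 1) + 1 by push_cast; ring,
        Gamma_add_one hpos.ne']
      nlinarith

lemma summable_pow_div_factorial_mul_Gamma {ρ : ℝ} (hρ : 0 ≤ ρ) :
    Summable fun m : ℕ => ρ ^ m / (m.factorial * Gamma (m + a + 1)) := by
  obtain ⟨c, hc, hle⟩ := exists_le_Gamma_natCast_add ha
  refine ((Real.summable_pow_div_factorial ρ).mul_left c⁻¹).of_nonneg_of_le (fun m => ?_)
    (fun m => ?_)
  · have := hc.trans_le (hle m)
    positivity
  · have := hle m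
    rw [inv_mul_eq_div, div_div, mul_comm _ c, mul_comm _ (Gamma _)]
    gcongr

omit ha in
lemma gammaPDFReal_mul_exp_neg_mul {s b p : ℝ} (hb : 0 < b) (hp : 0 ≤ p) (y : ℝ) :
    gammaPDFReal s b y * exp (-(p * y)) = (b / (b + p)) ^ s * gammaPDFReal s (b + p) y := by
  have hbp : 0 < b + p := by positivity
  unfold gammaPDFReal
  split_ifs
  · rw [div_rpow hb.le hbp.le, add_mul, neg_add, exp_add]
    field_simp
  · simp

omit ha in
lemma setLIntegral_Ioi_gammaPDF {s b : ℝ} (hs : 0 < s) (hb : 0 < b) :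
    ∫⁻ y in Ioi 0, gammaPDF s b y = 1 := by
  rw [setLIntegral_congr Ioi_ae_eq_Ici, setLIntegral_eq_of_support_subset,
    lintegral_gammaPDF_eq_one hs hb]
  exact Function.support_subset_iff'.2 fun y hy => gammaPDF_of_neg (not_le.1 hy)

variable {r x : ℝ} (hr0 : 0 < r) (hr1 : r < 1) (hx : 0 < x)
include hr0 hr1 hx

lemma laguerreHeatTerm_nonneg (y : ℝ) (m : ℕ) : 0 ≤ laguerreHeatTerm a r x y m := by
  have h1r : 0 < 1 - r := sub_pos.2 hr1
  have := gammaPDFReal_nonneg (natCast_add_add_one_pos ha m) (inv_pos.2 h1r) y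
  unfold laguerreHeatTerm
  positivity

omit ha in
lemma laguerreHeatTerm_eq_besselI_term {y : ℝ} (hy : 0 < y) (m : ℕ) :
    laguerreHeatTerm a r x y m =
      (1 - r)⁻¹ * ((y / x) ^ (a / 2) * exp (-((r * x + y) / (1 - r)) - a * log r / 2) *
        ((2 * √(r * x * y) / (1 - r) / 2) ^ (2 * (m : ℝ) + a) /
          (Nat.factorial m * Gamma (m + a + 1)))) := by
  set b := (1 - r)⁻¹ with hb
  have hb0 : 0 < b := inv_pos.2 (sub_pos.2 hr1)
  have hbessel : (2 * √(r * x * y) / (1 - r) / 2) ^ (2 * (m : ℝ) + a) =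
      (r * x * y) ^ m * (r * x * y) ^ (a / 2) * (b ^ m * b ^ (m + a)) := by
    rw [show 2 * √(r * x * y) / (1 - r) / 2 = √(r * x * y) * b by rw [hb]; ring,
      mul_rpow (by positivity) hb0.le, sqrt_eq_rpow, ← rpow_mul (by positivity),
      show 1 / 2 * (2 * (m : ℝ) + a) = m + a / 2 by ring, rpow_add (by positivity), rpow_natCast,
      show 2 * (m : ℝ) + a = m + (m + a) by ring, rpow_add hb0, rpow_natCast]
  have hexp : exp (-((r * x + y) / (1 - r)) - a * log r / 2) =
      exp (-(r * x / (1 - r))) * exp (-(b * y)) * (r ^ (a / 2))⁻¹ := by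
    rw [← rpow_neg hr0.le, rpow_def_of_pos hr0, ← exp_add, ← exp_add, hb]
    congr 1; ring
  have hpow : (y / x) ^ (a / 2) * (r ^ (a / 2))⁻¹ * (r * x * y) ^ (a / 2) = y ^ a := by
    rw [← inv_rpow hr0.le, ← mul_rpow (by positivity) (by positivity),
      ← mul_rpow (by positivity) (by positivity),
      show y / x * r⁻¹ * (r * x * y) = y * y by field_simp, mul_rpow hy.le hy.le, ← rpow_add hy,
      add_halves]
  rw [hbessel, hexp, laguerreHeatTerm, gammaPDFReal, if_pos hy.le, add_sub_cancel_right,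
    rpow_add hy, rpow_natCast, ← hpow, add_assoc, ← add_assoc (m : ℝ) a, rpow_add_one hb0.ne',
    div_eq_mul_inv (r * x) (1 - r), ← hb]
  generalize Gamma (m + a + 1) = g
  rw [div_eq_mul_inv _ ((m.factorial : ℝ) * g), mul_inv, div_eq_mul_inv _ g]
  ring

lemma hasSum_laguerreHeatTerm {y : ℝ} (hy : 0 < y) :
    HasSum (laguerreHeatTerm a r x y) (hilleHardy a r x y) := by
  have : 0 < 1 - r := sub_pos.2 hr1
  have hbessel : Summable fun m : ℕ => (2 * √(r * x * y) / (1 - r) / 2) ^ (2 * (m : ℝ) + a) /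
      (Nat.factorial m * Gamma (m + a + 1)) := by
    set z := 2 * √(r * x * y) / (1 - r) / 2
    have hz : 0 < z := by positivity
    refine ((summable_pow_div_factorial_mul_Gamma ha (sq_nonneg z)).mul_left (z ^ a)).congr
      fun m => ?_
    rw [add_comm (2 * (m : ℝ)), rpow_add hz,
      show 2 * (m : ℝ) = ((2 * m : ℕ) : ℝ) by push_cast; ring, rpow_natCast, pow_mul, mul_div_assoc]
  rw [funext (laguerreHeatTerm_eq_besselI_term hr0 hr1 hx hy)]
  exact (hbessel.hasSum.mul_left _).mul_left _

lemma laguerreHeat_eq_ofReal {y : ℝ} (hy : 0 < y) :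
    laguerreHeat a r x y = ENNReal.ofReal (hilleHardy a r x y) := by
  have hsum := hasSum_laguerreHeatTerm ha hr0 hr1 hx hy
  rw [laguerreHeat, ← ENNReal.ofReal_tsum_of_nonneg (laguerreHeatTerm_nonneg ha hr0 hr1 hx y)
    hsum.summable, hsum.tsum_eq]

lemma hilleHardy_nonneg {y : ℝ} (hy : 0 < y) : 0 ≤ hilleHardy a r x y :=
  (hasSum_laguerreHeatTerm ha hr0 hr1 hx hy).nonneg (laguerreHeatTerm_nonneg ha hr0 hr1 hx y)

omit ha hr0 in
lemma rpow_mul_exp_neg_mul_hilleHardy_comm {y : ℝ} (hy : 0 < y) :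
    x ^ a * exp (-x) * hilleHardy a r x y = y ^ a * exp (-y) * hilleHardy a r y x := by
  have hpow {u v : ℝ} (hu : 0 < u) (hv : 0 < v) :
      u ^ a * (v / u) ^ (a / 2) = (u * v) ^ (a / 2) := by
    rw [div_rpow hv.le hu.le, mul_rpow hu.le hv.le, ← add_halves a, rpow_add hu, add_halves]
    field_simp
  have hexp (u v : ℝ) : exp (-u) * exp (-((r * u + v) / (1 - r)) - a * log r / 2) =
      exp (-((u + v) / (1 - r)) - a * log r / 2) := by
    rw [← exp_add]
    congr 1
    have : 1 - r ≠ 0 := (sub_pos.2 hr1).ne'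
    field_simp
    ring
  have hsymm {u v : ℝ} (hu : 0 < u) (hv : 0 < v) : u ^ a * exp (-u) * hilleHardy a r u v =
      (1 - r)⁻¹ * ((u * v) ^ (a / 2) * exp (-((u + v) / (1 - r)) - a * log r / 2) *
        besselI a (2 * √(r * u * v) / (1 - r))) := by
    rw [← hpow hu hv, ← hexp, hilleHardy]
    ring
  rw [hsymm hx hy, hsymm hy hx, mul_comm x y, add_comm x y, mul_right_comm r x y]

variable {p : ℝ} (hp : 0 ≤ p)
include hp

lemma lintegral_laguerreHeatTerm_mul_exp (m : ℕ) :
    ∫⁻ y in Ioi 0, ENNReal.ofReal (laguerreHeatTerm a r x y m) *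
        ENNReal.ofReal (exp (-(p * y))) =
      ENNReal.ofReal (exp (-(r * x / (1 - r))) * (1 + p * (1 - r)) ^ (-(a + 1)) *
        ((r * x / (1 - r) / (1 + p * (1 - r))) ^ m / m.factorial)) := by
  have h1r : 0 < 1 - r := sub_pos.2 hr1
  set θ := r * x / (1 - r)
  set c := 1 + p * (1 - r) with hc
  have hc0 : 0 < c := by positivity
  have hs := natCast_add_add_one_pos ha m
  have hrate : (1 - r)⁻¹ / ((1 - r)⁻¹ + p) = c⁻¹ := by rw [hc]; field_simp
  have hfactor (y : ℝ) :
      ENNReal.ofReal (laguerreHeatTerm a r x y m) * ENNReal.ofReal (exp (-(p * y))) =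
        ENNReal.ofReal (exp (-θ) * (θ ^ m / m.factorial) * c⁻¹ ^ (m + a + 1)) *
          gammaPDF (m + a + 1) ((1 - r)⁻¹ + p) y := by
    rw [← ENNReal.ofReal_mul (laguerreHeatTerm_nonneg ha hr0 hr1 hx y m), gammaPDF,
      ← ENNReal.ofReal_mul (by positivity), laguerreHeatTerm, mul_assoc,
      gammaPDFReal_mul_exp_neg_mul (by positivity) hp, hrate]
    congr 1; ring
  have hpow : c⁻¹ ^ (m + a + 1) = c ^ (-(a + 1)) * (c ^ m)⁻¹ := by
    rw [inv_rpow hc0.le, add_assoc, rpow_add hc0, rpow_natCast, mul_inv, rpow_neg hc0.le,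
      mul_comm]
  simp_rw [hfactor]
  have hmeas (s b : ℝ) : Measurable (gammaPDF s b) :=
    (measurable_gammaPDFReal s b).ennreal_ofReal
  rw [lintegral_const_mul _ (hmeas _ _), setLIntegral_Ioi_gammaPDF hs (by positivity),
    mul_one, hpow, div_pow θ c]
  congr 1; ring

lemma lintegral_laguerreHeat_mul_exp :
    ∫⁻ y in Ioi 0, laguerreHeat a r x y * ENNReal.ofReal (exp (-(p * y))) =
      ENNReal.ofReal ((1 + p * (1 - r)) ^ (-(a + 1)) *
        exp (-(r * p / (1 + p * (1 - r)) * x))) := by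
  have h1r : 0 < 1 - r := sub_pos.2 hr1
  have hmeas (m : ℕ) : Measurable fun y =>
      ENNReal.ofReal (laguerreHeatTerm a r x y m) * ENNReal.ofReal (exp (-(p * y))) :=
    ((measurable_laguerreHeatTerm a m).comp (f := fun y : ℝ => (r, x, y))
      (by fun_prop)).ennreal_ofReal.mul (by fun_prop)
  have hexp (θ : ℝ) : ∑' m : ℕ, θ ^ m / m.factorial = exp θ := by
    rw [(NormedSpace.expSeries_div_hasSum_exp θ).tsum_eq, ← Real.exp_eq_exp_ℝ]
  simp_rw [laguerreHeat, ← ENNReal.tsum_mul_right]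
  rw [lintegral_tsum fun m => (hmeas m).aemeasurable,
    tsum_congr (lintegral_laguerreHeatTerm_mul_exp ha hr0 hr1 hx hp),
    ← ENNReal.ofReal_tsum_of_nonneg (fun m => by positivity)
      ((Real.summable_pow_div_factorial _).mul_left _), tsum_mul_left, hexp, mul_right_comm,
    ← exp_add, mul_comm]
  congr 3
  field_simp
  ring

end LaguerreHeatKernelLine

section LaguerreHeatKernel

open ProbabilityTheory

variable {d : ℕ}

lemma lintegral_fin_prod_eq_prod (μ : Fin d → Measure ℝ) [∀ i, SigmaFinite (μ i)]
    {f : Fin d → ℝ → ENNReal} (hf : ∀ i, Measurable (f i)) :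
    ∫⁻ x, ∏ i, f i (x i) ∂Measure.pi μ = ∏ i, ∫⁻ x, f i x ∂μ i := by
  induction d with
  | zero => simp
  | succ n ih =>
    have hprod : Measurable fun x : Fin (n + 1) → ℝ => ∏ i, f i (x i) := by fun_prop
    rw [← ((measurePreserving_piFinSuccAbove μ 0).symm).lintegral_comp hprod, Fin.prod_univ_succ,
      ← ih _ fun i => hf i.succ, ← lintegral_prod_mul (hf 0).aemeasurable
      (Finset.measurable_fun_prod _ fun i _ =>
        (hf i.succ).comp (measurable_pi_apply i)).aemeasurable]
    refine lintegral_congr fun x => ?_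
    rw [Fin.prod_univ_succ]
    simp [MeasurableEquiv.piFinSuccAbove_symm_apply]

lemma volume_restrict_posOrthant (d : ℕ) :
    (volume : Measure (Fin d → ℝ)).restrict (posOrthant d) =
      Measure.pi fun _ => (volume : Measure ℝ).restrict (Ioi 0) := by
  rw [posOrthant, volume_pi, Measure.restrict_pi_pi]

/-- The density of the `d`-dimensional Laguerre heat kernel at time `τ`. -/
noncomputable def laguerreHeatDensity (α : Fin d → ℝ) (τ : ℝ) (x y : Fin d → ℝ) : NNReal :=
  ∏ j, (laguerreHeat (α j) (exp (-τ)) (x j) (y j)).toNNReal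

lemma measurable_laguerreHeatDensity (α : Fin d → ℝ) :
    Measurable fun q : (ℝ × (Fin d → ℝ)) × (Fin d → ℝ) =>
      laguerreHeatDensity α q.1.1 q.1.2 q.2 := by
  refine Finset.measurable_prod _ fun j _ => ?_
  exact ((measurable_laguerreHeat (α j)).comp
    (f := fun q : (ℝ × (Fin d → ℝ)) × (Fin d → ℝ) =>
      (exp (-q.1.1), q.1.2 j, q.2 j)) (by fun_prop)).ennreal_toNNReal

lemma measurable_laguerreHeatDensity_right (α : Fin d → ℝ) (τ : ℝ) (x : Fin d → ℝ) :
    Measurable (laguerreHeatDensity α τ x) :=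
  (measurable_laguerreHeatDensity α).comp (f := fun y => ((τ, x), y)) (by fun_prop)

/-- The Laguerre heat semigroup as a Markov kernel, jointly in the time and space variables. -/
noncomputable def laguerreHeatKernel (α : Fin d → ℝ) :
    Kernel (ℝ × (Fin d → ℝ)) (Fin d → ℝ) :=
  (Kernel.const _ (volume.restrict (posOrthant d))).withDensity
    fun q y => (laguerreHeatDensity α q.1 q.2 y : ENNReal)

instance (α : Fin d → ℝ) : IsSFiniteKernel (laguerreHeatKernel α) := by
  unfold laguerreHeatKernel; infer_instance

lemma laguerreHeatKernel_apply (α : Fin d → ℝ) (q : ℝ × (Fin d → ℝ)) :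
    laguerreHeatKernel α q = (volume.restrict (posOrthant d)).withDensity
      fun y => (laguerreHeatDensity α q.1 q.2 y : ENNReal) := by
  rw [laguerreHeatKernel, Kernel.withDensity_apply _
    (measurable_laguerreHeatDensity α).coe_nnreal_ennreal, Kernel.const_apply]

lemma lintegral_laguerreHeatKernel (α : Fin d → ℝ) (q : ℝ × (Fin d → ℝ))
    {g : (Fin d → ℝ) → ENNReal} (hg : Measurable g) :
    ∫⁻ y, g y ∂laguerreHeatKernel α q =
      ∫⁻ y in posOrthant d, laguerreHeatDensity α q.1 q.2 y * g y := by
  rw [laguerreHeatKernel, Kernel.lintegral_withDensity _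
    (measurable_laguerreHeatDensity α).coe_nnreal_ennreal _ hg, Kernel.const_apply]

lemma ae_laguerreHeatKernel_mem_posOrthant (α : Fin d → ℝ) (q : ℝ × (Fin d → ℝ)) :
    ∀ᵐ y ∂laguerreHeatKernel α q, y ∈ posOrthant d := by
  rw [laguerreHeatKernel_apply]
  exact (withDensity_absolutelyContinuous _ _).ae_le (ae_restrict_mem (measurableSet_posOrthant d))

/-- The Laguerre heat semigroup maps `y ↦ e^{-p·y}` to a multiple of `x ↦ e^{-q·x}`, where each
`q j` is `laguerreLaplaceFlow τ (p j)`. -/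
noncomputable def laguerreLaplaceFlow (τ p : ℝ) : ℝ := exp (-τ) * p / (1 + p * (1 - exp (-τ)))

section LaplaceFlow

variable {σ τ p : ℝ} (hτ : 0 < τ)
include hτ

lemma one_sub_exp_neg_pos : 0 < 1 - exp (-τ) := sub_pos.2 (exp_lt_one_iff.2 (neg_lt_zero.2 hτ))

variable (hp : 0 ≤ p)
include hp

lemma laguerreLaplaceFlow_denom_pos : 0 < 1 + p * (1 - exp (-τ)) := by
  have := one_sub_exp_neg_pos hτ
  positivity

lemma laguerreLaplaceFlow_nonneg : 0 ≤ laguerreLaplaceFlow τ p :=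
  div_nonneg (by positivity) (laguerreLaplaceFlow_denom_pos hτ hp).le

lemma laguerreLaplaceFlow_denom_mul (σ : ℝ) :
    (1 + p * (1 - exp (-τ))) * (1 + laguerreLaplaceFlow τ p * (1 - exp (-σ))) =
      1 + p * (1 - exp (-(σ + τ))) := by
  have := (laguerreLaplaceFlow_denom_pos hτ hp).ne'
  rw [laguerreLaplaceFlow, neg_add, exp_add]
  field_simp
  ring

lemma laguerreLaplaceFlow_add (hσ : 0 < σ) :
    laguerreLaplaceFlow σ (laguerreLaplaceFlow τ p) = laguerreLaplaceFlow (σ + τ) p := by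
  have hden := (laguerreLaplaceFlow_denom_pos hτ hp).ne'
  have hden' := (laguerreLaplaceFlow_denom_pos hσ (laguerreLaplaceFlow_nonneg hτ hp)).ne'
  rw [laguerreLaplaceFlow, laguerreLaplaceFlow.eq_def (σ + τ),
    ← laguerreLaplaceFlow_denom_mul hτ hp σ, neg_add, exp_add, div_eq_div_iff hden' (by positivity)]
  rw [laguerreLaplaceFlow] at hden' ⊢
  field_simp

end LaplaceFlow

variable {α : Fin d → ℝ} (hα : ∀ j, -1 < α j)
include hα

lemma coe_laguerreHeatDensity_eq_prod {τ : ℝ} (hτ : 0 < τ) {x y : Fin d → ℝ}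
    (hx : x ∈ posOrthant d) (hy : y ∈ posOrthant d) :
    (laguerreHeatDensity α τ x y : ENNReal) =
      ∏ j, laguerreHeat (α j) (exp (-τ)) (x j) (y j) := by
  rw [laguerreHeatDensity, ENNReal.ofNNReal_finsetProd]
  refine Finset.prod_congr rfl fun j _ => ENNReal.coe_toNNReal ?_
  rw [laguerreHeat_eq_ofReal (hα j) (exp_pos _) (exp_lt_one_iff.2 (neg_lt_zero.2 hτ))
    (pos_of_mem_posOrthant hx j) (pos_of_mem_posOrthant hy j)]
  exact ENNReal.ofReal_ne_top

lemma coe_real_laguerreHeatDensity_eq_prod {τ : ℝ} (hτ : 0 < τ) {x y : Fin d → ℝ}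
    (hx : x ∈ posOrthant d) (hy : y ∈ posOrthant d) :
    (laguerreHeatDensity α τ x y : ℝ) = ∏ j, hilleHardy (α j) (exp (-τ)) (x j) (y j) := by
  rw [laguerreHeatDensity, NNReal.coe_prod]
  refine Finset.prod_congr rfl fun j _ => ?_
  have hr := exp_lt_one_iff.2 (neg_lt_zero.2 hτ)
  have hxj := pos_of_mem_posOrthant hx j
  have hyj := pos_of_mem_posOrthant hy j
  rw [laguerreHeat_eq_ofReal (hα j) (exp_pos _) hr hxj hyj, ENNReal.coe_toNNReal_eq_toReal,
    ENNReal.toReal_ofReal (hilleHardy_nonneg (hα j) (exp_pos _) hr hxj hyj)]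

lemma lintegral_laguerreHeatKernel_exp_neg {τ : ℝ} (hτ : 0 < τ) {x : Fin d → ℝ}
    (hx : x ∈ posOrthant d) {p : Fin d → ℝ} (hp : ∀ j, 0 ≤ p j) :
    ∫⁻ y, ENNReal.ofReal (exp (-∑ j, p j * y j)) ∂laguerreHeatKernel α (τ, x) =
      ENNReal.ofReal (∏ j, (1 + p j * (1 - exp (-τ))) ^ (-(α j + 1))) *
        ENNReal.ofReal (exp (-∑ j, laguerreLaplaceFlow τ (p j) * x j)) := by
  have hexp (q z : Fin d → ℝ) : ENNReal.ofReal (exp (-∑ j, q j * z j)) =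
      ∏ j, ENNReal.ofReal (exp (-(q j * z j))) := by
    rw [← ENNReal.ofReal_prod_of_nonneg fun j _ => (exp_pos _).le, ← exp_sum,
      Finset.sum_neg_distrib]
  have hmeas (j : Fin d) : Measurable fun y => laguerreHeat (α j) (exp (-τ)) (x j) y *
      ENNReal.ofReal (exp (-(p j * y))) :=
    ((measurable_laguerreHeat (α j)).comp (f := fun y : ℝ => (exp (-τ), x j, y))
      (by fun_prop)).mul (by fun_prop)
  have hpow (j : Fin d) : 0 ≤ (1 + p j * (1 - exp (-τ))) ^ (-(α j + 1)) :=
    rpow_nonneg (laguerreLaplaceFlow_denom_pos hτ (hp j)).le _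
  rw [lintegral_laguerreHeatKernel _ _ (by fun_prop), setLIntegral_congr_fun
    (measurableSet_posOrthant d) fun y hy => by
      rw [coe_laguerreHeatDensity_eq_prod hα hτ hx hy, hexp, ← Finset.prod_mul_distrib],
    volume_restrict_posOrthant, lintegral_fin_prod_eq_prod _ hmeas, hexp,
    ENNReal.ofReal_prod_of_nonneg fun j _ => hpow j, ← Finset.prod_mul_distrib]
  refine Finset.prod_congr rfl fun j _ => ?_
  rw [lintegral_laguerreHeat_mul_exp (hα j) (exp_pos _) (exp_lt_one_iff.2 (neg_lt_zero.2 hτ))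
    (pos_of_mem_posOrthant hx j) (hp j), ENNReal.ofReal_mul (hpow j)]
  rfl

lemma isProbabilityMeasure_laguerreHeatKernel {τ : ℝ} (hτ : 0 < τ) {x : Fin d → ℝ}
    (hx : x ∈ posOrthant d) : IsProbabilityMeasure (laguerreHeatKernel α (τ, x)) :=
  ⟨by simpa [laguerreLaplaceFlow] using
    lintegral_laguerreHeatKernel_exp_neg hα hτ hx (p := 0) (by simp)⟩

section Semigroup

variable {σ τ : ℝ} (hσ : 0 < σ) (hτ : 0 < τ) {x : Fin d → ℝ} (hx : x ∈ posOrthant d)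
include hσ hτ hx

lemma lintegral_laguerreHeatKernel_comp_exp_neg {p : Fin d → ℝ} (hp : ∀ j, 0 ≤ p j) :
    ∫⁻ y, ENNReal.ofReal (exp (-∑ j, p j * y j))
        ∂((laguerreHeatKernel α).sectR τ ∘ₖ (laguerreHeatKernel α).sectR σ) x =
      ∫⁻ y, ENNReal.ofReal (exp (-∑ j, p j * y j)) ∂laguerreHeatKernel α (σ + τ, x) := by
  have hflow (j : Fin d) := laguerreLaplaceFlow_nonneg hτ (hp j)
  have hden (j : Fin d) := (laguerreLaplaceFlow_denom_pos hτ (hp j)).le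
  have hden' (j : Fin d) := (laguerreLaplaceFlow_denom_pos hσ (hflow j)).le
  rw [Kernel.lintegral_comp _ _ _ (by fun_prop),
    lintegral_laguerreHeatKernel_exp_neg hα (add_pos hσ hτ) hx hp]
  simp only [Kernel.sectR_apply]
  rw [lintegral_congr_ae ((ae_laguerreHeatKernel_mem_posOrthant α (σ, x)).mono fun y hy =>
      lintegral_laguerreHeatKernel_exp_neg hα hτ hy hp),
    lintegral_const_mul _ (by fun_prop), lintegral_laguerreHeatKernel_exp_neg hα hσ hx hflow,
    ← mul_assoc, ← ENNReal.ofReal_mul (Finset.prod_nonneg fun j _ => rpow_nonneg (hden j) _),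
    ← Finset.prod_mul_distrib]
  simp_rw [← mul_rpow (hden _) (hden' _), laguerreLaplaceFlow_denom_mul hτ (hp _),
    laguerreLaplaceFlow_add hτ (hp _) hσ]

lemma laguerreHeatKernel_comp :
    ((laguerreHeatKernel α).sectR τ ∘ₖ (laguerreHeatKernel α).sectR σ) x =
      laguerreHeatKernel α (σ + τ, x) := by
  have := isProbabilityMeasure_laguerreHeatKernel hα (add_pos hσ hτ) hx
  have hprob : IsProbabilityMeasure
      (((laguerreHeatKernel α).sectR τ ∘ₖ (laguerreHeatKernel α).sectR σ) x) :=
    ⟨by simpa using lintegral_laguerreHeatKernel_comp_exp_neg hα hσ hτ hx (p := 0) (by simp)⟩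
  refine measure_ext_of_integral_exp_neg_sum
    (Kernel.ae_comp_of_ae_ae (measurableSet_posOrthant d) (ae_of_all _ fun y =>
      ae_laguerreHeatKernel_mem_posOrthant α (τ, y)))
    (ae_laguerreHeatKernel_mem_posOrthant α _) fun p => ?_
  have hlint (μ : Measure (Fin d → ℝ)) : ∫ y, exp (-∑ j, (p j : ℝ) * y j) ∂μ =
      (∫⁻ y, ENNReal.ofReal (exp (-∑ j, (p j : ℝ) * y j)) ∂μ).toReal :=
    integral_eq_lintegral_of_nonneg_ae (ae_of_all _ fun y => (exp_pos _).le)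
      (Measurable.aestronglyMeasurable (by fun_prop))
  rw [hlint, hlint,
    lintegral_laguerreHeatKernel_comp_exp_neg hα hσ hτ hx fun j => Nat.cast_nonneg (p j)]

end Semigroup

end LaguerreHeatKernel

section LaguerreHeatOp

open ProbabilityTheory

variable {d : ℕ} {α : Fin d → ℝ} {f : (Fin d → ℝ) → ℝ} {M σ τ : ℝ} {x : Fin d → ℝ}

/-- The Laguerre heat semigroup acting on functions. -/
noncomputable def laguerreHeatOp (α : Fin d → ℝ) (f : (Fin d → ℝ) → ℝ) (τ : ℝ)
    (x : Fin d → ℝ) : ℝ := ∫ y, f y ∂laguerreHeatKernel α (τ, x)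

lemma laguerreHeatOp_eq_setIntegral (α : Fin d → ℝ) (f : (Fin d → ℝ) → ℝ) (τ : ℝ)
    (x : Fin d → ℝ) :
    laguerreHeatOp α f τ x = ∫ y in posOrthant d, (laguerreHeatDensity α τ x y : ℝ) * f y := by
  rw [laguerreHeatOp, laguerreHeatKernel_apply, integral_withDensity_eq_integral_smul
    (measurable_laguerreHeatDensity_right α τ x)]
  rfl

lemma measurable_laguerreHeatOp (α : Fin d → ℝ) (hf : Measurable f) :
    Measurable fun q : ℝ × (Fin d → ℝ) => laguerreHeatOp α f q.1 q.2 :=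
  (hf.stronglyMeasurable.integral_kernel (κ := laguerreHeatKernel α)).measurable

lemma measurable_laguerreHeatOp_time (α : Fin d → ℝ) (hf : Measurable f) (x : Fin d → ℝ) :
    Measurable fun τ => laguerreHeatOp α f τ x :=
  (measurable_laguerreHeatOp α hf).comp measurable_prodMk_right

variable (hα : ∀ j, -1 < α j)
include hα

lemma abs_laguerreHeatOp_le (hM : ∀ y ∈ posOrthant d, |f y| ≤ M) (hτ : 0 < τ)
    (hx : x ∈ posOrthant d) : |laguerreHeatOp α f τ x| ≤ M := by
  have := isProbabilityMeasure_laguerreHeatKernel hα hτ hx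
  simpa [laguerreHeatOp] using norm_integral_le_of_norm_le_const (f := f) (C := M)
    ((ae_laguerreHeatKernel_mem_posOrthant α (τ, x)).mono hM)

lemma integrable_laguerreHeatKernel (hf : Measurable f) (hM : ∀ y ∈ posOrthant d, |f y| ≤ M)
    (hτ : 0 < τ) (hx : x ∈ posOrthant d) : Integrable f (laguerreHeatKernel α (τ, x)) := by
  have := isProbabilityMeasure_laguerreHeatKernel hα hτ hx
  exact Integrable.of_bound hf.aestronglyMeasurable M
    ((ae_laguerreHeatKernel_mem_posOrthant α (τ, x)).mono hM)

lemma laguerreHeatOp_laguerreHeatOp (hf : Measurable f) (hM : ∀ y ∈ posOrthant d, |f y| ≤ M)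
    (hσ : 0 < σ) (hτ : 0 < τ) (hx : x ∈ posOrthant d) :
    laguerreHeatOp α (laguerreHeatOp α f τ) σ x = laguerreHeatOp α f (σ + τ) x := by
  unfold laguerreHeatOp
  rw [← laguerreHeatKernel_comp hα hσ hτ hx, Kernel.integral_comp]
  · simp only [Kernel.sectR_apply]
  · rw [laguerreHeatKernel_comp hα hσ hτ hx]
    exact integrable_laguerreHeatKernel hα hf hM (add_pos hσ hτ) hx

end LaguerreHeatOp

section Subordination

variable {d : ℕ} {α : Fin d → ℝ} {f : (Fin d → ℝ) → ℝ} {k : ℝ → ℝ} {M : ℝ} {x : Fin d → ℝ}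

/-- The kernel in the variables `x, y` obtained by averaging the Laguerre heat kernel over time
against the weight `k`. -/
noncomputable def subordKernel (α : Fin d → ℝ) (k : ℝ → ℝ) (x y : Fin d → ℝ) : ℝ :=
  ∫ τ in Ioi 0, k τ * (laguerreHeatDensity α τ x y : ℝ)

section Kernel

variable (hα : ∀ j, -1 < α j) (hk : IntegrableOn k (Ioi 0)) (hx : x ∈ posOrthant d)
include hα hk hx

lemma integrable_mul_laguerreHeatDensity_mul (hf : Measurable f)
    (hM : ∀ y ∈ posOrthant d, |f y| ≤ M) :
    Integrable (Function.uncurry fun (y : Fin d → ℝ) (τ : ℝ) =>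
      k τ * (laguerreHeatDensity α τ x y : ℝ) * f y)
      ((volume.restrict (posOrthant d)).prod (volume.restrict (Ioi 0))) := by
  have hD : Measurable fun q : (Fin d → ℝ) × ℝ => (laguerreHeatDensity α q.2 x q.1 : ℝ) :=
    ((measurable_laguerreHeatDensity α).comp
      (f := fun q : (Fin d → ℝ) × ℝ => ((q.2, x), q.1)) (by fun_prop)).coe_nnreal_real
  have hmeas : AEStronglyMeasurable (Function.uncurry fun (y : Fin d → ℝ) (τ : ℝ) =>
      k τ * (laguerreHeatDensity α τ x y : ℝ) * f y)
      ((volume.restrict (posOrthant d)).prod (volume.restrict (Ioi 0))) :=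
    (hk.aestronglyMeasurable.comp_snd.mul hD.aestronglyMeasurable).mul
      (hf.comp measurable_fst).aestronglyMeasurable
  refine (integrable_prod_iff' hmeas).2 ⟨?_, ?_⟩
  · refine (ae_restrict_mem measurableSet_Ioi).mono fun τ hτ => ?_
    have hint := integrable_laguerreHeatKernel hα hf hM hτ hx
    rw [laguerreHeatKernel_apply, integrable_withDensity_iff_integrable_smul
      (measurable_laguerreHeatDensity_right α τ x)] at hint
    refine (hint.const_mul (k τ)).congr (ae_of_all _ fun y => ?_)
    simp only [Function.uncurry, NNReal.smul_def, smul_eq_mul, mul_assoc]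
  · refine (integrableOn_mul_of_abs_le hk.abs (measurable_laguerreHeatOp_time α hf.abs x)
      fun τ hτ => abs_laguerreHeatOp_le hα (by simpa using hM) hτ hx).congr
      (ae_of_all _ fun τ => ?_)
    simp only [Function.uncurry, laguerreHeatOp_eq_setIntegral, norm_mul, Real.norm_eq_abs,
      NNReal.abs_eq, ← integral_const_mul, mul_assoc]

lemma integrableOn_subordKernel : IntegrableOn (subordKernel α k x) (posOrthant d) := by
  have hint := (integrable_mul_laguerreHeatDensity_mul hα hk hx
    (measurable_const (a := (1 : ℝ))) (M := 1) (by simp)).integral_prod_left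
  simp only [mul_one] at hint
  exact hint

lemma setIntegral_subordKernel_mul (hf : Measurable f) (hM : ∀ y ∈ posOrthant d, |f y| ≤ M) :
    ∫ y in posOrthant d, subordKernel α k x y * f y =
      ∫ τ in Ioi 0, k τ * laguerreHeatOp α f τ x := by
  simp only [subordKernel, laguerreHeatOp_eq_setIntegral, ← integral_mul_const,
    ← integral_const_mul]
  rw [integral_integral_swap (integrable_mul_laguerreHeatDensity_mul hα hk hx hf hM)]
  simp only [mul_assoc]

lemma setIntegral_subordKernel :
    ∫ y in posOrthant d, subordKernel α k x y = ∫ τ in Ioi 0, k τ := by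
  have hone := setIntegral_subordKernel_mul hα hk hx (measurable_const (a := (1 : ℝ))) (M := 1)
    (by simp)
  simp only [mul_one] at hone
  refine hone.trans (setIntegral_congr_fun measurableSet_Ioi fun τ hτ => ?_)
  have := isProbabilityMeasure_laguerreHeatKernel hα hτ hx
  simp [laguerreHeatOp]

lemma setIntegral_abs_subordKernel_le :
    ∫ y in posOrthant d, |subordKernel α k x y| ≤ ∫ τ in Ioi 0, |k τ| := by
  rw [← setIntegral_subordKernel hα hk.abs hx]
  refine integral_mono (integrableOn_subordKernel hα hk hx).abs
    (integrableOn_subordKernel hα hk.abs hx) fun y => ?_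
  simpa [subordKernel] using norm_integral_le_integral_norm (μ := volume.restrict (Ioi 0))
    fun τ => k τ * (laguerreHeatDensity α τ x y : ℝ)

end Kernel

lemma measurable_uncurry_subordKernel (α : Fin d → ℝ) (hk : Measurable k) :
    Measurable (Function.uncurry (subordKernel α k)) := by
  have hmeas : Measurable fun q : ((Fin d → ℝ) × (Fin d → ℝ)) × ℝ =>
      k q.2 * (laguerreHeatDensity α q.2 q.1.1 q.1.2 : ℝ) :=
    (hk.comp measurable_snd).mul ((measurable_laguerreHeatDensity α).comp
      (f := fun q : ((Fin d → ℝ) × (Fin d → ℝ)) × ℝ => ((q.2, q.1.1), q.1.2))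
      (by fun_prop)).coe_nnreal_real
  exact (hmeas.stronglyMeasurable.integral_prod_right' (ν := volume.restrict (Ioi 0))).measurable

lemma exp_neg_image_Ioi : (fun τ : ℝ => exp (-τ)) '' Ioi 0 = Ioo 0 1 := by
  rw [← image_image exp, image_neg_Ioi, neg_zero]
  ext r
  constructor
  · rintro ⟨τ, hτ, rfl⟩
    exact ⟨exp_pos _, exp_lt_one_iff.2 hτ⟩
  · rintro ⟨h₀, h₁⟩
    exact ⟨log r, log_neg h₀ h₁, exp_log h₀⟩

lemma integral_Ioo_zero_one_eq_integral_exp_neg (g : ℝ → ℝ) :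
    ∫ r in Ioo 0 1, g r = ∫ τ in Ioi 0, exp (-τ) * g (exp (-τ)) := by
  have hderiv : ∀ τ ∈ Ioi (0 : ℝ),
      HasDerivWithinAt (fun τ : ℝ => exp (-τ)) (-exp (-τ)) (Ioi 0) τ :=
    fun τ _ => ((hasDerivAt_neg τ).exp.congr_deriv (by ring)).hasDerivWithinAt
  rw [← exp_neg_image_Ioi, integral_image_eq_integral_abs_deriv_smul measurableSet_Ioi hderiv
    (exp_injective.comp neg_injective).injOn]
  simp only [abs_neg, abs_of_pos (exp_pos _), smul_eq_mul]

lemma plKernel_eq_subordKernel (hα : ∀ j, -1 < α j) (t : ℝ) {y : Fin d → ℝ}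
    (hx : x ∈ posOrthant d) (hy : y ∈ posOrthant d) :
    plKernel d α t x y = subordKernel α (stableDensity t) x y := by
  rw [plKernel, integral_Ioo_zero_one_eq_integral_exp_neg, ← integral_const_mul]
  refine setIntegral_congr_fun measurableSet_Ioi fun τ hτ => ?_
  have hτ' : 0 < τ := hτ
  have hden := (pow_pos (one_sub_exp_neg_pos hτ') d).ne'
  have hexp := (exp_pos (-τ)).ne'
  have hpow := (rpow_pos_of_pos hτ' (3 / 2)).ne'
  have hgauss : t ^ 2 / (4 * -τ) = -(t ^ 2 / (4 * τ)) := by rw [mul_neg, div_neg]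
  simp only [coe_real_laguerreHeatDensity_eq_prod hα hτ' hx hy, hilleHardy,
    Finset.prod_mul_distrib, Finset.prod_const, Finset.card_univ, Fintype.card_fin, stableDensity,
    invGaussKernel, rpow_one, rpow_neg hτ'.le, log_exp, neg_neg, hgauss, inv_pow]
  field_simp

lemma plP_zero (d : ℕ) (α : Fin d → ℝ) (f : (Fin d → ℝ) → ℝ) (x : Fin d → ℝ) :
    plP d α 0 f x = f x := if_pos rfl

lemma plP_congr {g : (Fin d → ℝ) → ℝ} (h : EqOn f g (posOrthant d)) (t : ℝ)
    (hx : x ∈ posOrthant d) : plP d α t f x = plP d α t g x := by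
  unfold plP
  rw [h hx, setIntegral_congr_fun (measurableSet_posOrthant d) fun y hy => by rw [h hy]]

section PoissonSemigroup

variable (hα : ∀ j, -1 < α j) (hf : Measurable f) (hM : ∀ y ∈ posOrthant d, |f y| ≤ M)
include hα hf hM

lemma plP_eq_integral_stableDensity {t : ℝ} (ht : 0 < t) (hx : x ∈ posOrthant d) :
    plP d α t f x = ∫ τ in Ioi 0, stableDensity t τ * laguerreHeatOp α f τ x := by
  rw [plP, if_neg ht.ne',
    ← setIntegral_subordKernel_mul hα (integrableOn_stableDensity ht) hx hf hM]
  exact setIntegral_congr_fun (measurableSet_posOrthant d) fun y hy => by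
    rw [plKernel_eq_subordKernel hα t hx hy]

lemma plP_eventuallyEq {t : ℝ} (ht : 0 < t) (hx : x ∈ posOrthant d) :
    (fun t => plP d α t f x) =ᶠ[𝓝 t]
      fun t => ∫ τ in Ioi 0, stableDensity t τ * laguerreHeatOp α f τ x := by
  filter_upwards [Ioi_mem_nhds ht] with s hs
  exact plP_eq_integral_stableDensity hα hf hM hs hx

lemma abs_plP_le {t : ℝ} (ht : 0 ≤ t) (hx : x ∈ posOrthant d) : |plP d α t f x| ≤ M := by
  rcases ht.eq_or_lt with rfl | ht
  · rw [plP_zero]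
    exact hM x hx
  · rw [plP_eq_integral_stableDensity hα hf hM ht hx]
    exact abs_integral_stableDensity_mul_le ht fun τ hτ => abs_laguerreHeatOp_le hα hM hτ hx

lemma smoothOnPos_plP (hx : x ∈ posOrthant d) : SmoothOnPos fun t => plP d α t f x :=
  fun t ht => (smoothOnPos_integral_stableDensity_mul (measurable_laguerreHeatOp_time α hf x)
    (fun _ hτ => abs_laguerreHeatOp_le hα hM hτ hx) t ht).congr_of_eventuallyEq
    (plP_eventuallyEq hα hf hM ht hx)

end PoissonSemigroup

lemma exists_kernel_iteratedDeriv_plP (hα : ∀ j, -1 < α j) (i : ℕ) :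
    ∃ C ≥ 0, ∀ t, 0 < t → ∀ x ∈ posOrthant d, ∃ w : (Fin d → ℝ) → ℝ,
      IntegrableOn w (posOrthant d) ∧ ∫ y in posOrthant d, |w y| ≤ C * t ^ (-(i : ℝ)) ∧
        ∀ g M, Measurable g → (∀ y ∈ posOrthant d, |g y| ≤ M) →
          iteratedDeriv i (fun t => plP d α t g x) t = ∫ y in posOrthant d, w y * g y := by
  obtain ⟨C, hC, hbound⟩ := exists_integral_abs_iteratedDeriv_stableDensity_le i
  refine ⟨C, hC, fun t ht x hx => ?_⟩
  have hint := integrableOn_iteratedDeriv_stableDensity i ht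
  refine ⟨subordKernel α (fun τ => iteratedDeriv i (fun t => stableDensity t τ) t) x,
    integrableOn_subordKernel hα hint hx,
    (setIntegral_abs_subordKernel_le hα hint hx).trans (hbound t ht), fun g M hg hM => ?_⟩
  rw [(plP_eventuallyEq hα hg hM ht hx).iteratedDeriv_eq,
    setIntegral_subordKernel_mul hα hint hx hg hM, iteratedDeriv_integral_stableDensity_mul
    (measurable_laguerreHeatOp_time α hg x) (fun τ hτ => abs_laguerreHeatOp_le hα hM hτ hx) i ht]

/-- A version of `plP` which is measurable in the time and space variables on the whole space,
and not only on the orthant, where it agrees with `plP`. -/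
noncomputable def subordinatedP (α : Fin d → ℝ) (f : (Fin d → ℝ) → ℝ) (t : ℝ)
    (x : Fin d → ℝ) : ℝ :=
  if t = 0 then f x else ∫ τ in Ioi 0, stableDensity t τ * laguerreHeatOp α f τ x

lemma subordinatedP_zero (α : Fin d → ℝ) (f : (Fin d → ℝ) → ℝ) : subordinatedP α f 0 = f :=
  funext fun _ => if_pos rfl

lemma measurable_subordinatedP (α : Fin d → ℝ) (hf : Measurable f) :
    Measurable fun q : ℝ × (Fin d → ℝ) => subordinatedP α f q.1 q.2 := by
  refine Measurable.ite (measurable_fst (measurableSet_singleton 0)) (hf.comp measurable_snd) ?_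
  have : Measurable fun p : (ℝ × (Fin d → ℝ)) × ℝ =>
      stableDensity p.1.1 p.2 * laguerreHeatOp α f p.2 p.1.2 :=
    (measurable_uncurry_stableDensity.comp
      (f := fun p : (ℝ × (Fin d → ℝ)) × ℝ => (p.1.1, p.2)) (by fun_prop)).mul
    ((measurable_laguerreHeatOp α hf).comp
      (f := fun p : (ℝ × (Fin d → ℝ)) × ℝ => (p.2, p.1.2)) (by fun_prop))
  exact (this.stronglyMeasurable.integral_prod_right' (ν := volume.restrict (Ioi 0))).measurable

section Semigroup

variable (hα : ∀ j, -1 < α j) (hf : Measurable f) (hM : ∀ y ∈ posOrthant d, |f y| ≤ M)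
include hα hf hM

lemma plP_eq_subordinatedP {t : ℝ} (ht : 0 ≤ t) (hx : x ∈ posOrthant d) :
    plP d α t f x = subordinatedP α f t x := by
  rcases ht.eq_or_lt with rfl | ht
  · rw [plP_zero, subordinatedP_zero]
  · rw [plP_eq_integral_stableDensity hα hf hM ht hx, subordinatedP, if_neg ht.ne']

lemma abs_subordinatedP_le {t : ℝ} (ht : 0 ≤ t) (hx : x ∈ posOrthant d) :
    |subordinatedP α f t x| ≤ M := by
  rw [← plP_eq_subordinatedP hα hf hM ht hx]
  exact abs_plP_le hα hf hM ht hx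

lemma integrable_stableDensity_mul_laguerreHeatOp {t σ : ℝ} (ht : 0 < t) (hσ : 0 < σ)
    (hx : x ∈ posOrthant d) :
    Integrable (Function.uncurry fun (y : Fin d → ℝ) (τ : ℝ) =>
      stableDensity t τ * laguerreHeatOp α f τ y)
      ((laguerreHeatKernel α (σ, x)).prod (volume.restrict (Ioi 0))) := by
  have := isProbabilityMeasure_laguerreHeatKernel hα hσ hx
  have hmeas : Measurable (Function.uncurry fun (y : Fin d → ℝ) (τ : ℝ) =>
      stableDensity t τ * laguerreHeatOp α f τ y) :=
    ((measurable_stableDensity t).comp measurable_snd).mul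
      ((measurable_laguerreHeatOp α hf).comp measurable_swap)
  refine Integrable.mono' (g := fun q => stableDensity t q.2 * M)
    (((integrableOn_stableDensity ht).comp_snd _).mul_const M) hmeas.aestronglyMeasurable ?_
  filter_upwards [Measure.quasiMeasurePreserving_fst.ae
      (ae_laguerreHeatKernel_mem_posOrthant α (σ, x)),
    Measure.quasiMeasurePreserving_snd.ae (ae_restrict_mem measurableSet_Ioi)] with q hq hτ
  rw [Function.uncurry, norm_mul, Real.norm_eq_abs, abs_of_nonneg (stableDensity_nonneg ht hτ)]
  exact mul_le_mul_of_nonneg_left (abs_laguerreHeatOp_le hα hM hτ hq) (stableDensity_nonneg ht hτ)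

lemma laguerreHeatOp_subordinatedP {t σ : ℝ} (ht : 0 < t) (hσ : 0 < σ) (hx : x ∈ posOrthant d) :
    laguerreHeatOp α (subordinatedP α f t) σ x =
      ∫ τ in Ioi 0, stableDensity t τ * laguerreHeatOp α f (σ + τ) x := by
  have := isProbabilityMeasure_laguerreHeatKernel hα hσ hx
  simp only [laguerreHeatOp.eq_def α (subordinatedP α f t), subordinatedP, if_neg ht.ne']
  rw [integral_integral_swap (integrable_stableDensity_mul_laguerreHeatOp hα hf hM ht hσ hx)]
  refine setIntegral_congr_fun measurableSet_Ioi fun τ hτ => ?_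
  rw [integral_const_mul, ← laguerreHeatOp_laguerreHeatOp hα hf hM hσ hτ hx, ← laguerreHeatOp]

lemma plP_subordinatedP {s t : ℝ} (hs : 0 < s) (ht : 0 ≤ t) (hx : x ∈ posOrthant d) :
    plP d α s (subordinatedP α f t) x = plP d α (s + t) f x := by
  rcases ht.eq_or_lt with rfl | ht
  · rw [add_zero, subordinatedP_zero]
  have hmeas : Measurable (subordinatedP α f t) :=
    (measurable_subordinatedP α hf).comp measurable_prodMk_left
  have hbound (y) (hy : y ∈ posOrthant d) : |subordinatedP α f t y| ≤ M :=
    abs_subordinatedP_le hα hf hM ht.le hy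
  rw [plP_eq_integral_stableDensity hα hmeas hbound hs hx,
    plP_eq_integral_stableDensity hα hf hM (add_pos hs ht) hx,
    ← integral_stableDensity_convolution hs ht (measurable_laguerreHeatOp_time α hf x)
      fun τ hτ => abs_laguerreHeatOp_le hα hM hτ hx]
  refine setIntegral_congr_fun measurableSet_Ioi fun σ hσ => ?_
  rw [laguerreHeatOp_subordinatedP hα hf hM ht hσ hx]

end Semigroup

end Subordination

section Recovery

variable {d : ℕ} {α : Fin d → ℝ} {f φ : (Fin d → ℝ) → ℝ} {M N : ℝ}

/-- The density with respect to Lebesgue measure of the measure `μ_α` which symmetrizes the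
Laguerre semigroup. -/
noncomputable def laguerreWeight (α : Fin d → ℝ) (x : Fin d → ℝ) : ℝ :=
  ∏ j, x j ^ α j * exp (-x j)

lemma measurable_laguerreWeight (α : Fin d → ℝ) : Measurable (laguerreWeight α) := by
  unfold laguerreWeight
  fun_prop

lemma laguerreWeight_pos (α : Fin d → ℝ) {x : Fin d → ℝ} (hx : x ∈ posOrthant d) :
    0 < laguerreWeight α x :=
  Finset.prod_pos fun j _ => mul_pos (rpow_pos_of_pos (pos_of_mem_posOrthant hx j) _) (exp_pos _)

lemma exp_neg_sum_le_one {p x : Fin d → ℝ} (hp : ∀ j, 0 ≤ p j) (hx : x ∈ posOrthant d) :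
    |exp (-∑ j, p j * x j)| ≤ 1 := by
  rw [abs_of_pos (exp_pos _), exp_le_one_iff, neg_nonpos]
  exact Finset.sum_nonneg fun j _ => mul_nonneg (hp j) (pos_of_mem_posOrthant hx j).le

lemma integral_withDensity_ofReal_exp_neg_sum {ν : Measure (Fin d → ℝ)} {h : (Fin d → ℝ) → ℝ}
    (hh : Integrable h ν) (p : Fin d → ℕ) :
    ∫ x, exp (-∑ j, (p j : ℝ) * x j) ∂ν.withDensity (fun x => ENNReal.ofReal (h x)) =
      ∫ x, exp (-∑ j, (p j : ℝ) * x j) * max (h x) 0 ∂ν := by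
  rw [integral_withDensity_eq_integral_toReal_smul₀ hh.aemeasurable.ennreal_ofReal
    (ae_of_all _ fun _ => ENNReal.ofReal_lt_top)]
  exact integral_congr_ae (ae_of_all _ fun x => mul_comm _ _)

lemma ae_eq_zero_of_integral_exp_neg_sum_mul_eq_zero {ν : Measure (Fin d → ℝ)}
    (hν : ∀ᵐ x ∂ν, x ∈ posOrthant d) {h : (Fin d → ℝ) → ℝ} (hh : Integrable h ν)
    (hzero : ∀ p : Fin d → ℕ, ∫ x, exp (-∑ j, (p j : ℝ) * x j) * h x ∂ν = 0) : h =ᵐ[ν] 0 := by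
  have hfin (g : (Fin d → ℝ) → ℝ) (hg : Integrable g ν) :
      IsFiniteMeasure (ν.withDensity fun x => ENNReal.ofReal (g x)) :=
    isFiniteMeasure_withDensity hg.lintegral_lt_top.ne
  have hneg : Integrable (fun x => -h x) ν := hh.neg
  have := hfin h hh
  have := hfin _ hneg
  have hexp (p : Fin d → ℕ) : ∀ᵐ x ∂ν, ‖exp (-∑ j, (p j : ℝ) * x j)‖ ≤ 1 :=
    hν.mono fun x hx => exp_neg_sum_le_one (fun j => Nat.cast_nonneg (p j)) hx
  have hint (p : Fin d → ℕ) (g : (Fin d → ℝ) → ℝ) (hg : Integrable g ν) :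
      Integrable (fun x => exp (-∑ j, (p j : ℝ) * x j) * g x) ν :=
    hg.bdd_mul (Measurable.aestronglyMeasurable (by fun_prop)) (hexp p)
  have heq : ν.withDensity (fun x => ENNReal.ofReal (h x)) =
      ν.withDensity (fun x => ENNReal.ofReal (-h x)) := by
    refine measure_ext_of_integral_exp_neg_sum ((withDensity_absolutelyContinuous _ _).ae_le hν)
      ((withDensity_absolutelyContinuous _ _).ae_le hν) fun p => sub_eq_zero.1 ?_
    rw [integral_withDensity_ofReal_exp_neg_sum hh, integral_withDensity_ofReal_exp_neg_sum hneg,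
      ← integral_sub (hint p _ hh.pos_part) (hint p _ hneg.pos_part)]
    simpa only [← mul_sub, max_zero_sub_max_neg_zero_eq_self] using hzero p
  filter_upwards [(withDensity_eq_iff hh.aemeasurable.ennreal_ofReal
    hneg.aemeasurable.ennreal_ofReal hh.lintegral_lt_top.ne).1 heq] with x hx
  have hmax := congr_arg ENNReal.toReal hx
  rw [ENNReal.toReal_ofReal', ENNReal.toReal_ofReal'] at hmax
  exact (max_zero_sub_max_neg_zero_eq_self (h x)).symm.trans (sub_eq_zero.2 hmax)

lemma laguerreWeight_mul_plKernel_comm (hα : ∀ j, -1 < α j) (t : ℝ) {x y : Fin d → ℝ}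
    (hx : x ∈ posOrthant d) (hy : y ∈ posOrthant d) :
    laguerreWeight α x * plKernel d α t x y = laguerreWeight α y * plKernel d α t y x := by
  simp only [plKernel_eq_subordKernel hα t hx hy, plKernel_eq_subordKernel hα t hy hx,
    subordKernel, ← integral_const_mul]
  refine setIntegral_congr_fun measurableSet_Ioi fun τ hτ => ?_
  simp only [mul_left_comm _ (stableDensity t τ), laguerreWeight,
    coe_real_laguerreHeatDensity_eq_prod hα hτ hx hy,
    coe_real_laguerreHeatDensity_eq_prod hα hτ hy hx, ← Finset.prod_mul_distrib]
  congr 1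
  exact Finset.prod_congr rfl fun j _ => rpow_mul_exp_neg_mul_hilleHardy_comm
    (exp_lt_one_iff.2 (neg_lt_zero.2 hτ)) (pos_of_mem_posOrthant hx j) (pos_of_mem_posOrthant hy j)

section Symmetry

variable (hα : ∀ j, -1 < α j)
include hα

lemma integrableOn_laguerreWeight : IntegrableOn (laguerreWeight α) (posOrthant d) := by
  rw [IntegrableOn, volume_restrict_posOrthant]
  refine Integrable.fintype_prod (f := fun j x => x ^ α j * exp (-x)) fun j => ?_
  have hgamma := Real.GammaIntegral_convergent (s := α j + 1) (by linarith [hα j])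
  simp only [add_sub_cancel_right, mul_comm] at hgamma
  exact hgamma

variable {t : ℝ} (ht : 0 < t)
include ht

lemma integrable_laguerreWeight_mul_plKernel :
    Integrable (Function.uncurry fun x y => laguerreWeight α x * plKernel d α t x y)
      ((volume.restrict (posOrthant d)).prod (volume.restrict (posOrthant d))) := by
  have hae : ∀ᵐ q ∂(volume.restrict (posOrthant d)).prod (volume.restrict (posOrthant d)),
      laguerreWeight α q.1 * subordKernel α (stableDensity t) q.1 q.2 =
        laguerreWeight α q.1 * plKernel d α t q.1 q.2 := by
    filter_upwards [Measure.quasiMeasurePreserving_fst.ae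
        (ae_restrict_mem (measurableSet_posOrthant d)),
      Measure.quasiMeasurePreserving_snd.ae (ae_restrict_mem (measurableSet_posOrthant d))]
      with q hx hy
    rw [plKernel_eq_subordKernel hα t hx hy]
  have hmeas : Measurable fun q : (Fin d → ℝ) × (Fin d → ℝ) =>
      laguerreWeight α q.1 * subordKernel α (stableDensity t) q.1 q.2 :=
    ((measurable_laguerreWeight α).comp measurable_fst).mul
      (measurable_uncurry_subordKernel α (measurable_stableDensity t))
  refine Integrable.congr ?_ hae
  refine (integrable_prod_iff hmeas.aestronglyMeasurable).2 ⟨?_, ?_⟩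
  · filter_upwards [ae_restrict_mem (measurableSet_posOrthant d)] with x hx
    exact (integrableOn_subordKernel hα (integrableOn_stableDensity ht) hx).const_mul _
  · refine (integrableOn_laguerreWeight hα).congr_fun (fun x hx => ?_) (measurableSet_posOrthant d)
    have hnonneg (y) : 0 ≤ subordKernel α (stableDensity t) x y :=
      setIntegral_nonneg measurableSet_Ioi fun τ hτ =>
        mul_nonneg (stableDensity_nonneg ht hτ) NNReal.zero_le_coe
    simp only [norm_mul, Real.norm_of_nonneg (laguerreWeight_pos α hx).le,
      Real.norm_of_nonneg (hnonneg _), integral_const_mul]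
    rw [setIntegral_subordKernel hα (integrableOn_stableDensity ht) hx, integral_stableDensity ht,
      mul_one]

variable (hf : Measurable f) (hM : ∀ y ∈ posOrthant d, |f y| ≤ M)
  (hφ : Measurable φ) (hN : ∀ y ∈ posOrthant d, |φ y| ≤ N)
include hf hM hφ hN

lemma integrable_laguerreWeight_mul_plKernel_mul :
    Integrable (Function.uncurry fun x y => laguerreWeight α x * plKernel d α t x y * (φ x * f y))
      ((volume.restrict (posOrthant d)).prod (volume.restrict (posOrthant d))) := by
  refine (integrable_laguerreWeight_mul_plKernel hα ht).mul_bdd (c := N * M)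
    ((hφ.comp measurable_fst).mul (hf.comp measurable_snd)).aestronglyMeasurable ?_
  filter_upwards [Measure.quasiMeasurePreserving_fst.ae
      (ae_restrict_mem (measurableSet_posOrthant d)),
    Measure.quasiMeasurePreserving_snd.ae (ae_restrict_mem (measurableSet_posOrthant d))]
    with q hx hy
  rw [norm_mul]
  exact mul_le_mul (hN _ hx) (hM _ hy) (abs_nonneg _) ((abs_nonneg _).trans (hN _ hx))

lemma setIntegral_laguerreWeight_mul_plP_symm :
    ∫ x in posOrthant d, laguerreWeight α x * (φ x * plP d α t f x) =
      ∫ x in posOrthant d, laguerreWeight α x * (f x * plP d α t φ x) := by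
  simp only [plP, if_neg ht.ne', ← integral_const_mul]
  calc ∫ x in posOrthant d, ∫ y in posOrthant d,
        laguerreWeight α x * (φ x * (plKernel d α t x y * f y))
      = ∫ x in posOrthant d, ∫ y in posOrthant d,
          laguerreWeight α x * plKernel d α t x y * (φ x * f y) := by
        simp only [mul_assoc, mul_left_comm]
    _ = ∫ y in posOrthant d, ∫ x in posOrthant d,
          laguerreWeight α x * plKernel d α t x y * (φ x * f y) :=
        integral_integral_swap
          (integrable_laguerreWeight_mul_plKernel_mul hα ht hf hM hφ hN)
    _ = ∫ y in posOrthant d, ∫ x in posOrthant d,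
          laguerreWeight α y * (f y * (plKernel d α t y x * φ x)) := by
        refine setIntegral_congr_fun (measurableSet_posOrthant d) fun y hy =>
          setIntegral_congr_fun (measurableSet_posOrthant d) fun x hx => ?_
        simp only [laguerreWeight_mul_plKernel_comm hα t hx hy]
        ring

end Symmetry

variable (hα : ∀ j, -1 < α j)
include hα

lemma laguerreHeatOp_exp_neg_sum {τ : ℝ} (hτ : 0 < τ) {x : Fin d → ℝ}
    (hx : x ∈ posOrthant d) {p : Fin d → ℝ} (hp : ∀ j, 0 ≤ p j) :
    laguerreHeatOp α (fun y => exp (-∑ j, p j * y j)) τ x =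
      (∏ j, (1 + p j * (1 - exp (-τ))) ^ (-(α j + 1))) *
        exp (-∑ j, laguerreLaplaceFlow τ (p j) * x j) := by
  have hprod : 0 ≤ ∏ j, (1 + p j * (1 - exp (-τ))) ^ (-(α j + 1)) :=
    Finset.prod_nonneg fun j _ => rpow_nonneg (laguerreLaplaceFlow_denom_pos hτ (hp j)).le _
  rw [laguerreHeatOp,
    integral_eq_lintegral_of_nonneg_ae (ae_of_all _ fun y => (exp_pos _).le)
      (Measurable.aestronglyMeasurable (by fun_prop)),
    lintegral_laguerreHeatKernel_exp_neg hα hτ hx hp, ← ENNReal.ofReal_mul hprod,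
    ENNReal.toReal_ofReal (mul_nonneg hprod (exp_pos _).le)]

lemma tendsto_laguerreHeatOp_exp_neg_sum {x : Fin d → ℝ} (hx : x ∈ posOrthant d) {p : Fin d → ℝ}
    (hp : ∀ j, 0 ≤ p j) :
    Tendsto (fun τ => laguerreHeatOp α (fun y => exp (-∑ j, p j * y j)) τ x) (𝓝[>] 0)
      (𝓝 (exp (-∑ j, p j * x j))) := by
  have hcont : ContinuousAt (fun τ => (∏ j, (1 + p j * (1 - exp (-τ))) ^ (-(α j + 1))) *
      exp (-∑ j, laguerreLaplaceFlow τ (p j) * x j)) 0 := by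
    unfold laguerreLaplaceFlow
    refine (tendsto_finsetProd _ fun j _ => ?_).mul (ContinuousAt.rexp (ContinuousAt.neg
      (tendsto_finsetSum _ fun j _ => ContinuousAt.mul (ContinuousAt.div ?_ ?_ ?_) ?_)))
    · exact ContinuousAt.rpow_const (by fun_prop) (Or.inl (by simp))
    all_goals first | fun_prop | simp
  have hlim := hcont.tendsto.mono_left (nhdsWithin_le_nhds (s := Ioi 0))
  simp only [laguerreLaplaceFlow, neg_zero, exp_zero, sub_self, mul_zero, add_zero, one_rpow,
    Finset.prod_const_one, one_mul, div_one] at hlim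
  refine hlim.congr' ?_
  filter_upwards [self_mem_nhdsWithin] with τ hτ
  rw [laguerreHeatOp_exp_neg_sum hα hτ hx hp]
  rfl

lemma tendsto_plP_exp_neg_sum {x : Fin d → ℝ} (hx : x ∈ posOrthant d) {p : Fin d → ℝ}
    (hp : ∀ j, 0 ≤ p j) :
    Tendsto (fun t => plP d α t (fun y => exp (-∑ j, p j * y j)) x) (𝓝[>] 0)
      (𝓝 (exp (-∑ j, p j * x j))) := by
  have hmeas : Measurable fun y : Fin d → ℝ => exp (-∑ j, p j * y j) := by fun_prop
  have hbound (y) (hy : y ∈ posOrthant d) := exp_neg_sum_le_one hp hy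
  refine (tendsto_integral_stableDensity_mul (measurable_laguerreHeatOp_time α hmeas x)
    (fun τ hτ => abs_laguerreHeatOp_le hα hbound hτ hx)
    (tendsto_laguerreHeatOp_exp_neg_sum hα hx hp)).congr' ?_
  filter_upwards [self_mem_nhdsWithin] with t ht
  exact (plP_eq_integral_stableDensity hα hmeas hbound ht hx).symm

variable (hf : Measurable f) (hM : ∀ y ∈ posOrthant d, |f y| ≤ M)
include hf hM

lemma aestronglyMeasurable_plP {t : ℝ} (ht : 0 ≤ t) :
    AEStronglyMeasurable (plP d α t f) (volume.restrict (posOrthant d)) := by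
  have hmeas : Measurable (subordinatedP α f t) :=
    (measurable_subordinatedP α hf).comp measurable_prodMk_left
  refine hmeas.aestronglyMeasurable.congr ?_
  filter_upwards [ae_restrict_mem (measurableSet_posOrthant d)] with x hx
  exact (plP_eq_subordinatedP hα hf hM ht hx).symm

lemma tendsto_setIntegral_laguerreWeight_mul_plP {g : (Fin d → ℝ) → ℝ}
    (hg : ∀ x ∈ posOrthant d, Tendsto (fun t => plP d α t f x) (𝓝[>] 0) (𝓝 (g x)))
    (hφ : Measurable φ) (hN : ∀ y ∈ posOrthant d, |φ y| ≤ N) :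
    Tendsto (fun t => ∫ x in posOrthant d, laguerreWeight α x * (φ x * plP d α t f x)) (𝓝[>] 0)
      (𝓝 (∫ x in posOrthant d, laguerreWeight α x * (φ x * g x))) := by
  have hmem := ae_restrict_mem (μ := volume) (measurableSet_posOrthant d)
  refine tendsto_integral_filter_of_dominated_convergence (fun x => laguerreWeight α x * (N * M))
    ?_ ?_ ((integrableOn_laguerreWeight hα).mul_const _)
    (hmem.mono fun x hx => ((hg x hx).const_mul _).const_mul _)
  · filter_upwards [self_mem_nhdsWithin] with t ht
    exact (measurable_laguerreWeight α).aestronglyMeasurable.mul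
      (hφ.aestronglyMeasurable.mul (aestronglyMeasurable_plP hα hf hM (le_of_lt ht)))
  · filter_upwards [self_mem_nhdsWithin] with t ht
    filter_upwards [hmem] with x hx
    rw [norm_mul, norm_mul, Real.norm_of_nonneg (laguerreWeight_pos α hx).le]
    exact mul_le_mul_of_nonneg_left (mul_le_mul (hN x hx)
      (abs_plP_le hα hf hM (le_of_lt ht) hx) (norm_nonneg _) ((abs_nonneg _).trans (hN x hx)))
      (laguerreWeight_pos α hx).le

lemma setIntegral_laguerreWeight_mul_exp_neg_sum_of_tendsto_plP {g : (Fin d → ℝ) → ℝ}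
    (hg : ∀ x ∈ posOrthant d, Tendsto (fun t => plP d α t f x) (𝓝[>] 0) (𝓝 (g x)))
    {p : Fin d → ℝ} (hp : ∀ j, 0 ≤ p j) :
    ∫ x in posOrthant d, laguerreWeight α x * (exp (-∑ j, p j * x j) * g x) =
      ∫ x in posOrthant d, laguerreWeight α x * (f x * exp (-∑ j, p j * x j)) := by
  have hmeas : Measurable fun y : Fin d → ℝ => exp (-∑ j, p j * y j) := by fun_prop
  have hbound (y) (hy : y ∈ posOrthant d) := exp_neg_sum_le_one hp hy
  refine tendsto_nhds_unique
    (tendsto_setIntegral_laguerreWeight_mul_plP hα hf hM hg hmeas hbound)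
    ((tendsto_setIntegral_laguerreWeight_mul_plP hα hmeas hbound
      (fun x hx => tendsto_plP_exp_neg_sum hα hx hp) hf hM).congr' ?_)
  filter_upwards [self_mem_nhdsWithin] with t ht
  exact setIntegral_laguerreWeight_mul_plP_symm hα ht hmeas hbound hf hM

lemma ae_eq_of_tendsto_plP {g : (Fin d → ℝ) → ℝ}
    (hg : ∀ x ∈ posOrthant d, Tendsto (fun t => plP d α t f x) (𝓝[>] 0) (𝓝 (g x))) :
    g =ᵐ[volume.restrict (posOrthant d)] f := by
  have hmem := ae_restrict_mem (μ := volume) (measurableSet_posOrthant d)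
  have hpos : ∀ᶠ t in 𝓝[>] (0 : ℝ), 0 < t := self_mem_nhdsWithin
  have hgM (x) (hx : x ∈ posOrthant d) : |g x| ≤ M :=
    le_of_tendsto (hg x hx).abs (hpos.mono fun t ht => abs_plP_le hα hf hM ht.le hx)
  have hgmeas : AEStronglyMeasurable g (volume.restrict (posOrthant d)) :=
    aestronglyMeasurable_of_tendsto_ae (𝓝[>] 0)
      (f := fun t => plP d α |t| f) (fun t => aestronglyMeasurable_plP hα hf hM (abs_nonneg t))
      (hmem.mono fun x hx =>
        (hg x hx).congr' (hpos.mono fun t ht => by simp only [abs_of_pos ht]))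
  have hint {h : (Fin d → ℝ) → ℝ} (hmeas : AEStronglyMeasurable h (volume.restrict (posOrthant d)))
      (hhM : ∀ x ∈ posOrthant d, |h x| ≤ M) :
      IntegrableOn (fun x => laguerreWeight α x * h x) (posOrthant d) :=
    (integrableOn_laguerreWeight hα).mul_bdd hmeas (hmem.mono hhM)
  have hzero : (fun x => laguerreWeight α x * g x - laguerreWeight α x * f x)
      =ᵐ[volume.restrict (posOrthant d)] 0 := by
    refine ae_eq_zero_of_integral_exp_neg_sum_mul_eq_zero hmem
      ((hint hgmeas hgM).sub (hint hf.aestronglyMeasurable hM)) fun p => ?_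
    have hp (j) : (0 : ℝ) ≤ p j := Nat.cast_nonneg _
    have hexp {h : (Fin d → ℝ) → ℝ} (hh : Integrable h (volume.restrict (posOrthant d))) :
        Integrable (fun x => exp (-∑ j, (p j : ℝ) * x j) * h x) (volume.restrict (posOrthant d)) :=
      hh.bdd_mul (c := 1) (Measurable.aestronglyMeasurable (by fun_prop))
        (hmem.mono fun x hx => exp_neg_sum_le_one hp hx)
    simp only [mul_sub]
    rw [integral_sub (hexp (hint hgmeas hgM)) (hexp (hint hf.aestronglyMeasurable hM)), sub_eq_zero]
    simpa only [mul_left_comm (exp _), mul_comm (f _)] using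
      setIntegral_laguerreWeight_mul_exp_neg_sum_of_tendsto_plP hα hf hM hg hp
  filter_upwards [hzero, hmem] with x hx hxo
  rw [← mul_sub] at hx
  exact sub_eq_zero.1 ((mul_eq_zero.1 hx).resolve_left (laguerreWeight_pos α hxo).ne')

end Recovery

section Integrals

variable {X Y : Type*} [MeasurableSpace X] [MeasurableSpace Y] {μ : Measure X} {ν : Measure Y}

lemma abs_setIntegral_mul_le {s : Set X} (hs : MeasurableSet s) {w g : X → ℝ} {B : ℝ}
    (hw : IntegrableOn w s μ) (hg : ∀ x ∈ s, |g x| ≤ B) :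
    |∫ x in s, w x * g x ∂μ| ≤ (∫ x in s, |w x| ∂μ) * B := by
  rw [← integral_mul_const, ← Real.norm_eq_abs]
  refine norm_integral_le_of_norm_le (hw.abs.mul_const B)
    ((ae_restrict_mem hs).mono fun x hx => ?_)
  rw [norm_mul]
  exact mul_le_mul_of_nonneg_left (hg x hx) (norm_nonneg _)

lemma integral_mul_integral_swap [SFinite μ] [SFinite ν] {w : X → ℝ} {F : X → Y → ℝ} {Φ : Y → ℝ}
    (hw : Integrable w μ) (hF : AEStronglyMeasurable (Function.uncurry F) (μ.prod ν))
    (hΦ : Integrable Φ ν) (hb : ∀ᵐ x ∂μ, ∀ᵐ y ∂ν, |F x y| ≤ Φ y) :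
    ∫ x, w x * ∫ y, F x y ∂ν ∂μ = ∫ y, ∫ x, w x * F x y ∂μ ∂ν := by
  have hmeas : AEStronglyMeasurable (Function.uncurry fun x y => w x * F x y) (μ.prod ν) :=
    hw.aestronglyMeasurable.comp_fst.mul hF
  have hle (x : X) : ∀ᵐ y ∂ν, |F x y| ≤ Φ y → ‖w x * F x y‖ ≤ |w x| * Φ y :=
    ae_of_all _ fun y hy => by
      rw [norm_mul]; exact mul_le_mul_of_nonneg_left hy (norm_nonneg _)
  have hint : Integrable (Function.uncurry fun x y => w x * F x y) (μ.prod ν) := by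
    refine (integrable_prod_iff hmeas).2 ⟨?_, ?_⟩
    · filter_upwards [hb, hmeas.prodMk_left] with x hx hmx
      exact (hΦ.const_mul |w x|).mono' hmx ((hle x).mp (hx.mono fun y hy h => h hy))
    · refine (hw.abs.mul_const (∫ y, Φ y ∂ν)).mono' hmeas.norm.integral_prod_right' ?_
      filter_upwards [hb] with x hx
      rw [← integral_const_mul]
      refine (norm_integral_le_of_norm_le (hΦ.const_mul |w x|) ?_)
      filter_upwards [hx, hle x] with y hy h
      simpa using h hy
  rw [← integral_integral_swap hint]
  simp only [integral_const_mul]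

end Integrals

section Derivatives

variable {d : ℕ} {α : Fin d → ℝ} {f w : (Fin d → ℝ) → ℝ} {M : ℝ} (hα : ∀ j, -1 < α j)
include hα

section Fubini

variable (hf : Measurable f) (hM : ∀ y ∈ posOrthant d, |f y| ≤ M)
  (hw : IntegrableOn w (posOrthant d))
include hf hM hw

lemma setIntegral_mul_integral_laguerreHeatOp {k : ℝ → ℝ} (hk : IntegrableOn k (Ioi 0)) :
    ∫ y in posOrthant d, w y * ∫ τ in Ioi 0, k τ * laguerreHeatOp α f τ y =
      ∫ τ in Ioi 0, k τ * ∫ y in posOrthant d, w y * laguerreHeatOp α f τ y := by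
  have hT : Measurable fun p : (Fin d → ℝ) × ℝ => laguerreHeatOp α f p.2 p.1 :=
    (measurable_laguerreHeatOp α hf).comp measurable_swap
  rw [integral_mul_integral_swap hw (hk.aestronglyMeasurable.comp_snd.mul hT.aestronglyMeasurable)
    (hk.abs.mul_const M)]
  · simp only [mul_left_comm (w _), integral_const_mul]
  · filter_upwards [ae_restrict_mem (measurableSet_posOrthant d)] with y hy
    filter_upwards [ae_restrict_mem measurableSet_Ioi] with τ hτ
    rw [abs_mul]
    exact mul_le_mul_of_nonneg_left (abs_laguerreHeatOp_le hα hM hτ hy) (abs_nonneg _)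

lemma iteratedDeriv_setIntegral_mul_plP (n : ℕ) {t : ℝ} (ht : 0 < t) :
    iteratedDeriv n (fun t => ∫ y in posOrthant d, w y * plP d α t f y) t =
      ∫ y in posOrthant d, w y * iteratedDeriv n (fun t => plP d α t f y) t := by
  let h : ℝ → ℝ := fun τ => ∫ y in posOrthant d, w y * laguerreHeatOp α f τ y
  have hmeas : Measurable h := by
    obtain ⟨v, hv, hvw⟩ := hw.aestronglyMeasurable
    have hh : h = fun τ => ∫ y in posOrthant d, v y * laguerreHeatOp α f τ y :=
      funext fun τ => integral_congr_ae (hvw.mono fun y hy => by simp only [hy])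
    rw [hh]
    exact ((hv.measurable.comp measurable_snd).mul
      (measurable_laguerreHeatOp α hf)).stronglyMeasurable.integral_prod_right'.measurable
  have hbound (τ : ℝ) (hτ : 0 < τ) : |h τ| ≤ (∫ y in posOrthant d, |w y|) * M :=
    abs_setIntegral_mul_le (measurableSet_posOrthant d) hw fun y hy =>
      abs_laguerreHeatOp_le hα hM hτ hy
  have hev : (fun t => ∫ y in posOrthant d, w y * plP d α t f y) =ᶠ[𝓝 t]
      fun t => ∫ τ in Ioi 0, stableDensity t τ * h τ := by
    filter_upwards [Ioi_mem_nhds ht] with r hr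
    rw [← setIntegral_mul_integral_laguerreHeatOp hα hf hM hw (integrableOn_stableDensity hr)]
    exact setIntegral_congr_fun (measurableSet_posOrthant d) fun y hy => by
      simp only [plP_eq_integral_stableDensity hα hf hM hr hy]
  rw [hev.iteratedDeriv_eq, iteratedDeriv_integral_stableDensity_mul hmeas hbound n ht,
    ← setIntegral_mul_integral_laguerreHeatOp hα hf hM hw
      (integrableOn_iteratedDeriv_stableDensity n ht)]
  refine setIntegral_congr_fun (measurableSet_posOrthant d) fun y hy => ?_
  simp only [(plP_eventuallyEq hα hf hM ht hy).iteratedDeriv_eq,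
    iteratedDeriv_integral_stableDensity_mul (measurable_laguerreHeatOp_time α hf y)
      (fun _ hτ => abs_laguerreHeatOp_le hα hM hτ hy) n ht]

end Fubini

lemma iteratedDeriv_plP_subordinatedP (hf : Measurable f) (hM : ∀ y ∈ posOrthant d, |f y| ≤ M)
    {s t : ℝ} (hs : 0 < s) (ht : 0 ≤ t) {x : Fin d → ℝ} (hx : x ∈ posOrthant d) (i : ℕ) :
    iteratedDeriv i (fun s => plP d α s (subordinatedP α f t) x) s =
      iteratedDeriv i (fun s => plP d α s f x) (s + t) := by
  have hev : (fun s => plP d α s (subordinatedP α f t) x) =ᶠ[𝓝 s]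
      fun s => plP d α (s + t) f x := by
    filter_upwards [Ioi_mem_nhds hs] with r hr using plP_subordinatedP hα hf hM hr ht hx
  rw [hev.iteratedDeriv_eq, iteratedDeriv_comp_add_const i (fun s => plP d α s f x)]

lemma exists_kernel_iteratedDeriv_plP_add (i : ℕ) :
    ∃ C ≥ 0, ∀ t, 0 < t → ∀ x ∈ posOrthant d, ∃ w : (Fin d → ℝ) → ℝ,
      IntegrableOn w (posOrthant d) ∧ ∫ y in posOrthant d, |w y| ≤ C * t ^ (-(i : ℝ)) ∧
        ∀ f M, Measurable f → (∀ y ∈ posOrthant d, |f y| ≤ M) → ∀ r, 0 ≤ r →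
          iteratedDeriv i (fun t => plP d α t f x) (t + r) =
            ∫ y in posOrthant d, w y * plP d α r f y := by
  obtain ⟨C, hC, h⟩ := exists_kernel_iteratedDeriv_plP hα i
  refine ⟨C, hC, fun t ht x hx => ?_⟩
  obtain ⟨w, hw, hwC, hrep⟩ := h t ht x hx
  refine ⟨w, hw, hwC, fun f M hf hM r hr => ?_⟩
  have hmeas : Measurable (subordinatedP α f r) :=
    (measurable_subordinatedP α hf).comp measurable_prodMk_left
  rw [← iteratedDeriv_plP_subordinatedP hα hf hM ht hr hx,
    hrep _ M hmeas fun y hy => abs_subordinatedP_le hα hf hM hr hy]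
  exact setIntegral_congr_fun (measurableSet_posOrthant d) fun y hy => by
    simp only [plP_eq_subordinatedP hα hf hM hr hy]

lemma exists_abs_iteratedDeriv_plP_le (i : ℕ) :
    ∃ C ≥ 0, ∀ (f : (Fin d → ℝ) → ℝ) (M : ℝ), Measurable f → (∀ y ∈ posOrthant d, |f y| ≤ M) →
      ∀ x ∈ posOrthant d, ∀ t, 0 < t →
        |iteratedDeriv i (fun t => plP d α t f x) t| ≤ C * M * t ^ (-(i : ℝ)) := by
  obtain ⟨C, hC, h⟩ := exists_kernel_iteratedDeriv_plP hα i
  refine ⟨C, hC, fun f M hf hM x hx t ht => ?_⟩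
  obtain ⟨w, hw, hwC, hrep⟩ := h t ht x hx
  rw [hrep f M hf hM, mul_right_comm]
  exact (abs_setIntegral_mul_le (measurableSet_posOrthant d) hw hM).trans
    (mul_le_mul_of_nonneg_right hwC ((abs_nonneg _).trans (hM x hx)))

lemma exists_abs_iteratedDeriv_add_plP_le (n i : ℕ) (σ : ℝ) :
    ∃ C ≥ 0, ∀ (f : (Fin d → ℝ) → ℝ) (M A : ℝ), Measurable f →
      (∀ y ∈ posOrthant d, |f y| ≤ M) →
      (∀ t, 0 < t → ∀ x ∈ posOrthant d, |iteratedDeriv n (fun t => plP d α t f x) t| ≤ A * t ^ σ) →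
      ∀ x ∈ posOrthant d, ∀ r, 0 < r →
        |iteratedDeriv (i + n) (fun t => plP d α t f x) r| ≤ C * A * r ^ (σ - i) := by
  obtain ⟨C, hC, h⟩ := exists_kernel_iteratedDeriv_plP_add hα i
  refine ⟨C * (1 / 2) ^ (σ - i), by positivity, fun f M A hf hM hA x hx r hr => ?_⟩
  have hr2 := half_pos hr
  obtain ⟨w, hw, hwC, hrep⟩ := h (r / 2) hr2 x hx
  have hev : (fun t => iteratedDeriv i (fun t => plP d α t f x) (r / 2 + t)) =ᶠ[𝓝 (r / 2)]
      fun t => ∫ y in posOrthant d, w y * plP d α t f y := by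
    filter_upwards [Ioi_mem_nhds hr2] with t ht using hrep f M hf hM t (le_of_lt ht)
  have hrepr : iteratedDeriv (i + n) (fun t => plP d α t f x) r =
      ∫ y in posOrthant d, w y * iteratedDeriv n (fun t => plP d α t f y) (r / 2) := by
    rw [← iteratedDeriv_setIntegral_mul_plP hα hf hM hw n hr2, ← hev.iteratedDeriv_eq,
      iteratedDeriv_comp_const_add n (iteratedDeriv i fun t => plP d α t f x)]
    simp only [add_halves, iteratedDeriv_iteratedDeriv]
  rw [hrepr]
  calc |∫ y in posOrthant d, w y * iteratedDeriv n (fun t => plP d α t f y) (r / 2)|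
      ≤ (∫ y in posOrthant d, |w y|) * (A * (r / 2) ^ σ) :=
        abs_setIntegral_mul_le (measurableSet_posOrthant d) hw (hA _ hr2)
    _ ≤ C * (r / 2) ^ (-(i : ℝ)) * (A * (r / 2) ^ σ) :=
        mul_le_mul_of_nonneg_right hwC ((abs_nonneg _).trans (hA _ hr2 x hx))
    _ = C * A * ((r / 2) ^ σ * (r / 2) ^ (-(i : ℝ))) := by ring
    _ = C * A * (r * (1 / 2)) ^ (σ - i) := by
        rw [← rpow_add hr2, ← sub_eq_add_neg, mul_one_div]
    _ = C * (1 / 2) ^ (σ - i) * A * r ^ (σ - i) := by rw [mul_rpow hr.le (by norm_num)]; ring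

end Derivatives

section SingularWeight

variable {lam γ a b e : ℝ} {F : ℝ → ℝ}

lemma rpow_mul_const_mul_rpow (lam γ a : ℝ) {s : ℝ} (hs : 0 < s) :
    s ^ (-lam - 1) * (a * s ^ γ) = a * s ^ (γ - lam - 1) := by
  rw [mul_left_comm, ← rpow_add hs]
  ring_nf

lemma integrableOn_Ioc_const_mul_rpow (hγ : lam < γ) (a : ℝ) {t : ℝ} (ht : 0 ≤ t) :
    IntegrableOn (fun s => a * s ^ (γ - lam - 1)) (Ioc 0 t) :=
  ((intervalIntegrable_iff_integrableOn_Ioc_of_le ht).1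
    (intervalIntegral.intervalIntegrable_rpow' (by linarith))).const_mul a

lemma integrableOn_Ioi_const_mul_rpow (hlam : 0 < lam) (b : ℝ) {t : ℝ} (ht : 0 < t) :
    IntegrableOn (fun s => s ^ (-lam - 1) * b) (Ioi t) :=
  (integrableOn_Ioi_rpow_of_lt (by linarith) ht).mul_const b

section Min

variable (hlam : 0 < lam) (hγ : lam < γ)
include hlam hγ

section Nonneg

variable (ha : 0 ≤ a) (hb : 0 ≤ b)
include ha hb

lemma integrableOn_rpow_mul_min :
    IntegrableOn (fun s => s ^ (-lam - 1) * min (a * s ^ γ) b) (Ioi 0) := by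
  have hmeas : Measurable fun s : ℝ => s ^ (-lam - 1) * min (a * s ^ γ) b := by fun_prop
  rw [← Ioc_union_Ioi_eq_Ioi (zero_le_one' ℝ)]
  refine IntegrableOn.union
    ((integrableOn_Ioc_const_mul_rpow hγ a zero_le_one).mono' hmeas.aestronglyMeasurable
      ((ae_restrict_mem measurableSet_Ioc).mono fun s hs => ?_))
    ((integrableOn_Ioi_const_mul_rpow hlam b one_pos).mono' hmeas.aestronglyMeasurable
      ((ae_restrict_mem measurableSet_Ioi).mono fun s hs => ?_))
  · have hs' : 0 < s := hs.1
    rw [norm_of_nonneg (by positivity), ← rpow_mul_const_mul_rpow lam γ a hs']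
    gcongr
    exact min_le_left _ _
  · have hs' : 0 < s := one_pos.trans hs
    rw [norm_of_nonneg (by positivity)]
    gcongr
    exact min_le_right _ _

lemma integral_rpow_mul_min_le {t : ℝ} (ht : 0 < t) :
    ∫ s in Ioi 0, s ^ (-lam - 1) * min (a * s ^ γ) b ≤
      a * (t ^ (γ - lam) / (γ - lam)) + b * (t ^ (-lam) / lam) := by
  have hint := integrableOn_rpow_mul_min hlam hγ ha hb
  rw [← Ioc_union_Ioi_eq_Ioi ht.le] at hint ⊢
  rw [setIntegral_union Ioc_disjoint_Ioi_same measurableSet_Ioi hint.left_of_union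
    hint.right_of_union]
  refine add_le_add ?_ ?_
  · calc ∫ s in Ioc 0 t, s ^ (-lam - 1) * min (a * s ^ γ) b
        ≤ ∫ s in Ioc 0 t, a * s ^ (γ - lam - 1) := by
          refine setIntegral_mono_on hint.left_of_union
            (integrableOn_Ioc_const_mul_rpow hγ a ht.le) measurableSet_Ioc fun s hs => ?_
          rw [← rpow_mul_const_mul_rpow lam γ a hs.1]
          exact mul_le_mul_of_nonneg_left (min_le_left _ _) (rpow_nonneg hs.1.le _)
      _ = a * (t ^ (γ - lam) / (γ - lam)) := by
          rw [integral_const_mul, ← intervalIntegral.integral_of_le ht.le,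
            integral_rpow (Or.inl (by linarith)), sub_add_cancel, zero_rpow (by linarith), sub_zero]
  · calc ∫ s in Ioi t, s ^ (-lam - 1) * min (a * s ^ γ) b ≤ ∫ s in Ioi t, s ^ (-lam - 1) * b :=
          setIntegral_mono_on hint.right_of_union (integrableOn_Ioi_const_mul_rpow hlam b ht)
            measurableSet_Ioi fun s hs => mul_le_mul_of_nonneg_left (min_le_right _ _)
              (rpow_nonneg (ht.trans hs).le _)
      _ = b * (t ^ (-lam) / lam) := by
          rw [integral_mul_const, integral_Ioi_rpow_of_lt (by linarith) ht, sub_add_cancel,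
            neg_div_neg_eq, mul_comm]

end Nonneg

lemma abs_integral_rpow_mul_le (hsmall : ∀ s, 0 < s → |F s| ≤ a * s ^ γ)
    (hlarge : ∀ s, 0 < s → |F s| ≤ b) {t : ℝ} (ht : 0 < t) :
    |∫ s in Ioi 0, s ^ (-lam - 1) * F s| ≤
      a * (t ^ (γ - lam) / (γ - lam)) + b * (t ^ (-lam) / lam) := by
  have ha : 0 ≤ a := by simpa using (abs_nonneg _).trans (hsmall 1 one_pos)
  have hb : 0 ≤ b := (abs_nonneg _).trans (hlarge 1 one_pos)
  refine (norm_integral_le_of_norm_le (f := fun s => s ^ (-lam - 1) * F s)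
    (integrableOn_rpow_mul_min hlam hγ ha hb) ?_).trans (integral_rpow_mul_min_le hlam hγ ha hb ht)
  filter_upwards [ae_restrict_mem measurableSet_Ioi] with s (hs : 0 < s)
  rw [norm_mul, norm_of_nonneg (by positivity)]
  exact mul_le_mul_of_nonneg_left (le_min (hsmall s hs) (hlarge s hs)) (by positivity)

lemma not_integrableOn_rpow_mul_of_abs_add_le (he : e ≠ 0)
    (hF : ∀ s, 0 < s → |F s + e| ≤ a * s ^ γ) :
    ¬ IntegrableOn (fun s => s ^ (-lam - 1) * F s) (Ioi 0) := fun hint => by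
  have hint' : IntegrableOn (fun s => s ^ (-lam - 1) * F s) (Ioc 0 1) :=
    hint.mono_set Ioc_subset_Ioi_self
  have hmeas : Measurable fun s : ℝ => s ^ (-lam - 1) * e := by fun_prop
  have hsum : IntegrableOn (fun s => s ^ (-lam - 1) * F s + s ^ (-lam - 1) * e) (Ioc 0 1) := by
    refine (integrableOn_Ioc_const_mul_rpow hγ a zero_le_one).mono'
      (hint'.aestronglyMeasurable.add hmeas.aestronglyMeasurable)
      ((ae_restrict_mem measurableSet_Ioc).mono fun s hs => ?_)
    rw [← mul_add, norm_mul, norm_of_nonneg (rpow_nonneg hs.1.le _),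
      ← rpow_mul_const_mul_rpow lam γ a hs.1]
    exact mul_le_mul_of_nonneg_left (hF s hs.1) (rpow_nonneg hs.1.le _)
  have hrpow : IntegrableOn (fun s : ℝ => s ^ (-lam - 1)) (Ioc 0 1) :=
    IntegrableOn.congr_fun ((hsum.sub hint').mul_const e⁻¹) (fun s _ => by
      simp only [Pi.sub_apply, add_sub_cancel_left, mul_inv_cancel_right₀ he]) measurableSet_Ioc
  have := (intervalIntegral.integrableOn_Ioo_rpow_iff one_pos).1
    (hrpow.mono_set Ioo_subset_Ioc_self)
  linarith

-- For `e ≠ 0` the integral diverges, and is `0` by convention.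
lemma abs_integral_rpow_mul_le_of_abs_add_le (hsmall : ∀ s, 0 < s → |F s + e| ≤ a * s ^ γ)
    (hlarge : ∀ s, 0 < s → |F s| ≤ b) :
    |∫ s in Ioi 0, s ^ (-lam - 1) * F s| ≤ a / (γ - lam) + b / lam := by
  have ha : 0 ≤ a := by simpa using (abs_nonneg _).trans (hsmall 1 one_pos)
  have hb : 0 ≤ b := (abs_nonneg _).trans (hlarge 1 one_pos)
  by_cases he : e = 0
  · have h := abs_integral_rpow_mul_le hlam hγ (by simpa [he] using hsmall) hlarge one_pos
    simpa [div_eq_mul_inv] using h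
  · rw [integral_undef (not_integrableOn_rpow_mul_of_abs_add_le hlam hγ he hsmall), abs_zero]
    have := sub_pos.2 hγ
    positivity

end Min

end SingularWeight

/-- The hypotheses on a datum of the main estimate: `f` is bounded by `M` on the orthant and is
`β`-Lipschitz with constant `A` along the Poisson–Laguerre semigroup, tested on the derivative of
order `n`. -/
structure PoissonLipschitz {d : ℕ} (α : Fin d → ℝ) (β : ℝ) (n : ℕ) (M A : ℝ)
    (f : (Fin d → ℝ) → ℝ) : Prop where
  measurable : Measurable f
  abs_le : ∀ y ∈ posOrthant d, |f y| ≤ M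
  abs_iteratedDeriv_le : ∀ t, 0 < t → ∀ x ∈ posOrthant d,
    |iteratedDeriv n (fun t => plP d α t f x) t| ≤ A * t ^ (β - n)

namespace PoissonLipschitz

variable {d : ℕ} {α : Fin d → ℝ} {β M A : ℝ} {n : ℕ} {f : (Fin d → ℝ) → ℝ}

lemma bound_nonneg (h : PoissonLipschitz α β n M A f) : 0 ≤ M :=
  (abs_nonneg _).trans (h.abs_le (fun _ => 1) fun _ _ => mem_Ioi.2 one_pos)

lemma const_nonneg (h : PoissonLipschitz α β n M A f) : 0 ≤ A := by
  simpa using (abs_nonneg _).trans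
    (h.abs_iteratedDeriv_le 1 one_pos (fun _ => 1) fun _ _ => mem_Ioi.2 one_pos)

lemma exists_lipschitzOrbit (hα : ∀ j, -1 < α j) {γ : ℝ} (hγ : 0 ≤ γ) (hγβ : γ ≤ β) (n : ℕ) :
    ∃ c ≥ 0, ∀ M A f, PoissonLipschitz α β n M A f → ∀ x ∈ posOrthant d,
      LipschitzOrbit γ n (c * (M + A)) fun t => plP d α t f x := by
  choose c _ hc using fun i => exists_abs_iteratedDeriv_plP_le hα i
  obtain ⟨S, hS⟩ := ((Set.finite_Iic n).image c).bddAbove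
  have hone : 1 ≤ max S 1 := le_max_right S 1
  refine ⟨max S 1, zero_le_one.trans hone, fun M A f h x hx => ?_⟩
  have hM := h.bound_nonneg
  have hA := h.const_nonneg
  have hcM (i : ℕ) (hi : i ≤ n) : c i * M ≤ max S 1 * (M + A) :=
    mul_le_mul ((hS (mem_image_of_mem c hi)).trans (le_max_left S 1))
      (le_add_of_nonneg_right hA) hM (zero_le_one.trans hone)
  have hderiv (i : ℕ) (hi : i ≤ n) (t : ℝ) (ht : 0 < t) :=
    (hc i f M h.measurable h.abs_le x hx t ht).trans
      (mul_le_mul_of_nonneg_right (hcM i hi) (rpow_nonneg ht.le _))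
  refine ⟨smoothOnPos_plP hα h.measurable h.abs_le hx, hderiv, fun t ht => ?_⟩
  rcases le_total t 1 with ht₁ | ht₁
  · refine (h.abs_iteratedDeriv_le t ht x hx).trans (mul_le_mul ?_ ?_ (rpow_nonneg ht.le _) ?_)
    · nlinarith
    · exact rpow_le_rpow_of_exponent_ge ht ht₁ (sub_le_sub_right hγβ _)
    · positivity
  · exact (hderiv n le_rfl t ht).trans (mul_le_mul_of_nonneg_left
      (rpow_le_rpow_of_exponent_le ht₁ (by linarith)) (by positivity))

lemma exists_abs_orbitDiff_plP_add_le (hα : ∀ j, -1 < α j) {γ : ℝ} {k : ℕ} (hγ : 0 < γ)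
    (hγk : γ < k) (hkγ : k - 1 < γ) (hγβ : γ ≤ β) (hkn : k ≤ n) :
    ∃ C ≥ 0, ∀ M A f, PoissonLipschitz α β n M A f → ∃ e : (Fin d → ℝ) → ℝ,
      (∀ x ∈ posOrthant d, ∀ s, 0 < s →
        |orbitDiff k (fun t => plP d α t f x) s + e x| ≤ C * (M + A) * s ^ γ) ∧
      e =ᵐ[volume.restrict (posOrthant d)] 0 := by
  obtain ⟨c, hc, horb⟩ := exists_lipschitzOrbit hα hγ.le hγβ n
  obtain ⟨C, hC, hdiff⟩ := LipschitzOrbit.exists_abs_orbitDiff_update_le hγ hγk hkγ hkn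
  refine ⟨C * c, mul_nonneg hC hc, fun M A f h => ?_⟩
  choose! L hL hLs using fun x hx => hdiff _ _ (horb M A f h x hx)
  refine ⟨fun x => (-1) ^ k * (L x - f x), fun x hx s hs => ?_, ?_⟩
  · have hx := hLs x hx s hs
    rwa [orbitDiff_update_zero _ hs.ne', plP_zero, ← mul_assoc C] at hx
  · filter_upwards [ae_eq_of_tendsto_plP hα h.measurable h.abs_le hL] with x hx
    simp [hx]

lemma exists_abs_orbitDiff_iteratedDeriv_plP_le (hα : ∀ j, -1 < α j) (k : ℕ) (hβn : β ≤ n) :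
    ∃ C ≥ 0, ∀ M A f, PoissonLipschitz α β n M A f → ∀ x ∈ posOrthant d, ∀ t, 0 < t → t ≤ 1 →
      ∀ s, 0 < s →
        |orbitDiff k (fun r => iteratedDeriv n (fun t => plP d α t f x) (t + r)) s| ≤
          C * A * t ^ (β - n - k) * s ^ k := by
  choose c hc₀ hc using fun i => exists_abs_iteratedDeriv_add_plP_le hα n i (β - n)
  obtain ⟨S, hS⟩ := ((Set.finite_Iic k).image c).bddAbove
  have hcS (i : ℕ) (hi : i ≤ k) : c i ≤ S := hS (mem_image_of_mem c hi)
  have hS₀ : 0 ≤ S := (hc₀ 0).trans (hcS 0 k.zero_le)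
  refine ⟨2 ^ k * S, by positivity, fun M A f h x hx t ht ht₁ s hs => ?_⟩
  have hpow (i : ℕ) (hi : i ≤ k) (r : ℝ) (hr : t ≤ r) : r ^ (β - n - i) ≤ t ^ (β - n - k) := by
    have hi' : (i : ℝ) ≤ k := Nat.cast_le.2 hi
    exact (rpow_le_rpow_of_nonpos ht hr (by linarith [Nat.cast_nonneg (α := ℝ) i])).trans
      (rpow_le_rpow_of_exponent_ge ht ht₁ (by linarith))
  rw [mul_assoc (2 ^ k) S, mul_assoc (2 ^ k)]
  refine ((smoothOnPos_plP hα h.measurable h.abs_le hx).iteratedDeriv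
    n).abs_orbitDiff_comp_const_add_le hs.le ht fun i hi r hr => ?_
  rw [iteratedDeriv_iteratedDeriv, add_comm]
  exact (hc i f M A h.measurable h.abs_le h.abs_iteratedDeriv_le x hx r (ht.trans_le hr)).trans
    (mul_le_mul (mul_le_mul_of_nonneg_right (hcS i hi) h.const_nonneg) (hpow i hi r hr)
      (rpow_nonneg (ht.trans_le hr).le _) (mul_nonneg hS₀ h.const_nonneg))

lemma abs_orbitDiff_iteratedDeriv_plP_le (h : PoissonLipschitz α β n M A f) (k : ℕ) (hβn : β ≤ n)
    {x : Fin d → ℝ} (hx : x ∈ posOrthant d) {t s : ℝ} (ht : 0 < t) (hs : 0 ≤ s) :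
    |orbitDiff k (fun r => iteratedDeriv n (fun t => plP d α t f x) (t + r)) s| ≤
      2 ^ k * (A * t ^ (β - n)) :=
  abs_orbitDiff_le hs fun _ hr =>
    (h.abs_iteratedDeriv_le _ (by positivity) x hx).trans (mul_le_mul_of_nonneg_left
      (rpow_le_rpow_of_nonpos ht (le_add_of_nonneg_right hr) (sub_nonpos.2 hβn)) h.const_nonneg)

lemma exists_abs_integral_orbitDiff_iteratedDeriv_plP_le (hα : ∀ j, -1 < α j) {lam : ℝ} {k : ℕ}
    (hlam : 0 < lam) (hlamk : lam < k) (hβn : β ≤ n) :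
    ∃ C ≥ 0, ∀ M A f, PoissonLipschitz α β n M A f → ∀ x ∈ posOrthant d, ∀ t, 0 < t → t ≤ 1 →
      |∫ s in Ioi 0, s ^ (-lam - 1) *
        orbitDiff k (fun r => iteratedDeriv n (fun t => plP d α t f x) (t + r)) s| ≤
          C * A * t ^ (β - lam - n) := by
  obtain ⟨C, hC, hsmall⟩ := exists_abs_orbitDiff_iteratedDeriv_plP_le hα k hβn
  have := sub_pos.2 hlamk
  refine ⟨C / (k - lam) + 2 ^ k / lam, by positivity, fun M A f h x hx t ht ht₁ => ?_⟩
  calc _ ≤ C * A * t ^ (β - n - k) * (t ^ (k - lam) / (k - lam)) +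
        2 ^ k * (A * t ^ (β - n)) * (t ^ (-lam) / lam) :=
      abs_integral_rpow_mul_le hlam hlamk
        (fun s hs => by simpa only [rpow_natCast] using hsmall M A f h x hx t ht ht₁ s hs)
        (fun s hs => h.abs_orbitDiff_iteratedDeriv_plP_le k hβn hx ht hs.le) ht
    _ = C * A * (t ^ (β - n - k) * t ^ (k - lam)) / (k - lam) +
        2 ^ k * A * (t ^ (β - n) * t ^ (-lam)) / lam := by ring
    _ = (C / (k - lam) + 2 ^ k / lam) * A * t ^ (β - lam - n) := by
      rw [← rpow_add ht, ← rpow_add ht]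
      ring_nf

end PoissonLipschitz

lemma integral_mul_orbitDiff {X : Type*} [MeasurableSpace X] {μ : Measure X} {w : X → ℝ}
    {u : ℝ → X → ℝ} (hint : ∀ r, 0 ≤ r → Integrable (fun x => w x * u r x) μ) (k : ℕ) {s : ℝ}
    (hs : 0 ≤ s) :
    ∫ x, w x * orbitDiff k (fun r => u r x) s ∂μ =
      orbitDiff k (fun r => ∫ x, w x * u r x ∂μ) s := by
  simp only [orbitDiff, Finset.mul_sum, mul_left_comm (w _)]
  rw [integral_finsetSum _ fun j _ => (hint _ (by positivity)).const_mul _]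
  simp only [integral_const_mul]

/-- The normalising constant `c_λ^k` of the fractional derivative of order `λ`. -/
noncomputable def fracDerivConst (lam : ℝ) (k : ℕ) : ℝ :=
  ∫ u in Ioi (0 : ℝ), u ^ (-lam - 1) * (exp (-u) - 1) ^ k

section FracDeriv

variable {d : ℕ} {α : Fin d → ℝ} {f : (Fin d → ℝ) → ℝ}

lemma besselLaguerreFracDerivK_eq_orbitDiff (lam : ℝ) (k : ℕ) (x : Fin d → ℝ) :
    besselLaguerreFracDerivK d α lam k f x = 1 / fracDerivConst lam k *
      ∫ s in Ioi 0, s ^ (-lam - 1) * orbitDiff k (fun t => plP d α t f x) s :=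
  rfl

variable {M : ℝ} (hα : ∀ j, -1 < α j) (hf : Measurable f) (hM : ∀ y ∈ posOrthant d, |f y| ≤ M)
include hf

lemma measurable_orbitDiff_subordinatedP (k : ℕ) :
    Measurable (Function.uncurry fun (x : Fin d → ℝ) (s : ℝ) =>
      orbitDiff k (fun t => subordinatedP α f t x) s) := by
  simp only [orbitDiff, Function.uncurry_def]
  exact Finset.measurable_fun_sum _ fun j _ => Measurable.mul (by fun_prop)
    ((measurable_subordinatedP α hf).comp
      (f := fun p : (Fin d → ℝ) × ℝ => (((k - j : ℕ) : ℝ) * p.2, p.1)) (by fun_prop))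

include hα hM

lemma orbitDiff_plP_eq_orbitDiff_subordinatedP (k : ℕ) {x : Fin d → ℝ} (hx : x ∈ posOrthant d)
    {s : ℝ} (hs : 0 ≤ s) :
    orbitDiff k (fun t => plP d α t f x) s = orbitDiff k (fun t => subordinatedP α f t x) s :=
  orbitDiff_congr (fun _ ht => plP_eq_subordinatedP hα hf hM ht hx) hs

lemma aestronglyMeasurable_orbitDiff_plP (k : ℕ) :
    AEStronglyMeasurable
      (Function.uncurry fun (x : Fin d → ℝ) (s : ℝ) => orbitDiff k (fun t => plP d α t f x) s)
      ((volume.restrict (posOrthant d)).prod (volume.restrict (Ioi 0))) := by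
  refine (measurable_orbitDiff_subordinatedP (α := α) hf k).aestronglyMeasurable.congr ?_
  filter_upwards [Measure.quasiMeasurePreserving_fst.ae
      (ae_restrict_mem (measurableSet_posOrthant d)),
    Measure.quasiMeasurePreserving_snd.ae (ae_restrict_mem measurableSet_Ioi)] with p hx hs
  exact (orbitDiff_plP_eq_orbitDiff_subordinatedP hα hf hM k hx (le_of_lt hs)).symm

lemma exists_measurable_eqOn_besselLaguerreFracDerivK (lam : ℝ) (k : ℕ) :
    ∃ g, Measurable g ∧ EqOn (besselLaguerreFracDerivK d α lam k f) g (posOrthant d) := by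
  refine ⟨fun x => 1 / fracDerivConst lam k *
    ∫ s in Ioi 0, s ^ (-lam - 1) * orbitDiff k (fun t => subordinatedP α f t x) s, ?_,
    fun x hx => ?_⟩
  · have hrpow : Measurable fun p : (Fin d → ℝ) × ℝ => p.2 ^ (-lam - 1) := by fun_prop
    exact (hrpow.mul (measurable_orbitDiff_subordinatedP hf
      k)).stronglyMeasurable.integral_prod_right'.measurable.const_mul _
  · rw [besselLaguerreFracDerivK_eq_orbitDiff]
    congr 1
    refine setIntegral_congr_fun measurableSet_Ioi fun s hs => ?_
    simp only [orbitDiff_plP_eq_orbitDiff_subordinatedP hα hf hM k hx (le_of_lt hs)]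

lemma setIntegral_mul_orbitDiff_plP {w : (Fin d → ℝ) → ℝ} (hw : IntegrableOn w (posOrthant d))
    {t : ℝ} {n : ℕ} {x : Fin d → ℝ}
    (hrep : ∀ r, 0 ≤ r → iteratedDeriv n (fun t => plP d α t f x) (t + r) =
      ∫ y in posOrthant d, w y * plP d α r f y) (k : ℕ) {s : ℝ} (hs : 0 ≤ s) :
    ∫ y in posOrthant d, w y * orbitDiff k (fun t => plP d α t f y) s =
      orbitDiff k (fun r => iteratedDeriv n (fun t => plP d α t f x) (t + r)) s := by
  rw [orbitDiff_congr hrep hs]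
  refine integral_mul_orbitDiff (u := fun r y => plP d α r f y) (fun r hr => ?_) k hs
  exact hw.mul_bdd (c := M) (aestronglyMeasurable_plP hα hf hM hr)
    ((ae_restrict_mem (measurableSet_posOrthant d)).mono fun y hy => abs_plP_le hα hf hM hr hy)

section Swap

variable {lam γ a : ℝ} {k : ℕ} (hlam : 0 < lam) (hγ : lam < γ) (ha : 0 ≤ a)
  (hsmall : ∀ᵐ x ∂volume.restrict (posOrthant d), ∀ s, 0 < s →
    |orbitDiff k (fun t => plP d α t f x) s| ≤ a * s ^ γ)
include hlam hγ ha hsmall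

lemma setIntegral_mul_integral_orbitDiff_plP {w : (Fin d → ℝ) → ℝ}
    (hw : IntegrableOn w (posOrthant d)) :
    ∫ y in posOrthant d, w y * ∫ s in Ioi 0,
        s ^ (-lam - 1) * orbitDiff k (fun t => plP d α t f y) s =
      ∫ s in Ioi 0, s ^ (-lam - 1) *
        ∫ y in posOrthant d, w y * orbitDiff k (fun t => plP d α t f y) s := by
  have hM₀ : 0 ≤ M := (abs_nonneg _).trans (hM (fun _ => 1) fun _ _ => mem_Ioi.2 one_pos)
  have hrpow : AEStronglyMeasurable (fun p : (Fin d → ℝ) × ℝ => p.2 ^ (-lam - 1))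
      ((volume.restrict (posOrthant d)).prod (volume.restrict (Ioi 0))) :=
    Measurable.aestronglyMeasurable (by fun_prop)
  rw [integral_mul_integral_swap hw (hrpow.mul (aestronglyMeasurable_orbitDiff_plP hα hf hM k))
    (integrableOn_rpow_mul_min hlam hγ ha (b := 2 ^ k * M) (by positivity))]
  · simp only [mul_left_comm (w _), integral_const_mul]
  · filter_upwards [hsmall, ae_restrict_mem (measurableSet_posOrthant d)] with y hys hy
    filter_upwards [ae_restrict_mem measurableSet_Ioi] with s (hs : 0 < s)
    rw [abs_mul, abs_of_nonneg (by positivity)]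
    exact mul_le_mul_of_nonneg_left (le_min (hys s hs)
      (abs_orbitDiff_le hs.le fun r hr => abs_plP_le hα hf hM hr hy)) (by positivity)

lemma iteratedDeriv_plP_besselLaguerreFracDerivK {B : ℝ}
    (hB : ∀ x ∈ posOrthant d, |besselLaguerreFracDerivK d α lam k f x| ≤ B)
    (n : ℕ) {t : ℝ} (ht : 0 < t) {x : Fin d → ℝ} (hx : x ∈ posOrthant d) :
    iteratedDeriv n (fun t => plP d α t (besselLaguerreFracDerivK d α lam k f) x) t =
      1 / fracDerivConst lam k * ∫ s in Ioi 0, s ^ (-lam - 1) *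
        orbitDiff k (fun r => iteratedDeriv n (fun t => plP d α t f x) (t + r)) s := by
  obtain ⟨_, -, hker⟩ := exists_kernel_iteratedDeriv_plP_add hα n
  obtain ⟨w, hw, -, hrep⟩ := hker t ht x hx
  obtain ⟨g, hg, hgD⟩ := exists_measurable_eqOn_besselLaguerreFracDerivK hα hf hM lam k
  calc iteratedDeriv n (fun t => plP d α t (besselLaguerreFracDerivK d α lam k f) x) t
      = ∫ y in posOrthant d, w y * g y := by
        have hg₀ := hrep g B hg (fun y hy => hgD hy ▸ hB y hy) 0 le_rfl
        simp only [add_zero, plP_zero] at hg₀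
        simp only [← hg₀, plP_congr hgD _ hx]
    _ = 1 / fracDerivConst lam k * ∫ y in posOrthant d, w y * ∫ s in Ioi 0,
          s ^ (-lam - 1) * orbitDiff k (fun t => plP d α t f y) s := by
        rw [← integral_const_mul]
        refine setIntegral_congr_fun (measurableSet_posOrthant d) fun y hy => ?_
        simp only [← hgD hy, besselLaguerreFracDerivK_eq_orbitDiff]
        ring
    _ = _ := by
        rw [setIntegral_mul_integral_orbitDiff_plP hα hf hM hlam hγ ha hsmall hw]
        congr 1
        refine setIntegral_congr_fun measurableSet_Ioi fun s hs => ?_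
        simp only [setIntegral_mul_orbitDiff_plP hα hf hM hw (fun r hr => hrep f M hf hM r hr) k
          (le_of_lt hs)]

end Swap

end FracDeriv

namespace PoissonLipschitz

variable {d : ℕ} {α : Fin d → ℝ} {β lam : ℝ} {k n : ℕ}
  (hα : ∀ j, -1 < α j) (hlam : 0 < lam) (hlamβ : lam < β) (hlamk : lam < k)
  (hklam : k - 1 ≤ lam) (hkn : k ≤ n)
include hα hlam hlamβ hlamk hklam hkn

lemma exists_gt_abs_orbitDiff_plP_add_le :
    ∃ γ > lam, ∃ C ≥ 0, ∀ M A f, PoissonLipschitz α β n M A f → ∃ e : (Fin d → ℝ) → ℝ,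
      (∀ x ∈ posOrthant d, ∀ s, 0 < s →
        |orbitDiff k (fun t => plP d α t f x) s + e x| ≤ C * (M + A) * s ^ γ) ∧
      e =ᵐ[volume.restrict (posOrthant d)] 0 := by
  obtain ⟨γ, hγ, hγβk⟩ := exists_between (lt_min hlamβ hlamk)
  exact ⟨γ, hγ, exists_abs_orbitDiff_plP_add_le hα (hlam.trans hγ)
    (hγβk.trans_le (min_le_right _ _)) (hklam.trans_lt hγ) (hγβk.le.trans (min_le_left _ _)) hkn⟩

lemma exists_abs_besselLaguerreFracDerivK_le :
    ∃ C ≥ 0, ∀ M A f, PoissonLipschitz α β n M A f → ∀ x ∈ posOrthant d,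
      |besselLaguerreFracDerivK d α lam k f x| ≤ C * (M + A) := by
  obtain ⟨γ, hγ, C, hC, hdiff⟩ :=
    exists_gt_abs_orbitDiff_plP_add_le hα hlam hlamβ hlamk hklam hkn
  have : 0 < γ - lam := sub_pos.2 hγ
  refine ⟨|1 / fracDerivConst lam k| * (C / (γ - lam) + 2 ^ k / lam), by positivity,
    fun M A f h x hx => ?_⟩
  obtain ⟨e, he, -⟩ := hdiff M A f h
  rw [besselLaguerreFracDerivK_eq_orbitDiff, abs_mul, mul_assoc]
  refine mul_le_mul_of_nonneg_left ?_ (abs_nonneg _)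
  calc _ ≤ C * (M + A) / (γ - lam) + 2 ^ k * M / lam :=
        abs_integral_rpow_mul_le_of_abs_add_le hlam hγ (he x hx) fun s hs =>
          abs_orbitDiff_le hs.le fun r hr => abs_plP_le hα h.measurable h.abs_le hr hx
    _ ≤ C * (M + A) / (γ - lam) + 2 ^ k * (M + A) / lam := by
        gcongr
        exact le_add_of_nonneg_right h.const_nonneg
    _ = (C / (γ - lam) + 2 ^ k / lam) * (M + A) := by ring

variable (hβn : β ≤ n)
include hβn

lemma exists_abs_iteratedDeriv_plP_besselLaguerreFracDerivK_le_of_le_one :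
    ∃ C ≥ 0, ∀ M A f, PoissonLipschitz α β n M A f → ∀ t, 0 < t → t ≤ 1 → ∀ x ∈ posOrthant d,
      |iteratedDeriv n (fun t => plP d α t (besselLaguerreFracDerivK d α lam k f) x) t| ≤
        C * A * t ^ (β - lam - n) := by
  obtain ⟨γ, hγ, C₁, hC₁, hdiff⟩ :=
    exists_gt_abs_orbitDiff_plP_add_le hα hlam hlamβ hlamk hklam hkn
  obtain ⟨B, -, hB⟩ := exists_abs_besselLaguerreFracDerivK_le hα hlam hlamβ hlamk hklam hkn
  obtain ⟨C, hC, hint⟩ := exists_abs_integral_orbitDiff_iteratedDeriv_plP_le hα hlam hlamk hβn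
  refine ⟨|1 / fracDerivConst lam k| * C, by positivity, fun M A f h t ht ht₁ x hx => ?_⟩
  obtain ⟨e, he, he₀⟩ := hdiff M A f h
  have hsmall : ∀ᵐ x ∂volume.restrict (posOrthant d), ∀ s, 0 < s →
      |orbitDiff k (fun t => plP d α t f x) s| ≤ C₁ * (M + A) * s ^ γ := by
    filter_upwards [he₀, ae_restrict_mem (measurableSet_posOrthant d)] with y hy₀ hy s hs
    simpa only [hy₀, Pi.zero_apply, add_zero] using he y hy s hs
  rw [iteratedDeriv_plP_besselLaguerreFracDerivK hα h.measurable h.abs_le hlam hγ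
    (mul_nonneg hC₁ (add_nonneg h.bound_nonneg h.const_nonneg)) hsmall (hB M A f h) n ht hx,
    abs_mul, mul_assoc, mul_assoc, ← mul_assoc C]
  exact mul_le_mul_of_nonneg_left (hint M A f h x hx t ht ht₁) (abs_nonneg _)

lemma exists_abs_iteratedDeriv_plP_besselLaguerreFracDerivK_le :
    ∃ C ≥ 0, ∀ M A f, PoissonLipschitz α β n M A f → ∀ t, 0 < t → ∀ x ∈ posOrthant d,
      |iteratedDeriv n (fun t => plP d α t (besselLaguerreFracDerivK d α lam k f) x) t| ≤
        C * (M + A) * t ^ (β - lam - n) := by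
  obtain ⟨B, _, hB⟩ := exists_abs_besselLaguerreFracDerivK_le hα hlam hlamβ hlamk hklam hkn
  obtain ⟨C, hC, hsmall⟩ := exists_abs_iteratedDeriv_plP_besselLaguerreFracDerivK_le_of_le_one
    hα hlam hlamβ hlamk hklam hkn hβn
  obtain ⟨c, _, hlarge⟩ := exists_abs_iteratedDeriv_plP_le hα n
  refine ⟨max C (c * B), hC.trans (le_max_left _ _), fun M A f h t ht x hx => ?_⟩
  have hM := h.bound_nonneg
  have hA := h.const_nonneg
  rcases le_total t 1 with ht₁ | ht₁
  · refine (hsmall M A f h t ht ht₁ x hx).trans ?_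
    gcongr
    · exact le_max_left _ _
    · exact le_add_of_nonneg_left hM
  · obtain ⟨g, hg, hgD⟩ :=
      exists_measurable_eqOn_besselLaguerreFracDerivK hα h.measurable h.abs_le lam k
    simp only [plP_congr hgD _ hx]
    calc _ ≤ c * (B * (M + A)) * t ^ (-(n : ℝ)) :=
          hlarge g _ hg (fun y hy => hgD hy ▸ hB M A f h y hy) x hx t ht
      _ ≤ max C (c * B) * (M + A) * t ^ (β - lam - n) := by
          rw [← mul_assoc]
          gcongr
          · exact le_max_right _ _
          · linarith

end PoissonLipschitz

theorem besselLaguerreFracDerivK_bounded_on_lipschitz_general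
    {d : ℕ} {α : Fin d → ℝ} (hα : ∀ j, -1 < α j) {lam β : ℝ} (hlam : 0 < lam) (hlamβ : lam < β) :
    ∃ C > 0, ∀ (f : (Fin d → ℝ) → ℝ) (M A : ℝ), Measurable f →
      (∀ y ∈ posOrthant d, |f y| ≤ M) →
      (∀ t > 0, ∀ x ∈ posOrthant d, |iteratedDeriv (⌊β⌋₊ + 1) (fun u => plP d α u f x) t| ≤
        A * t ^ (β - ((⌊β⌋₊ : ℝ) + 1))) →
      (∀ x ∈ posOrthant d,
        |besselLaguerreFracDerivK d α lam (⌊lam⌋₊ + 1) f x| ≤ C * (M + A)) ∧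
      ∀ t > 0, ∀ x ∈ posOrthant d,
        |iteratedDeriv (⌊β⌋₊ + 1)
            (fun u => plP d α u (besselLaguerreFracDerivK d α lam (⌊lam⌋₊ + 1) f) x) t| ≤
          C * (M + A) * t ^ (β - lam - ((⌊β⌋₊ : ℝ) + 1)) := by
  have hlamk : lam < (⌊lam⌋₊ + 1 : ℕ) := by exact_mod_cast Nat.lt_floor_add_one lam
  have hklam : (⌊lam⌋₊ + 1 : ℕ) - 1 ≤ lam := by simpa using Nat.floor_le hlam.le
  have hβn : β ≤ (⌊β⌋₊ + 1 : ℕ) := by exact_mod_cast (Nat.lt_floor_add_one β).le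
  have hkn : ⌊lam⌋₊ + 1 ≤ ⌊β⌋₊ + 1 := Nat.succ_le_succ (Nat.floor_le_floor hlamβ.le)
  obtain ⟨B, hB, hbound⟩ := PoissonLipschitz.exists_abs_besselLaguerreFracDerivK_le
    hα hlam hlamβ hlamk hklam hkn
  obtain ⟨C, hC, hderiv⟩ :=
    PoissonLipschitz.exists_abs_iteratedDeriv_plP_besselLaguerreFracDerivK_le
      hα hlam hlamβ hlamk hklam hkn hβn
  refine ⟨B + C + 1, by positivity, fun f M A hf hM hA => ?_⟩
  have h : PoissonLipschitz α β (⌊β⌋₊ + 1) M A f := ⟨hf, hM, by exact_mod_cast hA⟩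
  have hMA : 0 ≤ M + A := add_nonneg h.bound_nonneg h.const_nonneg
  refine ⟨fun x hx => (hbound M A f h x hx).trans ?_, fun t ht x hx => ?_⟩
  · gcongr
    linarith
  · refine (hderiv M A f h t ht x hx).trans ?_
    push_cast
    gcongr
    linarith

end

theorem besselLaguerreFracDerivK_bounded_on_lipschitz
    (d : ℕ) (hd : 1 ≤ d) (α : Fin d → ℝ) (hα : ∀ j, -(1 / 2 : ℝ) < α j)
    (lam β : ℝ) (hlam : 1 ≤ lam) (hlamβ : lam < β) :
    ∃ C > 0, ∀ (f : (Fin d → ℝ) → ℝ) (M A : ℝ), Measurable f → (∀ y, |f y| ≤ M) →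
      (∀ t > (0 : ℝ), ∀ x ∈ posOrthant d,
        |iteratedDeriv (⌊β⌋₊ + 1) (fun u => plP d α u f x) t| ≤
          A * t ^ (β - ((⌊β⌋₊ : ℝ) + 1))) →
      (∀ x ∈ posOrthant d,
        |besselLaguerreFracDerivK d α lam (⌊lam⌋₊ + 1) f x| ≤ C * (M + A)) ∧
      (∀ t : ℝ, 0 < t → t < 1 → ∀ x ∈ posOrthant d,
        |iteratedDeriv (⌊β⌋₊ + 1)
            (fun u => plP d α u (besselLaguerreFracDerivK d α lam (⌊lam⌋₊ + 1) f) x) t| ≤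
          C * (M + A) * t ^ (β - lam - ((⌊β⌋₊ : ℝ) + 1))) := by
  obtain ⟨C, hC, h⟩ := besselLaguerreFracDerivK_bounded_on_lipschitz_general
    (α := α) (fun j => by linarith [hα j]) (by linarith : 0 < lam) hlamβ
  exact ⟨C, hC, fun f M A hf hM hA => ⟨(h f M A hf (fun y _ => hM y) hA).1,
    fun t ht _ => (h f M A hf (fun y _ => hM y) hA).2 t ht⟩⟩
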